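/- arXiv:math/0701030 — 6 statements merged into one kernel-verified Lean document; each statement's English description precedes it below -/
import Mathlib

section
/- Let κ be a regular infinite cardinal with 2^κ = κ⁺, and let X be a set of cardinality κ. Then the clone lattice Cl(X) is not dually atomic: there exists a clone C ≠ O on X that is not contained in any precomplete clone on X. -/
universe u v

open Cardinal

/-- The set of all finitary operations on `X`: an `n`-th component element is an
operation of arity `n + 1` (so all arities are `≥ 1`). -/
abbrev Ops (X : Type u) : Type u := Σ n : ℕ, ((Fin (n + 1) → X) → X)

/-- A clone: contains all projections and is closed under composition. -/
def IsClone {X : Type u} (C : Set (Ops X)) : Prop :=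
  (∀ (n : ℕ) (k : Fin (n + 1)), (⟨n, fun x => x k⟩ : Ops X) ∈ C) ∧
  ∀ (n m : ℕ) (f : (Fin (n + 1) → X) → X), (⟨n, f⟩ : Ops X) ∈ C →
    ∀ g : Fin (n + 1) → ((Fin (m + 1) → X) → X), (∀ i, (⟨m, g i⟩ : Ops X) ∈ C) →
      (⟨m, fun x => f fun i => g i x⟩ : Ops X) ∈ C

/-- The clone generated by a set of operations. -/
def cloneGen {X : Type u} (F : Set (Ops X)) : Set (Ops X) :=
  ⋂₀ {C : Set (Ops X) | IsClone C ∧ F ⊆ C}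

/-- A precomplete (maximal) clone. -/
def IsPrecompleteClone {X : Type u} (C : Set (Ops X)) : Prop :=
  IsClone C ∧ C ≠ Set.univ ∧ ∀ f : Ops X, f ∉ C → cloneGen (insert f C) = Set.univ

/-- A unary function, viewed as a unary operation in `Ops X`. -/
def unaryOp {X : Type u} (F : X → X) : Ops X := ⟨0, fun x => F (x 0)⟩

/-- The polymorphism clone of a set of binary operations. -/
def Pol2 {X : Type u} (H : Set (X → X → X)) : Set (Ops X) :=
  {f : Ops X | ∀ g : Fin (f.1 + 1) → (X → X → X), (∀ i, g i ∈ H) →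
    (fun x y => f.2 fun i => g i x y) ∈ H}

set_option linter.unusedSectionVars false

section GS
open Set Filter

variable {X : Type u} [LinearOrder X] [WellFoundedLT X]

def Chn (F : X → X) (x : ℕ → X) : Prop := ∀ i, F (x i) ≤ x (i + 1)

def Thin (F W : X → X) (A : Set X) : Prop :=
  ∃ n : ℕ, ∀ x : ℕ → X, Chn F x → (∀ i ≤ n, x i ∈ A) → W (x 0) ≤ x n

def EC (U : Ultrafilter X) (F : X → X) : Set (Ops X) :=
  {f | ∃ A ∈ U, ∃ n : ℕ, ∀ x : ℕ → X, Chn F x → (∀ i ≤ n, x i ∈ A) →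
    ∀ y, (∀ i, y i ≤ x 0) → f.2 y ≤ x n}

def C0 (U : Ultrafilter X) : Set (Ops X) :=
  {f | ∃ A ∈ U, ∀ x ∈ A, ∀ y, (∀ i, y i ≤ x) → f.2 y ≤ x}

theorem chn_mono {F : X → X} (hF : ∀ x, x < F x) {x : ℕ → X} (h : Chn F x) : Monotone x :=
  monotone_nat_of_le_succ fun i => (hF _).le.trans (h i)

theorem C0_clone (U : Ultrafilter X) : IsClone (C0 U) := by
  refine ⟨fun n k => ⟨univ, Filter.univ_mem, fun x _ y hy => hy k⟩, ?_⟩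
  rintro n m f ⟨A, hA, hf⟩ g hg
  choose B hB hg using hg
  refine ⟨A ∩ ⋂ i, B i, Filter.inter_mem hA ((Filter.iInter_mem).2 hB), ?_⟩
  rintro x ⟨hxA, hxB⟩ y hy
  exact hf x hxA _ fun i => hg i x (mem_iInter.1 hxB i) y hy

theorem EC_clone (U : Ultrafilter X) {F : X → X} (hF : ∀ x, x < F x) : IsClone (EC U F) := by
  refine ⟨fun n k => ⟨univ, Filter.univ_mem, 0, fun x _ _ y hy => hy k⟩, ?_⟩
  rintro n m f ⟨A, hA, k, hf⟩ g hg
  choose B hB l hg using hg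
  refine ⟨A ∩ ⋂ i, B i, Filter.inter_mem hA ((Filter.iInter_mem).2 hB),
    Finset.univ.sup l + k, ?_⟩
  intro x hx hm y hy
  have hl : ∀ i, l i ≤ Finset.univ.sup l := fun i => Finset.le_sup (Finset.mem_univ i)
  refine hf (fun i => x (Finset.univ.sup l + i)) (fun i => hx _) (fun i hi => (hm _ (by omega)).1) _ ?_
  intro i
  refine (hg i x hx (fun j hj => mem_iInter.1 (hm _ ?_).2 i) y hy).trans (chn_mono hF hx (hl i))
  have := hl i
  omega

theorem C0_sub (U : Ultrafilter X) (F : X → X) : C0 U ⊆ EC U F := by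
  rintro f ⟨A, hA, h⟩
  exact ⟨A, hA, 0, fun x _ hm y hy => h _ (hm 0 le_rfl) y hy⟩

theorem unary_EC (U : Ultrafilter X) {F : X → X} (hF : Monotone F) {G : X → X}
    (hG : ∀ x, G x ≤ F x) : unaryOp G ∈ EC U F :=
  ⟨univ, Filter.univ_mem, 1, fun x hx _ y hy =>
    ((hG _).trans (hF (hy 0))).trans (hx 0)⟩

theorem not_EC (U : Ultrafilter X) {F W : X → X} (h : ∀ A, Thin F W A → Aᶜ ∈ U) :
    unaryOp W ∉ EC U F := by
  rintro ⟨A, hA, n, hn⟩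
  have : Thin F W A := ⟨n, fun x hx hm => hn x hx hm (fun _ => x 0) fun _ => le_rfl⟩
  exact (Ultrafilter.compl_notMem_iff.2 hA) (h A this)

theorem key (U : Ultrafilter X) (hU : ∀ A ∈ U, ∀ x, ∃ a ∈ A, x ≤ a) {D : Set (Ops X)}
    (hD : IsClone D) (hC : C0 U ⊆ D) {p : Ops X} (hp : p ∉ D) {F : X → X}
    (hpF : ∀ x y, (∀ i, y i ≤ x) → p.2 y ≤ F x) : D ⊆ EC U F := by
  classical
  rintro ⟨m, g⟩ hg
  by_contra hgE
  set A : Set X := {x | ∃ y, (∀ i, y i ≤ x) ∧ F x < g y} with hAdef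
  by_cases hA : A ∈ U
  swap
  · apply hgE
    refine ⟨Aᶜ, Ultrafilter.compl_mem_iff_notMem.2 hA, 1, fun x hx hm y hy => ?_⟩
    have := hm 0 (by omega)
    simp only [hAdef, mem_compl_iff, mem_setOf_eq, not_exists, not_and, not_lt] at this
    exact (this y hy).trans (hx 0)
  apply hp
  obtain ⟨n, p⟩ := p
  have hAc : ∀ x ∈ A, ∃ y, (∀ i, y i ≤ x) ∧ F x < g y := fun x hx => hx
  choose! c hc1 hc2 using hAc
  -- least element of `A` above all coordinates
  have hmin : ∀ y : Fin (n + 1) → X, ∃ a ∈ A, (∀ i, y i ≤ a) ∧ ∀ z ∈ A, (∀ i, y i ≤ z) → a ≤ z := by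
    intro y
    have hne : {a | a ∈ A ∧ ∀ i, y i ≤ a}.Nonempty := by
      obtain ⟨a, ha, h⟩ := hU A hA (Finset.univ.sup' Finset.univ_nonempty y)
      exact ⟨a, ha, fun i => (Finset.le_sup' y (Finset.mem_univ i)).trans h⟩
    have hw := (wellFounded_lt : WellFounded (α := X) (· < ·))
    refine ⟨hw.min _ hne, (hw.min_mem _ hne).1, (hw.min_mem _ hne).2, fun z hz h => ?_⟩
    exact not_lt.1 (hw.not_lt_min {a | a ∈ A ∧ ∀ i, y i ≤ a} (x := z) ⟨hz, h⟩)
  choose a ha1 ha2 ha3 using hmin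
  let R : (Fin (n + 1 + 1) → X) → X := fun z =>
    if p (fun i => z i.succ) ≤ z 0 then p (fun i => z i.succ) else z 0
  have hR : (⟨n + 1, R⟩ : Ops X) ∈ D := by
    refine hC ⟨univ, Filter.univ_mem, fun x _ y hy => ?_⟩
    show R y ≤ x
    simp only [R]
    split_ifs with h
    · exact h.trans (hy 0)
    · exact hy 0
  have hcD : ∀ i, (⟨n, fun y => c (a y) i⟩ : Ops X) ∈ D := fun i =>
    hC ⟨A, hA, fun x hx y hy => (hc1 _ (ha1 y) i).trans (ha3 y x hx hy)⟩
  have hgc := hD.2 m n g hg (fun i y => c (a y) i) hcD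
  have := hD.2 (n + 1) n R hR (Fin.cons (fun y => g fun i => c (a y) i) fun i y => y i) (by
    intro i
    refine Fin.cases ?_ (fun j => ?_) i
    · exact hgc
    · exact hD.1 n j)
  convert this using 3 with y
  simp only [R, Fin.cons_succ, Fin.cons_zero]
  rw [if_pos]
  exact (hpF (a y) y (ha2 y)).trans (hc2 _ (ha1 y)).le

theorem step [Nonempty X] {F W : X → X} (hFm : Monotone F) (hF : ∀ x, x < F x) (hWm : Monotone W)
    (hW : ∀ n, ∀ᶠ x in atTop, F^[n] x ≤ W x) {A B : Set X} (hA : Thin F W A) {k : ℕ}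
    (h : ∀ᶠ x in atTop, ∃ y, x ≤ y ∧ y < F^[k] x ∧ y ∉ B) :
    ∃ k, ∀ᶠ x in atTop, ∃ y, x ≤ y ∧ y < F^[k] x ∧ y ∉ A ∧ y ∉ B := by
  obtain ⟨n, hn⟩ := hA
  obtain ⟨x0, hx0⟩ := eventually_atTop.1 h
  choose! Y hY1 hY2 hY3 using hx0
  refine ⟨(k + 1) * (n + 1), ?_⟩
  filter_upwards [hW ((k + 1) * (n + 1)), eventually_ge_atTop x0] with x hxW hx
  let y : ℕ → X := fun i => Nat.rec (Y x) (fun _ z => Y (F z)) i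
  have hys : ∀ i, y (i + 1) = Y (F (y i)) := fun i => rfl
  have hyx : ∀ i, x ≤ y i := by
    intro i
    induction i with
    | zero => exact hY1 x hx
    | succ i ih =>
      rw [hys]
      have := ih.trans (hF (y i)).le
      exact this.trans (hY1 _ (hx.trans this))
  have hch : Chn F y := fun i => hY1 _ (hx.trans ((hyx i).trans (hF _).le))
  have hyB : ∀ i, y i ∉ B := by
    intro i
    cases i with
    | zero => exact hY3 x hx
    | succ i => exact hY3 _ (hx.trans ((hyx i).trans (hF _).le))
  have hit : ∀ x, Monotone fun n => F^[n] x := fun x =>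
    monotone_nat_of_le_succ fun i => by
      rw [Function.iterate_succ_apply']; exact (hF _).le
  have hyu : ∀ i, y i < F^[(k + 1) * (i + 1)] x := by
    intro i
    induction i with
    | zero => exact (hY2 x hx).trans_le (hit x (by omega))
    | succ i ih =>
      have h1 : y (i + 1) < F^[k] (F (y i)) := hY2 _ (hx.trans ((hyx i).trans (hF _).le))
      refine h1.trans_le ?_
      rw [← Function.iterate_succ_apply, show (k + 1) * (i + 1 + 1) = (k + 1) + (k + 1) * (i + 1) by ring,
        Function.iterate_add_apply]
      exact hFm.iterate _ ih.le
  by_contra hcon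
  push Not at hcon
  have hall : ∀ i ≤ n, y i ∈ A := by
    intro i hi
    by_contra hiA
    exact hyB i (hcon (y i) (hyx i) ((hyu i).trans_le (hit x (by gcongr))) hiA)
  have := hn y hch hall
  exact absurd (this.trans_lt ((hyu n).trans_le (hxW.trans (hWm (hyx 0))))) (lt_irrefl _)

theorem cover [Nonempty X] {I : Type*} [LinearOrder I] {F W : I → X → X}
    (hFm : ∀ i, Monotone (F i)) (hF : ∀ i x, x < F i x) (hWm : ∀ i, Monotone (W i))
    (hW : ∀ i n, ∀ᶠ x in atTop, (F i)^[n] x ≤ W i x)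
    (hWF : ∀ i j, i < j → ∀ᶠ x in atTop, W i x ≤ F j x) (s : Finset (I × Set X)) :
    (∀ q ∈ s, Thin (F q.1) (W q.1) q.2) →
    ∀ i, (∀ q ∈ s, q.1 ≤ i) → ∃ k, ∀ᶠ x in atTop, ∃ y, x ≤ y ∧ y < (F i)^[k] x ∧
      ∀ q ∈ s, y ∉ q.2 := by
  classical
  induction s using Finset.induction_on_max_value (fun q : I × Set X => q.1) with
  | empty => exact fun _ i _ => ⟨1, Eventually.of_forall fun x => ⟨x, le_rfl, hF i x, by simp⟩⟩
  | insert q s _ hmax ih =>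
    intro hs i hi
    obtain ⟨k, hk⟩ := ih (fun r hr => hs r (Finset.mem_insert_of_mem hr)) q.1 hmax
    have hB : ∀ᶠ x in atTop, ∃ y, x ≤ y ∧ y < (F q.1)^[k] x ∧ y ∉ {y | ∃ r ∈ s, y ∈ r.2} := by
      filter_upwards [hk] with x hx
      obtain ⟨y, h1, h2, h3⟩ := hx
      exact ⟨y, h1, h2, fun ⟨r, hr, hy⟩ => h3 r hr hy⟩
    obtain ⟨k', hk'⟩ := step (hFm _) (hF _) (hWm _) (hW _) (hs q (Finset.mem_insert_self _ _)) hB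
    have fin : ∀ y, y ∉ q.2 → y ∉ {y | ∃ r ∈ s, y ∈ r.2} → ∀ r ∈ insert q s, y ∉ r.2 := by
      intro y h1 h2 r hr
      rcases Finset.mem_insert.1 hr with rfl | hr
      · exact h1
      · exact fun h => h2 ⟨r, hr, h⟩
    rcases (hi q (Finset.mem_insert_self _ _)).eq_or_lt with h | h
    · subst h
      refine ⟨k', hk'.mono ?_⟩
      rintro x ⟨y, h1, h2, h3, h4⟩
      exact ⟨y, h1, h2, fin y h3 h4⟩
    · refine ⟨1, ?_⟩
      filter_upwards [hk', hW q.1 k', hWF _ _ h] with x hx h5 h6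
      obtain ⟨y, h1, h2, h3, h4⟩ := hx
      exact ⟨y, h1, h2.trans_le (h5.trans h6), fin y h3 h4⟩

/-- monotone majorant -/
theorem major {κ : Cardinal.{u}} (hb : ∀ S : Set X, #S < κ → ∃ b, ∀ s ∈ S, s < b)
    (hi : ∀ x : X, #(Iic x) < κ) (g : X → X) :
    ∃ F : X → X, Monotone F ∧ ∀ x, x < F x ∧ g x ≤ F x := by
  have hw := (wellFounded_lt : WellFounded (α := X) (· < ·))
  have hne : ∀ x, {b | ∀ y ≤ x, y < b ∧ g y ≤ b}.Nonempty := by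
    intro x
    obtain ⟨b, hb1⟩ := hb (Iic x) (hi x)
    obtain ⟨c, hc⟩ := hb (g '' Iic x) (mk_image_le.trans_lt (hi x))
    exact ⟨max b c, fun y hy => ⟨(hb1 y hy).trans_le (le_max_left _ _),
      (hc _ ⟨y, hy, rfl⟩).le.trans (le_max_right _ _)⟩⟩
  refine ⟨fun x => hw.min _ (hne x), ?_, fun x => hw.min_mem _ (hne x) x le_rfl⟩
  intro x x' h
  exact not_lt.1 (hw.not_lt_min {b | ∀ y ≤ x, y < b ∧ g y ≤ b} (x := hw.min _ (hne x'))
    fun y hy => hw.min_mem _ (hne x') y (hy.trans h))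

theorem domin {κ : Cardinal.{u}} (hb : ∀ S : Set X, #S < κ → ∃ b, ∀ s ∈ S, s < b)
    (hi : ∀ x : X, #(Iic x) < κ) {ι : Type u} (hι : #ι ≤ #X) (h : ι → X → X) :
    ∃ G : X → X, ∀ i, ∀ᶠ x in atTop, h i x ≤ G x := by
  obtain ⟨j⟩ := hι
  have : ∀ x, ∃ b, ∀ i, j i ≤ x → h i x ≤ b := by
    intro x
    obtain ⟨b, hb1⟩ := hb ((fun i => h i x) '' (j ⁻¹' Iic x))
      ((mk_image_le.trans (mk_preimage_of_injective j _ j.injective)).trans_lt (hi x))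
    exact ⟨b, fun i hx => (hb1 _ ⟨i, hx, rfl⟩).le⟩
  choose G hG using this
  exact ⟨G, fun i => (eventually_ge_atTop (j i)).mono fun x hx => hG x i hx⟩

theorem main_aux {κ : Cardinal.{u}} (hκ : ℵ₀ ≤ κ) (hgch : 2 ^ κ = Order.succ κ) (hX : #X = κ)
    (hb : ∀ S : Set X, #S < κ → ∃ b, ∀ s ∈ S, s < b) (hi : ∀ x : X, #(Iic x) < κ) :
    ∃ C : Set (Ops X), IsClone C ∧ C ≠ Set.univ ∧
      ∀ D : Set (Ops X), IsPrecompleteClone D → ¬ C ⊆ D := by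
  classical
  have hinf : Infinite X := by rw [Cardinal.infinite_iff, hX]; exact hκ
  -- W
  have hWex : ∀ F : X → X, ∃ W : X → X, Monotone W ∧ ∀ n, ∀ᶠ x in atTop, F^[n] x ≤ W x := by
    intro F
    obtain ⟨G, hG⟩ := domin hb hi (ι := ULift.{u} ℕ) (by rw [hX]; simpa using hκ)
      (fun n => F^[n.down])
    obtain ⟨W, hW, h⟩ := major hb hi G
    exact ⟨W, hW, fun n => (hG ⟨n⟩).mono fun x hx => hx.trans (h x).2⟩
  choose W hWm hW using hWex
  let I := (Order.succ κ).ord.ToType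
  have hI : #I = #(X → X) := by
    rw [mk_ord_toType, ← hgch, ← hX]
    simp [Cardinal.power_self_eq (hX ▸ hκ : ℵ₀ ≤ #X)]
  obtain ⟨e⟩ := Cardinal.eq.1 hI
  have hex : ∀ (i : I) (prev : ∀ j, j < i → X → X), ∃ F : X → X, Monotone F ∧
      (∀ x, x < F x ∧ e i x ≤ F x) ∧ ∀ j (hj : j < i), ∀ᶠ x in atTop, W (prev j hj) x ≤ F x := by
    intro i prev
    have hc : #(Iio i) ≤ #X := by
      rw [hX, ← Order.lt_succ_iff]
      exact mk_Iio_ord_toType i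
    obtain ⟨G, hG⟩ := domin hb hi hc (fun j => W (prev j.1 j.2))
    obtain ⟨F, hF, h⟩ := major hb hi (fun x => max (e i x) (G x))
    exact ⟨F, hF, fun x => ⟨(h x).1, (le_max_left _ _).trans (h x).2⟩, fun j hj =>
      (hG ⟨j, hj⟩).mono fun x hx => hx.trans ((le_max_right _ _).trans (h x).2)⟩
  have hwf := (wellFounded_lt : WellFounded (α := I) (· < ·))
  let F : I → X → X := hwf.fix fun i prev => Classical.choose (hex i prev)
  have hFe : ∀ i, F i = Classical.choose (hex i fun j _ => F j) := fun i => hwf.fix_eq _ i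
  have hF : ∀ i, Monotone (F i) ∧ (∀ x, x < F i x ∧ e i x ≤ F i x) ∧
      ∀ j, j < i → ∀ᶠ x in atTop, W (F j) x ≤ F i x := by
    intro i
    have := Classical.choose_spec (hex i fun j _ => F j)
    rw [← hFe] at this
    exact this
  have hcover := cover (F := F) (W := fun i => W (F i)) (fun i => (hF i).1)
    (fun i x => ((hF i).2.1 x).1) (fun i => hWm _) (fun i => hW _) (fun i j h => (hF j).2.2 i h)
  -- ultrafilter
  let S : Set (Set X) := {B | ∃ i, Thin (F i) (W (F i)) Bᶜ}
  have i0 : I := e.symm id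
  have : Nonempty I := ⟨i0⟩
  obtain ⟨U, hUS⟩ := Ultrafilter.exists_ultrafilter_of_finite_inter_nonempty S (by
    intro T hT
    have : ∀ B ∈ T, ∃ i, Thin (F i) (W (F i)) Bᶜ := fun B hB => hT hB
    have : ∀ B, ∃ i, B ∈ T → Thin (F i) (W (F i)) Bᶜ := by
      intro B
      by_cases h : B ∈ T
      · obtain ⟨i, h⟩ := this B h
        exact ⟨i, fun _ => h⟩
      · exact ⟨i0, fun h' => absurd h' h⟩
    choose j hj using this
    obtain ⟨i, hi⟩ : ∃ i, ∀ q ∈ T.image (fun B => (j B, Bᶜ)), q.1 ≤ i := by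
      obtain ⟨i, hi⟩ := ((T.image (fun B => (j B, Bᶜ))).image Prod.fst).exists_le
      exact ⟨i, fun q hq => hi _ (Finset.mem_image_of_mem _ hq)⟩
    obtain ⟨k, hk⟩ := hcover (T.image fun B => (j B, Bᶜ)) (by
      intro q hq
      obtain ⟨B, hB, rfl⟩ := Finset.mem_image.1 hq
      exact hj B hB) i hi
    obtain ⟨x, y, _, _, hy⟩ := hk.exists
    refine ⟨y, fun B hB => ?_⟩
    have := hy _ (Finset.mem_image_of_mem _ hB)
    simpa using this)
  have hthin : ∀ i A, Thin (F i) (W (F i)) A → Aᶜ ∈ U := fun i A h =>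
    hUS ⟨i, by simpa using h⟩
  have hU : ∀ A ∈ U, ∀ x, ∃ a ∈ A, x ≤ a := by
    intro A hA x
    by_contra hcon
    push Not at hcon
    refine (Ultrafilter.compl_notMem_iff.2 hA) (hthin (e.symm fun _ => x) A ⟨1, fun z hz hm => ?_⟩)
    have h1 := ((hF (e.symm fun _ => x)).2.1 (z 0)).2
    simp only [Equiv.apply_symm_apply] at h1
    exact absurd (h1.trans (hz 0)) (not_le.2 (hcon _ (hm 1 le_rfl)))
  have hne : ∀ i, unaryOp (W (F i)) ∉ EC U (F i) := fun i => not_EC U (hthin i)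
  refine ⟨C0 U, C0_clone U, fun h => hne i0 (C0_sub U _ (h ▸ mem_univ _)), ?_⟩
  rintro D ⟨hDc, hDne, hDm⟩ hCD
  obtain ⟨p, hp⟩ := (Set.ne_univ_iff_exists_notMem D).1 hDne
  obtain ⟨P, hP⟩ : ∃ P : X → X, ∀ x y, (∀ i, y i ≤ x) → p.2 y ≤ P x := by
    have : ∀ x, ∃ b, ∀ y, (∀ i, y i ≤ x) → p.2 y ≤ b := by
      intro x
      obtain ⟨b, hb1⟩ := hb (range fun y : Fin (p.1 + 1) → Iic x => p.2 fun i => (y i : X)) (by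
        refine mk_range_le.trans_lt ?_
        have h1 := hi x
        rcases lt_or_ge #(Iic x) ℵ₀ with h2 | h2
        · refine lt_of_lt_of_le ?_ hκ
          have : Finite (Iic x) := Cardinal.lt_aleph0_iff_finite.1 h2
          exact Cardinal.lt_aleph0_of_finite _
        · refine lt_of_le_of_lt ?_ h1
          have h3 := Cardinal.power_nat_le (n := p.1 + 1) h2
          have h4 : #(Fin (p.1 + 1) → Iic x) = #(Iic x) ^ (p.1 + 1) := by
            rw [← Cardinal.power_natCast]; simp
          rw [h4]; exact h3)
      exact ⟨b, fun y hy => (hb1 _ ⟨fun i => ⟨y i, hy i⟩, rfl⟩).le⟩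
    choose P hP using this
    exact ⟨P, hP⟩
  have hsub : ∀ i, (∀ x, P x ≤ e i x) → D ⊆ EC U (F i) := fun i h =>
    key U hU hDc hCD hp fun x y hy => (hP x y hy).trans ((h x).trans ((hF i).2.1 x).2)
  let i := e.symm P
  have hDi : D ⊆ EC U (F i) := hsub i fun x => by simp [i]
  let i' := e.symm fun x => max (P x) (W (F i) x)
  have hDi' : D ⊆ EC U (F i') := hsub i' fun x => by simp [i']
  have hq : unaryOp (W (F i)) ∈ EC U (F i') := unary_EC U (hF i').1 fun x =>
    le_trans (by simp [i']) ((hF i').2.1 x).2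
  have huniv := hDm _ fun h => hne i (hDi h)
  have : cloneGen (insert (unaryOp (W (F i))) D) ⊆ EC U (F i') :=
    sInter_subset_of_mem ⟨EC_clone U fun x => ((hF i').2.1 x).1, insert_subset hq hDi'⟩
  rw [huniv] at this
  exact hne i' (this (mem_univ _))

end GS

/-- **Goldstern–Shelah**: if `κ` is regular and `2 ^ κ = κ⁺`, then the clone lattice on a
set of cardinality `κ` is not dually atomic: some proper clone is contained in no
precomplete clone. -/
theorem stmt1 {X : Type u} (κ : Cardinal.{u}) (hreg : κ.IsRegular)
    (hgch : 2 ^ κ = Order.succ κ) (hX : #X = κ) :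
    ∃ C : Set (Ops X), IsClone C ∧ C ≠ Set.univ ∧
      ∀ D : Set (Ops X), IsPrecompleteClone D → ¬ C ⊆ D := by
  have h : #X = #κ.ord.ToType := by rw [mk_ord_toType, hX]
  obtain ⟨e⟩ := Cardinal.eq.1 h
  letI : LinearOrder X := LinearOrder.lift' e e.injective
  have hlt : ∀ x y : X, x < y ↔ e x < e y := fun x y => Iff.rfl
  haveI : WellFoundedLT X := ⟨InvImage.wf e (wellFounded_lt : WellFounded (α := κ.ord.ToType) (· < ·))⟩
  refine main_aux hreg.aleph0_le hgch hX ?_ ?_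
  · intro S hS
    by_contra hcon
    push Not at hcon
    have hc : IsCofinal (e '' S) := by
      intro b
      obtain ⟨s, hs, h⟩ := hcon (e.symm b)
      refine ⟨e s, ⟨s, hs, rfl⟩, ?_⟩
      have := (hlt s (e.symm b)).not.1 (not_lt.2 h)
      simpa using this
    have h1 := Order.cof_le hc
    have h2 : Order.cof κ.ord.ToType = κ := by
      simpa using hreg.cof_eq
    rw [h2] at h1
    exact absurd (h1.trans mk_image_le) (not_le.2 hS)
  · intro x
    have h1 : #(Set.Iic (e x)) < κ := by
      have := mk_Iio_ord_toType (e x)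
      rw [← Set.Iio_insert]
      refine (mk_insert_le).trans_lt ?_
      exact add_lt_of_lt hreg.aleph0_le this (one_lt_aleph0.trans_le hreg.aleph0_le)
    refine lt_of_le_of_lt ?_ h1
    exact mk_le_of_injective (f := fun y : Set.Iic x => (⟨e y.1, y.2⟩ : Set.Iic (e x)))
      fun a b hab => Subtype.ext (e.injective (congrArg Subtype.val hab))
end

section
/- Let X be a countably infinite set and let I be an ideal of subsets of X, with support supp(I) = ⋃_{A ∈ I} A. Let C_I = {f ∈ O : f[A^{n_f}] ∈ I for all A ∈ I}, where n_f is the arity of f. Then: (1) if ∅ ≠ supp(I) ≠ X, then C_I is a precomplete clone if and only if I contains only finite sets or I contains all subsets of supp(I); (2) if supp(I) = X, then C_I is a precomplete clone if and only if I contains some but not all infinite subsets of X and for every B ⊆ X with B ∉ I there exists f ∈ C_I such that f[B^{n_f}] = X. -/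
universe u v

open Cardinal

/-- The clone `C_I` induced by an ideal `I` of subsets of `X`. -/
def idealClone {X : Type u} (I : Set (Set X)) : Set (Ops X) :=
  {f : Ops X | ∀ A ∈ I, (f.2 '' {x : Fin (f.1 + 1) → X | ∀ i, x i ∈ A}) ∈ I}


def img {X : Type u} {ι : Type v} (F : (ι → X) → X) (A : Set X) : Set X :=
  F '' {x | ∀ i, x i ∈ A}

theorem mem_iC {X : Type u} {I : Set (Set X)} {n : ℕ} {f : (Fin (n + 1) → X) → X} :
    (⟨n, f⟩ : Ops X) ∈ idealClone I ↔ ∀ A ∈ I, img f A ∈ I := Iff.rfl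

theorem iC_clone {X : Type u} (I : Set (Set X))
    (hdown : ∀ A ∈ I, ∀ B ⊆ A, B ∈ I)
    (hunion : ∀ A ∈ I, ∀ B ∈ I, A ∪ B ∈ I) : IsClone (idealClone I) := by
  refine ⟨fun n k => ?_, fun n m f hf g hg => ?_⟩
  · rw [mem_iC]
    intro A hA
    refine hdown A hA _ ?_
    rintro _ ⟨x, hx, rfl⟩
    exact hx k
  · rw [mem_iC] at *
    intro A hA
    have hU : ∀ s : Finset (Fin (n+1)), (⋃ i ∈ s, img (g i) A) ∈ I := by
      intro s
      induction s using Finset.induction_on with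
      | empty => simpa using hdown A hA ∅ (Set.empty_subset _)
      | insert a s _ ih =>
        rw [Finset.set_biUnion_insert]
        exact hunion _ (mem_iC.1 (hg a) A hA) _ ih
    refine hdown _ (hf _ (hU Finset.univ)) _ ?_
    rintro _ ⟨x, hx, rfl⟩
    refine ⟨fun i => g i x, fun i => ?_, rfl⟩
    simp only [Set.mem_iUnion]
    exact ⟨i, Finset.mem_univ _, x, hx, rfl⟩

theorem precomplete_eq {X : Type u} {C D : Set (Ops X)} (hC : IsPrecompleteClone C)
    (hD : IsClone D) (hCD : C ⊆ D) (hne : D ≠ Set.univ) : D ⊆ C := by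
  intro f hf
  by_contra h
  apply hne
  rw [← Set.univ_subset_iff, ← hC.2.2 f h]
  exact Set.sInter_subset_of_mem ⟨hD, Set.insert_subset hf hCD⟩

theorem exists_surj {X : Type u} [Countable X] {A B : Set X} (hA : A.Infinite)
    (hB : B.Nonempty) : ∃ g : X → X, (∀ x, g x ∈ B) ∧ B ⊆ g '' A := by
  classical
  have := hA.to_subtype
  have := hB.to_subtype
  obtain ⟨e⟩ := nonempty_equiv_of_countable (α := A) (β := ℕ)
  obtain ⟨s, hs⟩ := exists_surjective_nat B
  obtain ⟨b, hb⟩ := hB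
  refine ⟨fun x => if h : x ∈ A then s (e ⟨x, h⟩) else b, fun x => ?_, fun y hy => ?_⟩
  · dsimp only
    split_ifs
    · exact Subtype.coe_prop _
    · exact hb
  · obtain ⟨k, hk⟩ := hs ⟨y, hy⟩
    refine ⟨e.symm k, Subtype.coe_prop _, ?_⟩
    simp [hk]

theorem img_reindex {X : Type u} {ι : Type} [Finite ι] [Nonempty ι] (F : (ι → X) → X) :
    ∃ f : Ops X, ∀ A, img f.2 A = img F A := by
  obtain ⟨n, ⟨e⟩⟩ := Finite.exists_equiv_fin ι
  cases n with
  | zero => exact (Fin.isEmpty.false (e (Classical.arbitrary ι))).elim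
  | succ n =>
    refine ⟨⟨n, fun x => F (fun i => x (e i))⟩, fun A => ?_⟩
    ext y
    constructor
    · rintro ⟨x, hx, rfl⟩
      exact ⟨fun i => x (e i), fun i => hx _, rfl⟩
    · rintro ⟨x, hx, rfl⟩
      exact ⟨fun i => x (e.symm i), fun i => hx _, by simp⟩

theorem range_mem {X : Type u} {I : Set (Set X)} (hdown : ∀ A ∈ I, ∀ B ⊆ A, B ∈ I)
    {A : Set X} (hA : A ∈ I) {n : ℕ} (f : (Fin (n + 1) → X) → X) (hf : ∀ x, f x ∈ A) :
    (⟨n, f⟩ : Ops X) ∈ idealClone I := by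
  rw [mem_iC]
  intro B _
  refine hdown A hA _ ?_
  rintro _ ⟨x, _, rfl⟩
  exact hf x

theorem finite_mem {X : Type u} {I : Set (Set X)} (hdown : ∀ A ∈ I, ∀ B ⊆ A, B ∈ I)
    (hunion : ∀ A ∈ I, ∀ B ∈ I, A ∪ B ∈ I) (hne : (⋃₀ I).Nonempty)
    {A : Set X} (hA : A.Finite) (hs : A ⊆ ⋃₀ I) : A ∈ I := by
  induction A, hA using Set.Finite.induction_on with
  | empty =>
    obtain ⟨_, B, hB, _⟩ := hne
    exact hdown B hB _ (Set.empty_subset _)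
  | @insert a s _ _ ih =>
    obtain ⟨B, hB, haB⟩ := hs (Set.mem_insert a s)
    rw [Set.insert_eq]
    exact hunion _ (hdown B hB _ (by simpa using haB)) _
      (ih ((Set.subset_insert a s).trans hs))

theorem pol_clone {X : Type u} (S : Set X) : IsClone (idealClone (𝒫 S)) :=
  iC_clone _ (fun _ hA _ hB => hB.trans hA) (fun _ hA _ hB => Set.union_subset hA hB)

theorem pol_ne {X : Type u} {S : Set X} (hS : S.Nonempty) (hS' : S ≠ Set.univ) :
    idealClone (𝒫 S) ≠ Set.univ := by
  obtain ⟨s, hs⟩ := hS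
  obtain ⟨c, hc⟩ := (Set.ne_univ_iff_exists_notMem S).1 hS'
  intro h
  have : (⟨0, fun _ => c⟩ : Ops X) ∈ idealClone (𝒫 S) := h ▸ Set.mem_univ _
  exact hc (mem_iC.1 this S (Set.Subset.refl S) ⟨fun _ => s, fun _ => hs, rfl⟩)

theorem pol_precomplete {X : Type u} {S : Set X} (hS : S.Nonempty) (hS' : S ≠ Set.univ) :
    IsPrecompleteClone (idealClone (𝒫 S)) := by
  classical
  refine ⟨pol_clone S, pol_ne hS hS', ?_⟩
  rintro ⟨n, f⟩ hf
  refine Set.eq_univ_of_forall ?_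
  rintro ⟨m, h⟩ D ⟨hD, hsub⟩
  rw [mem_iC] at hf
  push Not at hf
  obtain ⟨A, hA, hf⟩ := hf
  obtain ⟨c, hc, hcS⟩ := Set.not_subset.1 hf
  obtain ⟨a, ha, rfl⟩ := hc
  obtain ⟨s, hs⟩ := hS
  have hc : (⟨m, fun _ => f a⟩ : Ops X) ∈ D := by
    refine hD.2 n m f (hsub (Set.mem_insert _ _)) (fun i _ => a i) (fun i => ?_)
    apply hsub
    right
    exact range_mem (fun _ hA _ hB => hB.trans hA) (show S ∈ 𝒫 S from Set.Subset.refl S) _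
      (fun _ => hA (ha i))
  have hh : (⟨m+1, fun x => if x (Fin.last _) ∈ S then s else h (fun i => x i.castSucc)⟩ : Ops X)
      ∈ D := by
    apply hsub
    right
    rw [mem_iC]
    intro A hA
    rintro _ ⟨x, hx, rfl⟩
    dsimp only
    rw [if_pos (hA (hx _))]
    exact hs
  have := hD.2 _ m _ hh (Fin.snoc (fun i x => x i) (fun _ => f a)) (by
    intro i
    refine Fin.lastCases ?_ (fun i => ?_) i
    · simpa using hc
    · simpa using hD.1 m i)
  simpa [hcS] using this

theorem iC_univ {X : Type u} [Nonempty X] {I : Set (Set X)} {A : Set X} [Countable X]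
    (hA : A ∈ I) (hAi : A.Infinite) (hu : Set.univ ∉ I) : idealClone I ≠ Set.univ := by
  intro h
  obtain ⟨g, _, hg⟩ := exists_surj hAi (B := Set.univ) Set.univ_nonempty
  have : (⟨0, fun x => g (x 0)⟩ : Ops X) ∈ idealClone I := h ▸ Set.mem_univ _
  apply hu
  convert mem_iC.1 this A hA
  symm
  rw [← Set.univ_subset_iff]
  intro y _
  obtain ⟨x, hx, rfl⟩ := hg (Set.mem_univ y)
  exact ⟨fun _ => x, fun _ => hx, rfl⟩

theorem part2 {X : Type u} [Countable X] [Infinite X] (I : Set (Set X))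
    (hdown : ∀ A ∈ I, ∀ B ⊆ A, B ∈ I)
    (hunion : ∀ A ∈ I, ∀ B ∈ I, A ∪ B ∈ I) (hs : ⋃₀ I = Set.univ)
    (hp : IsPrecompleteClone (idealClone I)) (A : Set X) (hA : A ∈ I) (hAi : A.Infinite)
    (B : Set X) (hB : B ∉ I) : ∃ f ∈ idealClone I, img f.2 B = Set.univ := by
  classical
  by_contra hcon
  push Not at hcon
  have hBi : B.Infinite := fun h => hB (finite_mem hdown hunion (by simp [hs]) h (by simp [hs]))
  let J : Set (Set X) := {Y | ∃ f ∈ idealClone I, Y ⊆ img f.2 B}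
  have hJd : ∀ A ∈ J, ∀ B ⊆ A, B ∈ J := by
    rintro A ⟨f, hf, hA⟩ C hC
    exact ⟨f, hf, hC.trans hA⟩
  have hJu : ∀ A ∈ J, ∀ B ∈ J, A ∪ B ∈ J := by
    rintro Y ⟨⟨n, f⟩, hf, hY⟩ Z ⟨⟨m, g⟩, hg, hZ⟩
    obtain ⟨h, hh⟩ := img_reindex (X := X) (ι := (Fin (n+1) ⊕ Fin (m+1)) ⊕ Bool)
      (fun x => if x (.inr true) = x (.inr false) then f (fun i => x (.inl (.inl i)))
        else g (fun i => x (.inl (.inr i))))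
    refine ⟨h, fun A hA => ?_, ?_⟩
    · change img h.2 A ∈ I
      rw [hh]
      refine hdown _ (hunion _ (hf A hA) _ (hg A hA)) _ ?_
      rintro _ ⟨x, hx, rfl⟩
      dsimp only
      split_ifs
      · exact .inl ⟨_, fun i => hx _, rfl⟩
      · exact .inr ⟨_, fun i => hx _, rfl⟩
    · rw [hh]
      obtain ⟨b, hb⟩ := hBi.nonempty
      obtain ⟨c, hc, hcb⟩ := hBi.exists_notMem_finset {b}
      rw [Finset.mem_singleton] at hcb
      rintro y (hy | hy)
      · obtain ⟨x, hx, rfl⟩ := hY hy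
        refine ⟨Sum.elim (Sum.elim x (fun _ => b)) (fun _ => b), ?_, by simp⟩
        rintro ((i | i) | i)
        · exact hx i
        · exact hb
        · exact hb
      · obtain ⟨x, hx, rfl⟩ := hZ hy
        refine ⟨Sum.elim (Sum.elim (fun _ => b) x) (fun t => if t then b else c), ?_, by
          simp [Ne.symm hcb]⟩
        rintro ((i | i) | i)
        · exact hb
        · exact hx i
        · cases i
          · exact hc
          · exact hb
  have hBJ : B ∈ J := by
    refine ⟨⟨0, fun x => x 0⟩, (iC_clone I hdown hunion).1 0 0, ?_⟩
    intro b hb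
    exact ⟨fun _ => b, fun _ => hb, rfl⟩
  have hAJ : A ∈ J := by
    obtain ⟨g, hg, hg'⟩ := exists_surj hBi hAi.nonempty
    refine ⟨⟨0, fun x => g (x 0)⟩, range_mem hdown hA _ (fun _ => hg _), ?_⟩
    intro y hy
    obtain ⟨x, hx, rfl⟩ := hg' hy
    exact ⟨fun _ => x, fun _ => hx, rfl⟩
  have hXJ : Set.univ ∉ J := by
    rintro ⟨f, hf, h⟩
    exact hcon f hf (Set.univ_subset_iff.1 h)
  have hsub : idealClone I ⊆ idealClone J := by
    rintro ⟨k, h⟩ hh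
    rw [mem_iC]
    rintro Y ⟨⟨n, f⟩, hf, hY⟩
    obtain ⟨g, hg⟩ := img_reindex (X := X) (ι := Fin (k+1) × Fin (n+1))
      (fun x => h (fun i => f (fun j => x (i, j))))
    refine ⟨g, fun A hA => ?_, ?_⟩
    · change img g.2 A ∈ I
      rw [hg]
      refine hdown _ (hh _ (hf A hA)) _ ?_
      rintro _ ⟨x, hx, rfl⟩
      exact ⟨_, fun i => ⟨_, fun j => hx _, rfl⟩, rfl⟩
    · rw [hg]
      rintro _ ⟨y, hy, rfl⟩
      choose x hx hxy using fun i => hY (hy i)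
      refine ⟨fun p => x p.1 p.2, fun p => hx _ _, ?_⟩
      exact congrArg h (funext hxy)
  have heq := precomplete_eq hp (iC_clone J hJd hJu) hsub (iC_univ hAJ hAi hXJ)
  obtain ⟨g, hg, hg'⟩ := exists_surj hAi hBi.nonempty
  have h1 : (⟨0, fun x => g (x 0)⟩ : Ops X) ∈ idealClone I :=
    heq (range_mem hJd hBJ _ (fun _ => hg _))
  refine hB (hdown _ (mem_iC.1 h1 A hA) _ ?_)
  intro y hy
  obtain ⟨x, hx, rfl⟩ := hg' hy
  exact ⟨fun _ => x, fun _ => hx, rfl⟩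

/-- **Czédli–Heindorf**: precompleteness criterion for ideal clones `C_I` on a countably
infinite base set, depending on the support of the ideal. -/
theorem stmt2 {X : Type u} [Countable X] [Infinite X] (I : Set (Set X))
    (hdown : ∀ A ∈ I, ∀ B ⊆ A, B ∈ I)
    (hunion : ∀ A ∈ I, ∀ B ∈ I, A ∪ B ∈ I) :
    ((⋃₀ I ≠ ∅ ∧ ⋃₀ I ≠ Set.univ) →
      (IsPrecompleteClone (idealClone I) ↔
        ((∀ A ∈ I, A.Finite) ∨ ∀ B ⊆ ⋃₀ I, B ∈ I))) ∧
    (⋃₀ I = Set.univ →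
      (IsPrecompleteClone (idealClone I) ↔
        ((∃ B ∈ I, B.Infinite) ∧ (∃ B : Set X, B.Infinite ∧ B ∉ I) ∧
          ∀ B : Set X, B ∉ I →
            ∃ f ∈ idealClone I, f.2 '' {x : Fin (f.1 + 1) → X | ∀ i, x i ∈ B} = Set.univ))) := by
  classical
  constructor
  · rintro ⟨h1, h2⟩
    have hS : (⋃₀ I).Nonempty := Set.nonempty_iff_ne_empty.2 h1
    have hsub : idealClone I ⊆ idealClone (𝒫 (⋃₀ I)) := by
      rintro ⟨n, f⟩ hf
      rw [mem_iC]
      rintro A hA _ ⟨x, hx, rfl⟩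
      refine ⟨_, hf (Set.range x) (finite_mem hdown hunion hS (Set.finite_range x) ?_), x,
        fun i => ⟨i, rfl⟩, rfl⟩
      rintro _ ⟨i, rfl⟩
      exact hA (hx i)
    constructor
    · intro hp
      have heq := precomplete_eq hp (pol_clone _) hsub (pol_ne hS h2)
      by_contra hcon
      push Not at hcon
      obtain ⟨⟨A, hA, hAi⟩, B, hBS, hB⟩ := hcon
      have hBi : B.Infinite := fun h => hB (finite_mem hdown hunion hS h hBS)
      obtain ⟨g, hg, hg'⟩ := exists_surj hAi hBi.nonempty
      have h1 : (⟨0, fun x => g (x 0)⟩ : Ops X) ∈ idealClone I :=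
        heq (range_mem (fun _ hA _ hB => hB.trans hA) (show B ∈ 𝒫 (⋃₀ I) from hBS) _
          (fun _ => hg _))
      refine hB (hdown _ (mem_iC.1 h1 A hA) _ ?_)
      intro y hy
      obtain ⟨x, hx, rfl⟩ := hg' hy
      exact ⟨fun _ => x, fun _ => hx, rfl⟩
    · intro h
      have : idealClone I = idealClone (𝒫 (⋃₀ I)) := by
        refine hsub.antisymm ?_
        rintro ⟨n, f⟩ hf
        rw [mem_iC] at *
        intro A hA
        have hAS : img f A ⊆ ⋃₀ I := hf A (Set.subset_sUnion_of_mem hA)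
        rcases h with h | h
        · refine finite_mem hdown hunion hS ?_ hAS
          have := h A hA
          exact (Set.Finite.pi' fun _ => this).image _
        · exact h _ hAS
      rw [this]
      exact pol_precomplete hS h2
  · intro hs
    have hne : (⋃₀ I).Nonempty := by simp [hs]
    constructor
    · intro hp
      have hA : ∃ B ∈ I, B.Infinite := by
        by_contra hcon
        push Not at hcon
        apply hp.2.1
        refine Set.eq_univ_of_forall ?_
        rintro ⟨n, f⟩
        rw [mem_iC]
        intro A hA
        refine finite_mem hdown hunion hne ?_ (by simp [hs])
        have := hcon A hA
        exact (Set.Finite.pi' fun _ => this).image _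
      refine ⟨hA, ?_, ?_⟩
      · by_contra hcon
        push Not at hcon
        apply hp.2.1
        refine Set.eq_univ_of_forall ?_
        rintro ⟨n, f⟩
        rw [mem_iC]
        intro A hA
        exact hdown _ (hcon _ Set.infinite_univ) _ (Set.subset_univ _)
      · obtain ⟨A, hA, hAi⟩ := hA
        exact part2 I hdown hunion hs hp A hA hAi
    · rintro ⟨⟨A0, hA0, hA0i⟩, ⟨B0, _, hB0⟩, hall⟩
      refine ⟨iC_clone I hdown hunion,
        iC_univ hA0 hA0i (fun h => hB0 (hdown _ h _ (Set.subset_univ _))), ?_⟩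
      rintro ⟨n, g⟩ hg
      refine Set.eq_univ_of_forall ?_
      rintro ⟨m, q⟩ D ⟨hD, hsub⟩
      rw [mem_iC] at hg
      push Not at hg
      obtain ⟨A, hA, hg⟩ := hg
      obtain ⟨⟨k, f⟩, hf, hfB⟩ := hall _ hg
      have hfB' : ∀ y, ∃ b : Fin (k+1) → X, (∀ i, b i ∈ img g A) ∧ f b = y := by
        intro y
        have : y ∈ (Set.univ : Set X) := trivial
        rw [← hfB] at this
        exact this
      choose b hb hfb using hfB'
      choose t ht hgt using hb
      have key : (⟨m, fun x => f fun i => g fun j => t (q x) i j⟩ : Ops X) ∈ D := by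
        refine hD.2 k m f (hsub (.inr hf)) (fun i x => g fun j => t (q x) i j) fun i => ?_
        refine hD.2 n m g (hsub (.inl rfl)) (fun j x => t (q x) i j) fun j => ?_
        exact hsub (.inr (range_mem hdown hA _ fun x => ht _ _ _))
      have e : (fun x => f fun i => g fun j => t (q x) i j) = q := by
        funext x
        rw [← hfb (q x)]
        congr 1
        funext i
        rw [hfb]
        exact hgt _ _
      rwa [e] at key
end

section
/- Let X be a finite set with at least 2 elements. For 1 ≤ n ≤ |X| let K_n be the set of all operations on X that are either essentially unary or take at most n values, and let B (Burle's clone) be the set of all operations that are either essentially unary or quasilinear. Then the interval [⟨O^(1)⟩, O] of the clone lattice is exactly the chain ⟨O^(1)⟩ = K_1 ⊊ B ⊊ K_2 ⊊ K_3 ⊊ … ⊊ K_{|X|} = O; that is, each of K_1, B, K_2, …, K_{|X|} is a clone, these inclusions are strict, and every clone on X containing all unary operations equals one of them. -/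
universe u v

open Cardinal

/-- An operation is essentially unary iff it depends on at most one variable. -/
def EssentiallyUnary {X : Type u} (f : Ops X) : Prop :=
  ∃ (F : X → X) (k : Fin (f.1 + 1)), ∀ x, f.2 x = F (x k)

/-- An operation is quasilinear iff it is of the form
`φ₀ (φ₁ x₁ + ⋯ + φₙ xₙ)` with the sum taken modulo 2. -/
def Quasilinear {X : Type u} (f : Ops X) : Prop :=
  ∃ (φ₀ : ZMod 2 → X) (φ : Fin (f.1 + 1) → X → ZMod 2),
    ∀ x, f.2 x = φ₀ (∑ i, φ i (x i))

/-- `K n` : operations that are essentially unary or take at most `n` values. -/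
def Kset (X : Type u) (n : ℕ) : Set (Ops X) :=
  {f : Ops X | EssentiallyUnary f ∨ (Set.range f.2).ncard ≤ n}

/-- Burle's clone: operations that are essentially unary or quasilinear. -/
def BurleClone (X : Type u) : Set (Ops X) :=
  {f : Ops X | EssentiallyUnary f ∨ Quasilinear f}

/-- The set of all unary operations, inside `Ops X`. -/
def unarySet (X : Type u) : Set (Ops X) := Set.range (unaryOp : (X → X) → Ops X)


section helpers

open Function

variable {X : Type u}

lemma h_coord {C : Set (Ops X)} (hC : IsClone C) (hU : unarySet X ⊆ C) (m : ℕ)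
    (F : X → X) (k : Fin (m + 1)) : (⟨m, fun x => F (x k)⟩ : Ops X) ∈ C :=
  hC.2 0 m (fun x => F (x 0)) (hU ⟨F, rfl⟩) (fun _ x => x k) (fun _ => hC.1 m k)

lemma h_ucomp {C : Set (Ops X)} (hC : IsClone C) (hU : unarySet X ⊆ C) (m : ℕ)
    (F : X → X) (g : (Fin (m + 1) → X) → X) (hg : (⟨m, g⟩ : Ops X) ∈ C) :
    (⟨m, fun x => F (g x)⟩ : Ops X) ∈ C :=
  hC.2 0 m (fun x => F (x 0)) (hU ⟨F, rfl⟩) (fun _ => g) (fun _ => hg)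

lemma h_eu {C : Set (Ops X)} (hC : IsClone C) (hU : unarySet X ⊆ C) (f : Ops X)
    (hf : EssentiallyUnary f) : f ∈ C := by
  obtain ⟨n, f⟩ := f
  obtain ⟨F, k, h⟩ := hf
  have : f = fun x => F (x k) := funext h
  rw [this]
  exact h_coord hC hU n F k

/-- Two-valued functions represented in the clone. -/
def BP (C : Set (Ops X)) (e : ZMod 2 → X) (k : ℕ) : Set ((Fin (k + 1) → X) → ZMod 2) :=
  {P | (⟨k, fun x => e (P x)⟩ : Ops X) ∈ C}

lemma bp_out {C : Set (Ops X)} (hC : IsClone C) (hU : unarySet X ⊆ C) {e : ZMod 2 → X}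
    (he : Injective e) {k : ℕ} (h : ZMod 2 → X) {P : (Fin (k + 1) → X) → ZMod 2}
    (hP : P ∈ BP C e k) : (⟨k, fun x => h (P x)⟩ : Ops X) ∈ C := by
  have := h_ucomp hC hU k (fun y => h (invFun e y)) _ hP
  simpa [leftInverse_invFun he _] using this

lemma bp_coord {C : Set (Ops X)} (hC : IsClone C) (hU : unarySet X ⊆ C) {e : ZMod 2 → X}
    {k : ℕ} (φ : X → ZMod 2) (i : Fin (k + 1)) : (fun x => φ (x i)) ∈ BP C e k :=
  h_coord hC hU k (fun y => e (φ y)) i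

lemma bp_un {C : Set (Ops X)} (hC : IsClone C) (hU : unarySet X ⊆ C) {e : ZMod 2 → X}
    (he : Injective e) {k : ℕ} (h : ZMod 2 → ZMod 2) {P : (Fin (k + 1) → X) → ZMod 2}
    (hP : P ∈ BP C e k) : (fun x => h (P x)) ∈ BP C e k :=
  bp_out hC hU he (fun y => e (h y)) hP

/-- closure under a binary Boolean function -/
def Cl (C : Set (Ops X)) (e : ZMod 2 → X) (β : ZMod 2 → ZMod 2 → ZMod 2) : Prop :=
  ∀ (k : ℕ) (P Q : (Fin (k + 1) → X) → ZMod 2), P ∈ BP C e k → Q ∈ BP C e k →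
    (fun x => β (P x) (Q x)) ∈ BP C e k

lemma cl_rect {C : Set (Ops X)} (hC : IsClone C) (hU : unarySet X ⊆ C) {e : ZMod 2 → X}
    (he : Injective e) {n : ℕ} {f : (Fin (n + 1) → X) → X} (hf : (⟨n, f⟩ : Ops X) ∈ C)
    (i : Fin (n + 1)) (a a' : X) (p q : Fin (n + 1) → X) (ψ : X → ZMod 2) :
    Cl C e (fun s t => ψ (f (update (if t = 0 then p else q) i (if s = 0 then a else a')))) := by
  intro k P Q hP hQ
  have key : (⟨k, fun x => f fun j =>
      (if j = i then (if P x = 0 then a else a') else (if Q x = 0 then p j else q j))⟩ : Ops X)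
      ∈ C := by
    refine hC.2 n k f hf (fun j x =>
      (if j = i then (if P x = 0 then a else a') else (if Q x = 0 then p j else q j))) ?_
    intro j
    by_cases hj : j = i
    · simp only [hj, if_true]
      exact bp_out hC hU he (fun y => if y = 0 then a else a') hP
    · simp only [hj, if_false]
      exact bp_out hC hU he (fun y => if y = 0 then p j else q j) hQ
  have := h_ucomp hC hU k (fun y => e (ψ y)) _ key
  have h2 : ∀ x, (fun j => (if j = i then (if P x = 0 then a else a')
      else (if Q x = 0 then p j else q j)))
      = update (if Q x = 0 then p else q) i (if P x = 0 then a else a') := by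
    intro x
    funext j
    by_cases hj : j = i
    · subst hj; simp
    · rw [update_of_ne hj]; simp only [hj, if_false]; split_ifs <;> rfl
  simp only [h2] at this
  exact this

lemma odd_form : ∀ β : ZMod 2 → ZMod 2 → ZMod 2, β 0 0 + β 0 1 + β 1 0 + β 1 1 = 1 →
    ∃ r s t : ZMod 2, ∀ x y, r + β (s + x) (t + y) = x * y := by decide

lemma even_form : ∀ β : ZMod 2 → ZMod 2 → ZMod 2, β 0 0 + β 0 1 + β 1 0 + β 1 1 ≠ 1 →
    (β 0 0 ≠ β 1 0 ∨ β 0 1 ≠ β 1 1) → (β 0 0 ≠ β 0 1 ∨ β 1 0 ≠ β 1 1) →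
    ∃ r : ZMod 2, ∀ x y, r + β x y = x + y := by decide

lemma mul_of_odd {C : Set (Ops X)} (hC : IsClone C) (hU : unarySet X ⊆ C) {e : ZMod 2 → X}
    (he : Injective e) (β : ZMod 2 → ZMod 2 → ZMod 2) (hβ : Cl C e β)
    (h : β 0 0 + β 0 1 + β 1 0 + β 1 1 = 1) : Cl C e (fun x y => x * y) := by
  obtain ⟨r, s, t, H⟩ := odd_form β h
  intro k P Q hP hQ
  have := bp_un hC hU he (fun y => r + y) (hβ k _ _ (bp_un hC hU he (fun y => s + y) hP)
    (bp_un hC hU he (fun y => t + y) hQ))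
  simpa only [H] using this

lemma xor_form : ∀ x y : ZMod 2, 1 + (1 + x * (1 + y)) * (1 + (1 + x) * y) = x + y := by decide

lemma add_of_mul {C : Set (Ops X)} (hC : IsClone C) (hU : unarySet X ⊆ C) {e : ZMod 2 → X}
    (he : Injective e) (h : Cl C e (fun x y => x * y)) : Cl C e (fun x y => x + y) := by
  intro k P Q hP hQ
  have n : ∀ {P}, P ∈ BP C e k → (fun x => 1 + P x) ∈ BP C e k :=
    fun hP => bp_un hC hU he (fun y => 1 + y) hP
  have := n (h k _ _ (n (h k _ _ hP (n hQ))) (n (h k _ _ (n hP) hQ)))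
  simpa only [xor_form] using this

lemma add_of_dep {C : Set (Ops X)} (hC : IsClone C) (hU : unarySet X ⊆ C) {e : ZMod 2 → X}
    (he : Injective e) (β : ZMod 2 → ZMod 2 → ZMod 2) (hβ : Cl C e β)
    (h1 : β 0 0 ≠ β 1 0 ∨ β 0 1 ≠ β 1 1) (h2 : β 0 0 ≠ β 0 1 ∨ β 1 0 ≠ β 1 1) :
    Cl C e (fun x y => x + y) := by
  by_cases h : β 0 0 + β 0 1 + β 1 0 + β 1 1 = 1
  · exact add_of_mul hC hU he (mul_of_odd hC hU he β hβ h)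
  · obtain ⟨r, H⟩ := even_form β h h1 h2
    intro k P Q hP hQ
    have := bp_un hC hU he (fun y => r + y) (hβ k _ _ hP hQ)
    simpa only [H] using this

lemma bp_sum {C : Set (Ops X)} (hC : IsClone C) (hU : unarySet X ⊆ C) {e : ZMod 2 → X}
    (hA : Cl C e (fun x y => x + y)) {k : ℕ} {ι : Type*}
    (s : Finset ι) (P : ι → (Fin (k + 1) → X) → ZMod 2) (hP : ∀ i ∈ s, P i ∈ BP C e k) :
    (fun x => ∑ i ∈ s, P i x) ∈ BP C e k := by
  classical
  induction s using Finset.induction_on with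
  | empty => simpa using bp_coord (e := e) hC hU (k := k) (fun _ => 0) 0
  | insert a s ha ih =>
    simp only [Finset.sum_insert ha]
    exact hA k _ _ (hP a (by simp)) (ih fun i hi => hP i (by simp [hi]))

lemma bp_prod {C : Set (Ops X)} (hC : IsClone C) (hU : unarySet X ⊆ C) {e : ZMod 2 → X}
    (hA : Cl C e (fun x y => x * y)) {k : ℕ} {ι : Type*}
    (s : Finset ι) (P : ι → (Fin (k + 1) → X) → ZMod 2) (hP : ∀ i ∈ s, P i ∈ BP C e k) :
    (fun x => ∏ i ∈ s, P i x) ∈ BP C e k := by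
  classical
  induction s using Finset.induction_on with
  | empty => simpa using bp_coord (e := e) hC hU (k := k) (fun _ => 1) 0
  | insert a s ha ih =>
    simp only [Finset.prod_insert ha]
    exact hA k _ _ (hP a (by simp)) (ih fun i hi => hP i (by simp [hi]))

lemma burle_sub {C : Set (Ops X)} (hC : IsClone C) (hU : unarySet X ⊆ C) {e : ZMod 2 → X}
    (he : Injective e) (hA : Cl C e (fun x y => x + y)) : BurleClone X ⊆ C := by
  rintro ⟨n, f⟩ (hf | ⟨φ₀, φ, h⟩)
  · exact h_eu hC hU _ hf
  · have : f = fun x => φ₀ (∑ i, φ i (x i)) := funext h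
    rw [this]
    exact bp_out hC hU he φ₀ (bp_sum hC hU hA _ (fun i x => φ i (x i))
      (fun i _ => bp_coord hC hU (φ i) i))

lemma zmod2_cases : ∀ x : ZMod 2, x = 0 ∨ x = 1 := by decide

lemma bp_all [Fintype X] {C : Set (Ops X)} (hC : IsClone C) (hU : unarySet X ⊆ C)
    {e : ZMod 2 → X} (he : Injective e) (hM : Cl C e (fun x y => x * y)) {k : ℕ}
    (P : (Fin (k + 1) → X) → ZMod 2) : P ∈ BP C e k := by
  classical
  have hA := add_of_mul hC hU he hM
  have h := bp_sum hC hU hA (Finset.univ.filter fun y => P y = 1)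
    (fun y x => ∏ i, (if x i = y i then (1 : ZMod 2) else 0)) (fun y _ =>
      bp_prod hC hU hM Finset.univ (fun i x => if x i = y i then (1 : ZMod 2) else 0)
        (fun i _ => bp_coord hC hU (fun z => if z = y i then (1 : ZMod 2) else 0) i))
  convert h using 1
  funext x
  have h1 : ∀ y : Fin (k + 1) → X, (∏ i, (if x i = y i then (1 : ZMod 2) else 0))
      = if x = y then 1 else 0 := by
    intro y
    rw [Finset.prod_ite_zero]
    simp [funext_iff]
  simp only [h1]
  rw [Finset.sum_ite_eq]
  rcases zmod2_cases (P x) with h | h <;> simp [h]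

lemma two_val {n : ℕ} [Finite X] [hX : Nonempty X] (f : (Fin (n + 1) → X) → X) (h : (Set.range f).ncard ≤ 2) :
    ∃ (φ₀ : ZMod 2 → X) (P : (Fin (n + 1) → X) → ZMod 2), ∀ x, f x = φ₀ (P x) := by
  classical
  obtain ⟨o⟩ := hX
  by_cases hc : ∀ x, f x = f fun _ => o
  · exact ⟨fun _ => f fun _ => o, fun _ => 0, hc⟩
  push Not at hc
  obtain ⟨y, hy⟩ := hc
  refine ⟨fun s => if s = 0 then f (fun _ => o) else f y,
    fun x => if f x = f (fun _ => o) then 0 else 1, fun x => ?_⟩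
  by_cases h1 : f x = f fun _ => o
  · simp [h1]
  · simp only [h1, if_false]
    by_contra h3
    have h3 : f x ≠ f y := by simpa using h3
    have : ({f x, f y, f fun _ => o} : Set X).ncard = 3 :=
      Set.ncard_eq_three.2 ⟨_, _, _, h3, h1, hy, rfl⟩
    have h4 := Set.ncard_le_ncard (s := {f x, f y, f fun _ => o}) (t := Set.range f)
      (by rintro z (rfl | rfl | rfl) <;> exact ⟨_, rfl⟩) (Set.toFinite _)
    omega

lemma k2_sub [Fintype X] {C : Set (Ops X)} (hC : IsClone C) (hU : unarySet X ⊆ C)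
    {e : ZMod 2 → X} (he : Injective e) (hM : Cl C e (fun x y => x * y)) : Kset X 2 ⊆ C := by
  rintro ⟨n, f⟩ (hf | hf)
  · exact h_eu hC hU _ hf
  · have : Nonempty X := ⟨e 0⟩
    obtain ⟨φ₀, P, h⟩ := two_val f hf
    have : f = fun x => φ₀ (P x) := funext h
    rw [this]
    exact bp_out hC hU he φ₀ (bp_all hC hU he hM P)

lemma dep_of_not_eu {n : ℕ} (f : (Fin (n + 1) → X) → X)
    (hf : ¬ EssentiallyUnary (⟨n, f⟩ : Ops X)) :
    ∃ i, (∃ a a' p, f (update p i a) ≠ f (update p i a')) ∧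
      (∃ c p q, f (update p i c) ≠ f (update q i c)) := by
  classical
  rcases isEmpty_or_nonempty X with hX | ⟨⟨o⟩⟩
  · exact (hf ⟨id, 0, fun x => (hX.false (x 0)).elim⟩).elim
  have h1 : ∃ i a a' p, f (update p i a) ≠ f (update p i a') := by
    by_contra! hc
    apply hf
    refine ⟨fun _ => f fun _ => o, 0, fun x => ?_⟩
    have : ∀ s : Finset (Fin (n + 1)), f (s.piecewise x fun _ => o) = f fun _ => o := by
      intro s
      induction s using Finset.induction_on with
      | empty => simp
      | insert a s ha ih =>
        rw [Finset.piecewise_insert, ← ih, hc a (x a) (s.piecewise x (fun _ => o) a),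
          update_eq_self]
    simpa using this Finset.univ
  obtain ⟨i, h1⟩ := h1
  refine ⟨i, h1, ?_⟩
  by_contra! hc
  apply hf
  refine ⟨fun c => f (update (fun _ => o) i c), i, fun x => ?_⟩
  simpa using hc (x i) x (fun _ => o)

lemma rect_dep {A B Y : Type*} (G : A → B → Y) (ha : ∃ a a' b, G a b ≠ G a' b)
    (hb : ∃ c d d', G c d ≠ G c d') :
    ∃ a a' b b', (G a b ≠ G a' b ∨ G a b' ≠ G a' b') ∧ (G a b ≠ G a b' ∨ G a' b ≠ G a' b') := by
  obtain ⟨a, a', b, h⟩ := ha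
  obtain ⟨c, d, d', h'⟩ := hb
  by_contra! hc
  have h1 := hc a a' b d
  have h2 := hc a a' b d'
  have h3 := hc c a d d'
  grind

lemma rect_ind {Y : Type*} (u v w z : Y) (h1 : u ≠ v ∨ w ≠ z) (h2 : u ≠ w ∨ v ≠ z) :
    ∃ ψ : Y → ZMod 2, (ψ u ≠ ψ v ∨ ψ w ≠ ψ z) ∧ (ψ u ≠ ψ w ∨ ψ v ≠ ψ z) := by
  classical
  by_contra! hc
  have a1 := hc (fun y => if y = u then 1 else 0)
  have a2 := hc (fun y => if y = v then 1 else 0)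
  have a3 := hc (fun y => if y = w then 1 else 0)
  have a4 := hc (fun y => if y = z then 1 else 0)
  have : (0 : ZMod 2) ≠ 1 := by decide
  grind

lemma add_cl {C : Set (Ops X)} (hC : IsClone C) (hU : unarySet X ⊆ C) {e : ZMod 2 → X}
    (he : Injective e) (f : Ops X) (hf : f ∈ C) (hn : ¬ EssentiallyUnary f) :
    Cl C e (fun x y => x + y) := by
  obtain ⟨n, f⟩ := f
  obtain ⟨i, ha, hb⟩ := dep_of_not_eu f hn
  obtain ⟨a, a', p, q, h1, h2⟩ := rect_dep (fun a p => f (update p i a)) ha hb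
  obtain ⟨ψ, k1, k2⟩ := rect_ind _ _ _ _ h1 h2
  refine add_of_dep hC hU he _ (cl_rect hC hU he hf i a a' p q ψ) ?_ ?_
  · simpa using k1
  · simpa using k2

lemma l_shape {A B Y : Type*} (G : A → B → Y) (ha : ∃ a a' b, G a b ≠ G a' b)
    (hb : ∃ c d d', G c d ≠ G c d') (h3 : ∀ u v, ∃ a b, G a b ≠ u ∧ G a b ≠ v) :
    ∃ a a' b b', G a b ≠ G a' b ∧ G a b ≠ G a b' ∧ G a' b ≠ G a b' := by
  obtain ⟨a, a', b, h⟩ := ha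
  obtain ⟨e, f, f', h'⟩ := hb
  obtain ⟨c, d, hu, hv⟩ := h3 (G a b) (G a' b)
  by_contra! hc
  have k1 : ∀ b', G a b' = G a b ∨ G a b' = G a' b := by
    intro b'
    have := hc a a' b b'
    grind
  have k2 : ∀ b', G a' b' = G a b ∨ G a' b' = G a' b := by
    intro b'
    have := hc a' a b b'
    grind
  have k3 : ∀ b', G a b' = G a d := by
    intro b'
    have := hc a c d b'
    have := k1 b'
    have := k1 d
    grind
  have k4 : ∀ b', G a' b' = G a' d := by
    intro b'
    have := hc a' c d b'
    have := k2 b'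
    have := k2 d
    grind
  have k5 : ∀ b', G c b' = G c d := by
    intro b'
    have := hc c a d b'
    have := hc c a' d b'
    have := k3 b
    have := k4 b
    grind
  have e1 := hc e a f f'
  have e2 := hc e a' f f'
  have e3 := hc e c f f'
  have := k3 b
  have := k4 b
  have := k3 f
  have := k4 f
  have := k5 f
  clear hc k1 k2 k3 k4 k5 h3
  by_cases x1 : G e f = G a f <;> by_cases x2 : G e f = G a' f <;>
    by_cases x3 : G e f = G c f <;> grind

lemma three_val {n : ℕ} [Finite X] (f : (Fin (n + 1) → X) → X) (h : 3 ≤ (Set.range f).ncard)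
    (u v : X) : ∃ x, f x ≠ u ∧ f x ≠ v := by
  by_contra! hc
  have h4 := Set.ncard_le_ncard (s := Set.range f) (t := {u, v})
    (by rintro z ⟨x, rfl⟩; by_cases h : f x = u
        · simp [h]
        · simp [hc x h]) (Set.toFinite _)
  have := Set.ncard_insert_le u {v}
  rw [Set.ncard_singleton] at this
  omega

lemma l_shape_op {n : ℕ} [Finite X] (f : (Fin (n + 1) → X) → X)
    (hn : ¬ EssentiallyUnary (⟨n, f⟩ : Ops X)) (h : 3 ≤ (Set.range f).ncard) :
    ∃ i a a' p q, f (update p i a) ≠ f (update p i a') ∧ f (update p i a) ≠ f (update q i a) ∧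
      f (update p i a') ≠ f (update q i a) := by
  obtain ⟨i, ha, hb⟩ := dep_of_not_eu f hn
  refine ⟨i, l_shape (fun a p => f (update p i a)) ha hb ?_⟩
  intro u v
  obtain ⟨x, hx⟩ := three_val f h u v
  exact ⟨x i, x, by simpa using hx⟩

lemma l_ind {Y : Type*} (u v w z : Y) (h1 : u ≠ v) (h2 : u ≠ w) (h3 : v ≠ w) :
    ∃ ψ : Y → ZMod 2, ψ u + ψ w + ψ v + ψ z = 1 := by
  classical
  by_cases h : z = u
  · refine ⟨fun y => if y = v then 1 else 0, ?_⟩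
    simp [h, h1, h3.symm]
  · refine ⟨fun y => if y = u then 1 else 0, ?_⟩
    simp [h, h1.symm, h2.symm]

lemma quasi_of_even [Nonempty X] {n : ℕ} (P : (Fin (n + 1) → X) → ZMod 2)
    (h : ∀ i a a' p q, P (update p i a) + P (update q i a) + P (update p i a')
      + P (update q i a') ≠ 1) :
    ∃ φ : Fin (n + 1) → X → ZMod 2, ∀ x, P x = ∑ i, φ i (x i) := by
  classical
  obtain ⟨o'⟩ := ‹Nonempty X›
  let o : Fin (n + 1) → X := fun _ => o'
  have key : ∀ x (s : Finset (Fin (n + 1))), P (s.piecewise x o)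
      = P o + ∑ i ∈ s, (P (update o i (x i)) - P o) := by
    intro x s
    induction s using Finset.induction_on with
    | empty => simp
    | insert a s ha ih =>
      rw [Finset.piecewise_insert, Finset.sum_insert ha]
      have h1 := h a (x a) (o a) (s.piecewise x o) o
      have h2 : update (s.piecewise x o) a (o a) = s.piecewise x o := by
        rw [update_eq_iff]; simp [ha]
      rw [h2, update_eq_self] at h1
      have arith : ∀ A B D E S : ZMod 2, A + B + D + E ≠ 1 → D = E + S →
        A = E + (B - E + S) := by decide
      exact arith _ _ _ _ _ h1 ih
  refine ⟨fun i y => (P (update o i y) - P o) + if i = 0 then P o else 0, fun x => ?_⟩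
  have := key x Finset.univ
  rw [Finset.piecewise_univ] at this
  rw [this, Finset.sum_add_distrib]
  simp [add_comm]

lemma mul_cl [Fintype X] {C : Set (Ops X)} (hC : IsClone C) (hU : unarySet X ⊆ C)
    {e : ZMod 2 → X} (he : Injective e) (f : Ops X) (hf : f ∈ C) (hn : f ∉ BurleClone X) :
    Cl C e (fun x y => x * y) := by
  classical
  obtain ⟨n, f⟩ := f
  have hn1 : ¬ EssentiallyUnary (⟨n, f⟩ : Ops X) := fun h => hn (Or.inl h)
  have hn2 : ¬ Quasilinear (⟨n, f⟩ : Ops X) := fun h => hn (Or.inr h)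
  by_cases h3 : (Set.range f).ncard ≤ 2
  · have : Nonempty X := ⟨e 0⟩
    obtain ⟨φ₀, P, hP⟩ := two_val f h3
    have hne : φ₀ 0 ≠ φ₀ 1 := by
      intro h
      apply hn1
      refine ⟨fun _ => φ₀ 0, 0, fun x => ?_⟩
      show f x = _
      rw [hP]
      rcases zmod2_cases (P x) with h' | h' <;> simp [h', h]
    by_cases hh : ∀ i a a' p q, P (update p i a) + P (update q i a) + P (update p i a')
      + P (update q i a') ≠ 1
    · obtain ⟨φ, hφ⟩ := quasi_of_even P hh
      exact (hn2 ⟨φ₀, φ, fun x => by rw [← hφ]; exact hP x⟩).elim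
    · push Not at hh
      obtain ⟨i, a, a', p, q, hh⟩ := hh
      refine mul_of_odd hC hU he _ (cl_rect hC hU he hf i a a' p q
        (fun y => if y = φ₀ 0 then 0 else 1)) ?_
      have : ∀ x, (if f x = φ₀ 0 then (0 : ZMod 2) else 1) = P x := by
        intro x
        rw [hP]
        rcases zmod2_cases (P x) with h' | h' <;> simp [h', hne.symm]
      simp only [this]
      simpa using hh
  · obtain ⟨i, a, a', p, q, h1, h2, h3⟩ := l_shape_op f hn1 (by omega)
    obtain ⟨ψ, hψ⟩ := l_ind _ _ _ (f (update q i a')) h1 h2 h3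
    refine mul_of_odd hC hU he _ (cl_rect hC hU he hf i a a' p q ψ) ?_
    simpa using hψ

lemma k_step [Fintype X] {C : Set (Ops X)} (hC : IsClone C) (hU : unarySet X ⊆ C) (m : ℕ)
    (hm : 2 ≤ m) (hK : Kset X m ⊆ C) (f : Ops X) (hf : f ∈ C) (hn : ¬ EssentiallyUnary f)
    (hr : m + 1 ≤ (Set.range f.2).ncard) : Kset X (m + 1) ⊆ C := by
  classical
  obtain ⟨n, f⟩ := f
  obtain ⟨i, a, a', p', q', h1, h2, h3⟩ := l_shape_op f hn (by simp only at hr; omega)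
  obtain ⟨p, hp⟩ : ∃ p, p = update p' i a := ⟨_, rfl⟩
  obtain ⟨q, hq⟩ : ∃ q, q = update p' i a' := ⟨_, rfl⟩
  obtain ⟨r, hr'⟩ : ∃ r, r = update q' i a := ⟨_, rfl⟩
  have hpr : p i = r i := by simp [hp, hr']
  have hpq : ∀ j, j ≠ i → p j = q j := by intro j hj; simp [hp, hq, hj]
  rw [← hp, ← hq] at h1
  rw [← hp, ← hr'] at h2
  rw [← hq, ← hr'] at h3
  have hr2 : m + 1 ≤ (Finset.univ.image f).card := by
    have : (Set.range f) = ((Finset.univ.image f : Finset X) : Set X) := by simp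
    simp only at hr
    rwa [this, Set.ncard_coe_finset] at hr
  obtain ⟨T, hT1, hT2, hT3⟩ := Finset.exists_subsuperset_card_eq
    (s := {f p, f q, f r}) (t := Finset.univ.image f) (n := m + 1)
    (by intro z; simp only [Finset.mem_insert, Finset.mem_singleton]
        rintro (rfl | rfl | rfl) <;> simp)
    (by have := Finset.card_le_three (a := f p) (b := f q) (c := f r); omega) hr2
  have hpT : f p ∈ T := hT1 (by simp)
  have hqT : f q ∈ T := hT1 (by simp)
  have hrT : f r ∈ T := hT1 (by simp)
  obtain ⟨t, ht, htp, htq, htr⟩ : ∃ t : X → (Fin (n + 1) → X), (∀ v ∈ T, f (t v) = v) ∧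
      t (f p) = p ∧ t (f q) = q ∧ t (f r) = r := by
    have : ∀ v, ∃ x, v ∈ T → f x = v := by
      intro v
      by_cases hv : v ∈ T
      · obtain ⟨x, -, hx⟩ := Finset.mem_image.1 (hT2 hv)
        exact ⟨x, fun _ => hx⟩
      · exact ⟨p, fun h => (hv h).elim⟩
    choose t0 ht0 using this
    refine ⟨fun v => if v = f p then p else if v = f q then q else if v = f r then r else t0 v,
      ?_, ?_, ?_, ?_⟩
    · intro v hv
      have := ht0 v hv
      dsimp only
      split_ifs <;> simp_all
    · simp
    · simp [h1.symm]
    · simp [h2.symm, h3.symm]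
  have hcard : ∀ j, (T.image fun v => t v j).card ≤ m := by
    intro j
    have main : ∀ u w, u ∈ T → w ∈ T → u ≠ w → t u j = t w j →
        (T.image fun v => t v j).card ≤ m := by
      intro u w hu hw huw h
      have hsub : (T.image fun v => t v j) ⊆ ((T.erase u).image fun v => t v j) := by
        intro z hz
        obtain ⟨v, hv, rfl⟩ := Finset.mem_image.1 hz
        by_cases hvu : v = u
        · exact Finset.mem_image.2 ⟨w, Finset.mem_erase.2 ⟨huw.symm, hw⟩, by rw [hvu, h]⟩
        · exact Finset.mem_image.2 ⟨v, Finset.mem_erase.2 ⟨hvu, hv⟩, rfl⟩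
      have c1 := Finset.card_le_card hsub
      have c2 := Finset.card_image_le (s := T.erase u) (f := fun v => t v j)
      have c3 := Finset.card_erase_of_mem hu
      omega
    by_cases hj : j = i
    · exact main _ _ hpT hrT h2 (by rw [htp, htr, hj, hpr])
    · exact main _ _ hpT hqT h1 (by rw [htp, htq, hpq j hj])
  rintro ⟨k, h⟩ (hh | hh)
  · exact h_eu hC hU _ hh
  simp only at hh
  obtain ⟨σ, hσT, hσ⟩ : ∃ σ : X → X, (∀ x ∈ Set.range h, σ x ∈ T) ∧
      Set.InjOn σ (Set.range h) := by
    have hR : (Set.range h) = ((Finset.univ.image h : Finset X) : Set X) := by simp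
    rw [hR, Set.ncard_coe_finset] at hh
    rw [hR]
    have : Fintype.card (Finset.univ.image h : Finset X) ≤ Fintype.card T := by
      rw [Fintype.card_coe, Fintype.card_coe]; omega
    obtain ⟨E⟩ := Function.Embedding.nonempty_of_card_le this
    refine ⟨fun x => if hx : x ∈ Finset.univ.image h then (E ⟨x, hx⟩ : X) else x, ?_, ?_⟩
    · intro x hx
      have hx' : x ∈ Finset.univ.image h := hx
      simp only [dif_pos hx']
      exact (E ⟨x, hx'⟩).2
    · intro x hx y hy hxy
      have hx' : x ∈ Finset.univ.image h := hx
      have hy' : y ∈ Finset.univ.image h := hy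
      simp only [dif_pos hx', dif_pos hy'] at hxy
      have := E.injective (Subtype.ext hxy)
      simpa using this
  have hg : ∀ j, (⟨k, fun x => t (σ (h x)) j⟩ : Ops X) ∈ C := by
    intro j
    apply hK
    right
    have c1 := Set.ncard_le_ncard (s := Set.range fun x => t (σ (h x)) j)
      (t := ((T.image fun v => t v j : Finset X) : Set X))
      (by rintro z ⟨x, rfl⟩
          exact Finset.mem_coe.2 (Finset.mem_image.2 ⟨_, hσT _ ⟨x, rfl⟩, rfl⟩)) (Set.toFinite _)
    rw [Set.ncard_coe_finset] at c1
    exact c1.trans (hcard j)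
  have hfin := hC.2 n k f hf (fun j x => t (σ (h x)) j) hg
  have : Nonempty X := ⟨a⟩
  have hfin2 := h_ucomp hC hU k (invFunOn σ (Set.range h)) _ hfin
  convert hfin2 using 2
  funext x
  have e1 : f (fun j => t (σ (h x)) j) = σ (h x) := ht _ (hσT _ ⟨x, rfl⟩)
  rw [e1]
  exact (hσ.leftInvOn_invFunOn ⟨x, rfl⟩).symm

lemma k_sub [Fintype X] {C : Set (Ops X)} (hC : IsClone C) (hU : unarySet X ⊆ C)
    {e : ZMod 2 → X} (he : Injective e) (hM : Cl C e (fun x y => x * y))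
    (f : Ops X) (hf : f ∈ C) (hn : ¬ EssentiallyUnary f) (m : ℕ) (hm : 2 ≤ m)
    (hr : m ≤ (Set.range f.2).ncard) : Kset X m ⊆ C := by
  induction m, hm using Nat.le_induction with
  | base => exact k2_sub hC hU he hM
  | succ m hm ih => exact k_step hC hU m hm (ih (by omega)) f hf hn hr

lemma K_clone [Finite X] (n : ℕ) : IsClone (Kset X n) := by
  refine ⟨fun n k => Or.inl ⟨id, k, fun x => rfl⟩, ?_⟩
  rintro n' m f hf g hg
  rcases hf with ⟨F, k, hF⟩ | hf
  · rcases hg k with ⟨G, l, hG⟩ | h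
    · left
      refine ⟨fun y => F (G y), l, fun x => ?_⟩
      simp only at hF hG ⊢
      rw [hF, hG]
    · right
      simp only at hF h ⊢
      have : (Set.range fun x => f fun i => g i x) = F '' Set.range (g k) := by
        rw [← Set.range_comp]; congr 1; funext x; exact hF _
      rw [this]
      exact (Set.ncard_image_le (Set.toFinite _)).trans h
  · right
    simp only at hf ⊢
    refine le_trans (Set.ncard_le_ncard ?_ (Set.toFinite _)) hf
    rintro z ⟨x, rfl⟩
    exact ⟨_, rfl⟩

lemma zmod2_fun : ∀ h : ZMod 2 → ZMod 2, ∃ a b, ∀ x, h x = a + b * x := by decide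

lemma B_clone : IsClone (BurleClone X) := by
  refine ⟨fun n k => Or.inl ⟨id, k, fun x => rfl⟩, ?_⟩
  rintro n m f hf g hg
  rcases hf with ⟨F, k, hF⟩ | ⟨φ₀, φ, hf⟩
  · rcases hg k with ⟨G, l, hG⟩ | ⟨φ₀, φ, h⟩
    · left
      refine ⟨fun y => F (G y), l, fun x => ?_⟩
      simp only at hF hG ⊢
      rw [hF, hG]
    · right
      refine ⟨fun y => F (φ₀ y), φ, fun x => ?_⟩
      simp only at hF h ⊢
      rw [hF, h]
  · right
    have : ∀ i, ∃ χ : Fin (m + 1) → X → ZMod 2, ∀ x, φ i (g i x) = ∑ j, χ j (x j) := by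
      intro i
      rcases hg i with ⟨G, l, hG⟩ | ⟨φ₀', φ', h⟩
      · refine ⟨fun j y => if j = l then φ i (G y) else 0, fun x => ?_⟩
        simp only at hG
        simp [hG]
      · obtain ⟨a, b, hab⟩ := zmod2_fun (fun y => φ i (φ₀' y))
        refine ⟨fun j y => (if j = 0 then a else 0) + b * φ' j y, fun x => ?_⟩
        simp only at h hab
        rw [h, hab, Finset.sum_add_distrib, ← Finset.mul_sum]
        simp
    choose χ hχ using this
    refine ⟨φ₀, fun j y => ∑ i, χ i j y, fun x => ?_⟩
    simp only at hf ⊢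
    rw [hf, Finset.sum_comm]
    simp only [hχ]

lemma K1_eu [Finite X] [Nonempty X] (f : Ops X) (hf : f ∈ Kset X 1) : EssentiallyUnary f := by
  rcases hf with h | h
  · exact h
  · obtain ⟨o⟩ := ‹Nonempty X›
    refine ⟨fun _ => f.2 fun _ => o, 0, fun x => ?_⟩
    exact (Set.ncard_le_one (Set.toFinite _)).1 h _ ⟨_, rfl⟩ _ ⟨_, rfl⟩

lemma K_mono {n m : ℕ} (h : n ≤ m) : Kset X n ⊆ Kset X m := by
  rintro f (hf | hf)
  · exact Or.inl hf
  · exact Or.inr (hf.trans h)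

lemma not_eu2 (f : (Fin (1 + 1) → X) → X) (a b c d c' d' : X)
    (h1 : f ![a, c] ≠ f ![b, c]) (h2 : f ![c', d] ≠ f ![c', d']) :
    ¬ EssentiallyUnary (⟨1, f⟩ : Ops X) := by
  rintro ⟨F, k, h⟩
  simp only at h
  rw [h, h] at h1 h2
  fin_cases k
  · simp at h2
  · simp at h1

lemma B_sub_K2 [Finite X] : BurleClone X ⊆ Kset X 2 := by
  rintro f (hf | ⟨φ₀, φ, h⟩)
  · exact Or.inl hf
  · right
    have := Set.ncard_le_ncard (s := Set.range f.2) (t := {φ₀ 0, φ₀ 1})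
      (by rintro z ⟨x, rfl⟩; rw [h]
          rcases zmod2_cases (∑ i, φ i (x i)) with h' | h' <;> simp [h']) (Set.toFinite _)
    have h2 := Set.ncard_insert_le (φ₀ 0) {φ₀ 1}
    rw [Set.ncard_singleton] at h2
    omega

end helpers

/-- **Burle's theorem**: on a finite base set `X` with at least two elements, the interval
`[⟨O⁽¹⁾⟩, O]` of the clone lattice is the chain
`⟨O⁽¹⁾⟩ = K₁ ⊊ B ⊊ K₂ ⊊ ⋯ ⊊ K_{|X|} = O`. -/
theorem stmt3 {X : Type u} [Fintype X] (h2 : 2 ≤ Fintype.card X) :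
    (∀ n, 1 ≤ n → n ≤ Fintype.card X → IsClone (Kset X n)) ∧
    IsClone (BurleClone X) ∧
    cloneGen (unarySet X) = Kset X 1 ∧
    Kset X 1 ⊂ BurleClone X ∧
    BurleClone X ⊂ Kset X 2 ∧
    (∀ n, 2 ≤ n → n + 1 ≤ Fintype.card X → Kset X n ⊂ Kset X (n + 1)) ∧
    Kset X (Fintype.card X) = Set.univ ∧
    (∀ C : Set (Ops X), IsClone C → unarySet X ⊆ C →
      C = BurleClone X ∨ ∃ n, 1 ≤ n ∧ n ≤ Fintype.card X ∧ C = Kset X n) := by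
  classical
  have hcard : 1 < Fintype.card X := h2
  obtain ⟨a, b, hab⟩ := Fintype.exists_pair_of_one_lt_card hcard
  have hne : Nonempty X := ⟨a⟩
  have huniv : Kset X (Fintype.card X) = Set.univ := by
    refine Set.eq_univ_of_forall fun f => Or.inr ?_
    rw [← Nat.card_eq_fintype_card, ← Set.ncard_univ]
    exact Set.ncard_le_ncard (Set.subset_univ _) (Set.toFinite _)
  have hK1B : Kset X 1 ⊆ BurleClone X := fun f hf => Or.inl (K1_eu f hf)
  have hUK : ∀ n, unarySet X ⊆ Kset X n := by
    rintro n _ ⟨F, rfl⟩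
    exact Or.inl ⟨F, 0, fun x => rfl⟩
  refine ⟨fun n _ _ => K_clone n, B_clone, ?_, ?_, ?_, ?_, huniv, ?_⟩
  · apply Set.Subset.antisymm
    · exact Set.sInter_subset_of_mem ⟨K_clone 1, hUK 1⟩
    · intro f hf C hC
      exact h_eu hC.1 hC.2 f (K1_eu f hf)
  · refine ⟨hK1B, fun h => ?_⟩
    let φ : X → ZMod 2 := fun x => if x = a then 0 else 1
    let φ₀ : ZMod 2 → X := fun s => if s = 0 then a else b
    let f : (Fin (1 + 1) → X) → X := fun x => φ₀ (∑ i, φ (x i))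
    have hf : (⟨1, f⟩ : Ops X) ∈ BurleClone X := Or.inr ⟨φ₀, fun _ => φ, fun x => rfl⟩
    refine not_eu2 f a b a a a b ?_ ?_ (K1_eu _ (h hf))
    · simp [f, φ, φ₀, Fin.sum_univ_two, hab, hab.symm]
    · simp [f, φ, φ₀, Fin.sum_univ_two, hab, hab.symm]
  · refine ⟨B_sub_K2, fun h => ?_⟩
    let f : (Fin (1 + 1) → X) → X := fun x => if x 0 = a ∧ x 1 = a then a else b
    have hf : (⟨1, f⟩ : Ops X) ∈ Kset X 2 := by
      right
      have := Set.ncard_le_ncard (s := Set.range f) (t := {a, b})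
        (by rintro z ⟨x, rfl⟩; simp only [f]; split_ifs <;> simp) (Set.toFinite _)
      have h2 := Set.ncard_insert_le a {b}
      rw [Set.ncard_singleton] at h2
      simp only
      omega
    rcases h hf with h | ⟨φ₀, φ, h⟩
    · refine not_eu2 f a b a a a b ?_ ?_ h
      · simp [f, hab, hab.symm]
      · simp [f, hab, hab.symm]
    · have e1 := h ![a, a]
      have e2 := h ![a, b]
      have e3 := h ![b, a]
      have e4 := h ![b, b]
      simp [f, Fin.sum_univ_two, hab.symm] at e1 e2 e3 e4
      have key : ∀ p q r s : ZMod 2, p + r = q + r ∨ p + r = p + s ∨ p + r = q + s := by decide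
      rcases key (φ 0 a) (φ 0 b) (φ 1 a) (φ 1 b) with k | k | k
      · rw [k, ← e3] at e1; exact hab e1
      · rw [k, ← e2] at e1; exact hab e1
      · rw [k, ← e4] at e1; exact hab e1
  · intro n hn hn1
    refine ⟨K_mono (Nat.le_succ n), fun h => ?_⟩
    obtain ⟨S, hS1, -, hS⟩ := Finset.exists_subsuperset_card_eq
      (s := {a, b}) (t := (Finset.univ : Finset X)) (n := n + 1) (Finset.subset_univ _)
      (by have := Finset.card_le_two (a := a) (b := b); omega) (by simpa using hn1)
    have haS : a ∈ S := hS1 (by simp)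
    have hbS : b ∈ S := hS1 (by simp)
    let f : (Fin (1 + 1) → X) → X := fun x => if x 1 = a ∧ x 0 ∈ S then x 0 else a
    have hrange : Set.range f = (S : Set X) := by
      ext z
      constructor
      · rintro ⟨x, rfl⟩
        simp only [f]
        split_ifs with h
        · exact h.2
        · exact haS
      · intro hz
        exact ⟨![z, a], by simp [f, Finset.mem_coe.1 hz]⟩
    have hc : (Set.range f).ncard = n + 1 := by rw [hrange, Set.ncard_coe_finset, hS]
    have hf : (⟨1, f⟩ : Ops X) ∈ Kset X (n + 1) := Or.inr hc.le
    rcases h hf with h | h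
    · refine not_eu2 f a b a a b b ?_ ?_ h
      · simp [f, hab, hbS]
      · simp [f, hab.symm, hbS]
    · simp only at h
      omega
  · intro C hC hU
    have hK1 : Kset X 1 ⊆ C := fun f hf => h_eu hC hU f (K1_eu f hf)
    by_cases h1 : C ⊆ Kset X 1
    · exact Or.inr ⟨1, le_rfl, hcard.le, h1.antisymm hK1⟩
    let e : ZMod 2 → X := fun s => if s = 0 then a else b
    have he : Function.Injective e := by
      intro x y hxy
      rcases zmod2_cases x with rfl | rfl <;> rcases zmod2_cases y with rfl | rfl <;>
        simp [e, hab, hab.symm] at hxy ⊢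
    by_cases hB : C ⊆ BurleClone X
    · left
      obtain ⟨f, hf, hf1⟩ := Set.not_subset.1 h1
      exact hB.antisymm (burle_sub hC hU he (add_cl hC hU he f hf fun h => hf1 (Or.inl h)))
    right
    obtain ⟨f, hf, hfB⟩ := Set.not_subset.1 hB
    have hM := mul_cl hC hU he f hf hfB
    have hex : ∃ n, C ⊆ Kset X n := ⟨Fintype.card X, by rw [huniv]; exact Set.subset_univ _⟩
    have hs := Nat.find_spec hex
    have hle : Nat.find hex ≤ Fintype.card X :=
      Nat.find_min' hex (by rw [huniv]; exact Set.subset_univ _)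
    have hge : 2 ≤ Nat.find hex := by
      by_contra hlt
      exact h1 (hs.trans (K_mono (by omega)))
    have hmin := Nat.find_min hex (m := Nat.find hex - 1) (by omega)
    obtain ⟨g, hg, hgn⟩ := Set.not_subset.1 hmin
    refine ⟨Nat.find hex, by omega, hle, hs.antisymm ?_⟩
    refine k_sub hC hU he hM g hg (fun h => hgn (Or.inl h)) _ hge ?_
    by_contra hlt
    exact hgn (Or.inr (by omega))
end

section
/- Let the base set be ℕ. A binary operation f : ℕ² → ℕ is densely unary if and only if it is never 1-1. -/
universe u v

open Cardinal

/-- A binary operation is essentially unary iff it depends on at most one variable. -/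
def EssUnary2 (u : ℕ → ℕ → ℕ) : Prop :=
  (∃ U : ℕ → ℕ, ∀ x y, u x y = U x) ∨ (∃ U : ℕ → ℕ, ∀ x y, u x y = U y)

/-- The set `∇` of points above the diagonal. -/
def Nabla : Set (ℕ × ℕ) := {p | p.1 < p.2}

/-- A binary operation `f` is never 1-1 iff for all essentially unary `u, v`, the
operation `f(u,v)` restricted to `∇` is not injective. -/
def NeverOneOne (f : ℕ → ℕ → ℕ) : Prop :=
  ∀ u v : ℕ → ℕ → ℕ, EssUnary2 u → EssUnary2 v →
    ¬ Set.InjOn (fun p : ℕ × ℕ => f (u p.1 p.2) (v p.1 p.2)) Nabla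

/-- A binary operation `f` is densely unary iff inside every pair of infinite sets one
finds infinite sets on whose product `f` is essentially unary below and above the
diagonal. -/
def DenselyUnary (f : ℕ → ℕ → ℕ) : Prop :=
  ∀ A B : Set ℕ, A.Infinite → B.Infinite →
    ∃ A' B' : Set ℕ, A' ⊆ A ∧ B' ⊆ B ∧ A'.Infinite ∧ B'.Infinite ∧
      ((∃ U : ℕ → ℕ, ∀ x ∈ A', ∀ y ∈ B', y < x → f x y = U x) ∨
       (∃ U : ℕ → ℕ, ∀ x ∈ A', ∀ y ∈ B', y < x → f x y = U y)) ∧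
      ((∃ U : ℕ → ℕ, ∀ x ∈ A', ∀ y ∈ B', x < y → f x y = U x) ∨
       (∃ U : ℕ → ℕ, ∀ x ∈ A', ∀ y ∈ B', x < y → f x y = U y))

theorem ramsey4 {ι : Type} [Finite ι] (P : ι → ℕ → ℕ → ℕ → ℕ → Prop) :
    ∃ (φ : ℕ → ℕ) (Q : ι → Prop), StrictMono φ ∧ ∀ i a b c d, a < b → b < c → c < d →
      (P i (φ a) (φ b) (φ c) (φ d) ↔ Q i) := by
  classical
  let 𝒰 : Ultrafilter ℕ := Filter.hyperfilter ℕ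
  have hgt : ∀ x : ℕ, ∀ᶠ y in (𝒰 : Filter ℕ), x < y := fun x =>
    Nat.hyperfilter_le_atTop (Filter.eventually_gt_atTop x)
  have key : ∀ R : ℕ → Prop, ∀ᶠ y in (𝒰 : Filter ℕ), ((∀ᶠ z in (𝒰 : Filter ℕ), R z) ↔ R y) := by
    intro R
    by_cases h : ∀ᶠ z in (𝒰 : Filter ℕ), R z
    · filter_upwards [h] with y hy
      exact ⟨fun _ => hy, fun _ => h⟩
    · have h2 := Ultrafilter.eventually_not.2 h
      filter_upwards [h2] with y hy
      exact ⟨fun k => (h k).elim, fun k => (hy k).elim⟩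
  have fin : ∀ (x : ℕ) (R : ℕ → ℕ → Prop), (∀ a, ∀ᶠ y in (𝒰 : Filter ℕ), R a y) →
      ∀ᶠ y in (𝒰 : Filter ℕ), ∀ a, a ≤ x → R a y := by
    intro x R h
    exact (Filter.eventually_all_finite (Set.finite_Iic x)).2 (fun a _ => h a)
  let Q3 : ι → ℕ → ℕ → ℕ → Prop := fun i a b c => ∀ᶠ y in (𝒰 : Filter ℕ), P i a b c y
  let Q2 : ι → ℕ → ℕ → Prop := fun i a b => ∀ᶠ y in (𝒰 : Filter ℕ), Q3 i a b y
  let Q1 : ι → ℕ → Prop := fun i a => ∀ᶠ y in (𝒰 : Filter ℕ), Q2 i a y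
  let Q0 : ι → Prop := fun i => ∀ᶠ y in (𝒰 : Filter ℕ), Q1 i y
  have h0 : ∀ᶠ y in (𝒰 : Filter ℕ), ∀ i, (Q0 i ↔ Q1 i y) :=
    Filter.eventually_all.2 fun i => key _
  let r : ℕ → ℕ → Prop := fun x y => x < y ∧
    (∀ i, ∀ a, a ≤ x → (Q1 i a ↔ Q2 i a y)) ∧
    (∀ i, ∀ a, a ≤ x → ∀ b, b ≤ x → (Q2 i a b ↔ Q3 i a b y)) ∧
    (∀ i, ∀ a, a ≤ x → ∀ b, b ≤ x → ∀ c, c ≤ x → (Q3 i a b c ↔ P i a b c y))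
  have hr : ∀ x, ∀ᶠ y in (𝒰 : Filter ℕ), r x y := by
    intro x
    refine (hgt x).and (Filter.Eventually.and ?_ (Filter.Eventually.and ?_ ?_))
    · exact Filter.eventually_all.2 fun i => fin x _ fun a => key _
    · exact Filter.eventually_all.2 fun i => fin x _ fun a => fin x _ fun b => key _
    · exact Filter.eventually_all.2 fun i => fin x _ fun a => fin x _ fun b => fin x _ fun c => key _
  obtain ⟨φ, hφ, hφr⟩ := exists_seq_of_forall_finset_exists (fun y => ∀ i, (Q0 i ↔ Q1 i y)) r (by
    intro s _
    have : ∀ᶠ y in (𝒰 : Filter ℕ), ∀ x ∈ s, r x y :=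
      (Filter.eventually_all_finset s).2 fun x _ => hr x
    exact (h0.and this).exists)
  have hm : StrictMono φ := fun a b h => (hφr a b h).1
  refine ⟨φ, Q0, hm, ?_⟩
  intro i a b c d hab hbc hcd
  have e1 := hφ a i
  have e2 := (hφr a b hab).2.1 i (φ a) le_rfl
  have e3 := (hφr b c hbc).2.2.1 i (φ a) (hm hab).le (φ b) le_rfl
  have e4 := (hφr c d hcd).2.2.2 i (φ a) (hm (hab.trans hbc)).le (φ b) (hm hbc).le (φ c) le_rfl
  rw [e1, e2, e3, e4]

/-- weak canonical Ramsey theorem for pairs -/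
theorem canon (g : ℕ → ℕ → ℕ) : ∃ φ : ℕ → ℕ, StrictMono φ ∧
    ((∃ U : ℕ → ℕ, ∀ a b, a < b → g (φ a) (φ b) = U a) ∨
     (∃ U : ℕ → ℕ, ∀ a b, a < b → g (φ a) (φ b) = U b) ∨
     Set.InjOn (fun p : ℕ × ℕ => g (φ p.1) (φ p.2)) Nabla) := by
  obtain ⟨φ, Q, hm, H⟩ := ramsey4 (ι := Fin 6) (fun i a b c d =>
    match i with
    | 0 => g a b = g a c
    | 1 => g a c = g b c
    | 2 => g a b = g b c
    | 3 => g a b = g c d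
    | 4 => g a c = g b d
    | 5 => g a d = g b c)
  have H0 := H 0
  have H1 := H 1
  have H2 := H 2
  have H3 := H 3
  have H4 := H 4
  have H5 := H 5
  clear H
  simp only at H0 H1 H2 H3 H4 H5
  refine ⟨φ, hm, ?_⟩
  by_cases q0 : Q 0
  · left
    refine ⟨fun a => g (φ a) (φ (a+1)), fun a b hab => ?_⟩
    rcases Nat.lt_or_ge (a+1) b with h | h
    · exact ((H0 a (a+1) b (b+1) (by omega) h (by omega)).2 q0).symm
    · have : b = a + 1 := by omega
      rw [this]
  right
  by_cases q1 : Q 1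
  · left
    refine ⟨fun b => g (φ 0) (φ b), fun a b hab => ?_⟩
    rcases Nat.eq_zero_or_pos a with h | h
    · rw [h]
    · exact ((H1 0 a b (b+1) h hab (by omega)).2 q1).symm
  right
  have q2 : ¬ Q 2 := fun q => q0 <| by
    have h1 := (H2 0 1 2 4 (by omega) (by omega) (by omega)).2 q
    have h2 := (H2 0 1 3 4 (by omega) (by omega) (by omega)).2 q
    exact (H0 1 2 3 4 (by omega) (by omega) (by omega)).1 (h1.symm.trans h2)
  have q3 : ¬ Q 3 := fun q => q0 <| by
    have h1 := (H3 0 1 2 3 (by omega) (by omega) (by omega)).2 q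
    have h2 := (H3 0 1 2 4 (by omega) (by omega) (by omega)).2 q
    exact (H0 2 3 4 5 (by omega) (by omega) (by omega)).1 (h1.symm.trans h2)
  have q4 : ¬ Q 4 := fun q => q0 <| by
    have h1 := (H4 0 1 2 3 (by omega) (by omega) (by omega)).2 q
    have h2 := (H4 0 1 2 4 (by omega) (by omega) (by omega)).2 q
    exact (H0 1 3 4 5 (by omega) (by omega) (by omega)).1 (h1.symm.trans h2)
  have q5 : ¬ Q 5 := fun q => q0 <| by
    have h1 := (H5 0 1 2 3 (by omega) (by omega) (by omega)).2 q
    have h2 := (H5 0 1 2 4 (by omega) (by omega) (by omega)).2 q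
    exact (H0 0 3 4 5 (by omega) (by omega) (by omega)).1 (h1.trans h2.symm)
  have K : ∀ a b c d, a < b → c < d → g (φ a) (φ b) = g (φ c) (φ d) → a ≤ c → a = c ∧ b = d := by
    intro a b c d hab hcd h hac
    rcases Nat.lt_or_ge a c with h1 | h1
    · exfalso
      rcases lt_trichotomy b c with h2 | h2 | h2
      · exact q3 ((H3 a b c d hab h2 hcd).1 h)
      · subst h2
        exact q2 ((H2 a b d (d+1) hab hcd (by omega)).1 h)
      · rcases lt_trichotomy b d with h3 | h3 | h3
        · exact q4 ((H4 a c b d h1 h2 h3).1 h)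
        · subst h3
          exact q1 ((H1 a c b (b+1) h1 h2 (by omega)).1 h)
        · exact q5 ((H5 a c d b h1 hcd h3).1 h)
    · have : a = c := by omega
      subst this
      refine ⟨rfl, ?_⟩
      rcases lt_trichotomy b d with h3 | h3 | h3
      · exact (q0 ((H0 a b d (d+1) hab h3 (by omega)).1 h)).elim
      · exact h3
      · exact (q0 ((H0 a d b (b+1) hcd h3 (by omega)).1 h.symm)).elim
  rintro ⟨a, b⟩ hp ⟨c, d⟩ hq h
  simp only [Nabla, Set.mem_ofPred_eq] at hp hq h
  rcases le_total a c with h1 | h1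
  · obtain ⟨rfl, rfl⟩ := K a b c d hp hq h h1
    rfl
  · obtain ⟨rfl, rfl⟩ := K c d a b hq hp h.symm h1
    rfl

theorem interleave (A B : Set ℕ) (hA : A.Infinite) (hB : B.Infinite) :
    ∃ a b : ℕ → ℕ, (∀ n, a n ∈ A) ∧ (∀ n, b n ∈ B) ∧
      (∀ m n, m < n → a m < a n ∧ a m < b n ∧ b m < a n ∧ b m < b n) := by
  obtain ⟨f, hf, hfr⟩ := exists_seq_of_forall_finset_exists (α := ℕ × ℕ)
    (fun p => p.1 ∈ A ∧ p.2 ∈ B)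
    (fun p q => p.1 < q.1 ∧ p.1 < q.2 ∧ p.2 < q.1 ∧ p.2 < q.2) (by
      intro s _
      let N := s.sup (fun p => p.1 + p.2)
      obtain ⟨a, ha, ha'⟩ := hA.exists_gt N
      obtain ⟨b, hb, hb'⟩ := hB.exists_gt N
      refine ⟨(a, b), ⟨ha, hb⟩, fun p hp => ?_⟩
      have : p.1 + p.2 ≤ N := Finset.le_sup (f := fun p : ℕ × ℕ => p.1 + p.2) hp
      refine ⟨?_, ?_, ?_, ?_⟩ <;> simp only <;> omega)
  exact ⟨fun n => (f n).1, fun n => (f n).2, fun n => (hf n).1, fun n => (hf n).2, hfr⟩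

/-- core of the forward direction: above the diagonal in the index order -/
theorem fwd_core (g : ℕ → ℕ → ℕ) (U V : ℕ → ℕ)
    (hinj : Set.InjOn (fun p : ℕ × ℕ => g (U p.1) (V p.2)) Nabla)
    (D : ∀ A B : Set ℕ, A.Infinite → B.Infinite →
    ∃ A' B' : Set ℕ, A' ⊆ A ∧ B' ⊆ B ∧ A'.Infinite ∧ B'.Infinite ∧
      ((∃ W : ℕ → ℕ, ∀ x ∈ A', ∀ y ∈ B', x < y → g x y = W x) ∨
       (∃ W : ℕ → ℕ, ∀ x ∈ A', ∀ y ∈ B', x < y → g x y = W y))) : False := by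
  have inj : ∀ a b c d, a < b → c < d → g (U a) (V b) = g (U c) (V d) → a = c ∧ b = d := by
    intro a b c d h1 h2 h
    have := @hinj (a, b) h1 (c, d) h2 h
    simpa using this
  have hU : Function.Injective U := by
    intro x y h
    exact (inj x (x+y+1) y (x+y+1) (by omega) (by omega) (by rw [h])).1
  have hV : Function.Injective (fun n => V (n+1)) := by
    intro x y h
    have := (inj 0 (x+1) 0 (y+1) (by omega) (by omega) (by simp only at h; rw [h])).2
    omega
  obtain ⟨A', B', hA, hB, iA, iB, hW⟩ := D (Set.range U) (Set.range fun n => V (n+1))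
    (Set.infinite_range_of_injective hU) (Set.infinite_range_of_injective hV)
  have S : (U ⁻¹' A').Infinite := iA.preimage hA
  have T : ((fun n => V (n+1)) ⁻¹' B').Infinite := iB.preimage hB
  -- large elements
  have big : ∀ N M, ∃ y, N < y ∧ V y ∈ B' ∧ M < V y := by
    intro N M
    have fin : {n | V (n+1) ≤ M}.Finite := (Set.finite_Iic M).preimage hV.injOn
    obtain ⟨y, hy, hy'⟩ := (T.sdiff fin).exists_gt N
    refine ⟨y+1, by omega, hy.1, ?_⟩
    have := hy.2
    simpa using this
  obtain ⟨x, hx⟩ := S.nonempty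
  obtain ⟨x', hx', hlt⟩ := S.exists_gt x
  obtain ⟨y, h1, h2, h3⟩ := big (x + x') (U x + U x')
  obtain ⟨y', h1', h2', h3'⟩ := big y (U x + U x')
  rcases hW with ⟨W, hW⟩ | ⟨W, hW⟩
  · have := (inj x y x y' (by omega) (by omega)
      ((hW _ hx _ h2 (by omega)).trans (hW _ hx _ h2' (by omega)).symm)).2
    omega
  · have := (inj x y x' y (by omega) (by omega)
      ((hW _ hx _ h2 (by omega)).trans (hW _ hx' _ h2 (by omega)).symm)).1
    omega

theorem stmt6 : ∀ f : ℕ → ℕ → ℕ, DenselyUnary f ↔ NeverOneOne f := by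
  intro f
  constructor
  · intro D u v hu hv hinj
    rcases hu with ⟨U, hU⟩ | ⟨U, hU⟩ <;> rcases hv with ⟨V, hV⟩ | ⟨V, hV⟩ <;>
      simp only [hU, hV] at hinj
    · have := @hinj (0, 1) (by simp [Nabla]) (0, 2) (by simp [Nabla]) rfl
      simp at this
    · refine fwd_core f U V hinj fun A B hA hB => ?_
      obtain ⟨A', B', h1, h2, h3, h4, -, h5⟩ := D A B hA hB
      exact ⟨A', B', h1, h2, h3, h4, h5⟩
    · refine fwd_core (fun x y => f y x) V U hinj fun A B hA hB => ?_
      obtain ⟨A', B', h1, h2, h3, h4, h5, -⟩ := D B A hB hA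
      refine ⟨B', A', h2, h1, h4, h3, ?_⟩
      rcases h5 with ⟨W, h⟩ | ⟨W, h⟩
      · exact Or.inr ⟨W, fun x hx y hy hxy => h y hy x hx hxy⟩
      · exact Or.inl ⟨W, fun x hx y hy hxy => h y hy x hx hxy⟩
    · have := @hinj (0, 2) (by simp [Nabla]) (1, 2) (by simp [Nabla]) rfl
      simp at this
  · intro N A B hA hB
    obtain ⟨a, b, ha, hb, hab⟩ := interleave A B hA hB
    obtain ⟨φ, hφ, H1⟩ := canon (fun i j => f (a i) (b j))
    obtain ⟨ψ, hψ, H2⟩ := canon (fun i j => f (a (φ j)) (b (φ i)))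
    have hχ : StrictMono (φ ∘ ψ) := hφ.comp hψ
    have am : StrictMono a := fun m n h => (hab m n h).1
    have bm : StrictMono b := fun m n h => (hab m n h).2.2.2
    let α : ℕ → ℕ := fun n => a (φ (ψ (2*n)))
    let β : ℕ → ℕ := fun n => b (φ (ψ (2*n+1)))
    have αi : Function.Injective α := fun m n h => by
      have := hψ.injective (hφ.injective (am.injective h))
      omega
    have βi : Function.Injective β := fun m n h => by
      have := hψ.injective (hφ.injective (bm.injective h))
      omega
    have lt1 : ∀ m n, α m < β n → 2 * m < 2 * n + 1 := by
      intro m n h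
      by_contra hc
      have := (hab _ _ (hχ (show 2*n+1 < 2*m by omega))).2.2.1
      exact absurd h (not_lt.2 this.le)
    have lt2 : ∀ m n, β n < α m → 2 * n + 1 < 2 * m := by
      intro m n h
      by_contra hc
      have := (hab _ _ (hχ (show 2*m < 2*n+1 by omega))).2.1
      exact absurd h (not_lt.2 this.le)
    refine ⟨Set.range α, Set.range β, ?_, ?_, Set.infinite_range_of_injective αi,
      Set.infinite_range_of_injective βi, ?_, ?_⟩
    · rintro _ ⟨n, rfl⟩
      exact ha _
    · rintro _ ⟨n, rfl⟩
      exact hb _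
    · rcases H2 with ⟨W, h⟩ | ⟨W, h⟩ | h
      · right
        refine ⟨fun y => W (2 * Function.invFun β y + 1), ?_⟩
        rintro _ ⟨m, rfl⟩ _ ⟨n, rfl⟩ hlt
        beta_reduce
        rw [Function.leftInverse_invFun βi n]
        exact h _ _ (lt2 m n hlt)
      · left
        refine ⟨fun y => W (2 * Function.invFun α y), ?_⟩
        rintro _ ⟨m, rfl⟩ _ ⟨n, rfl⟩ hlt
        beta_reduce
        rw [Function.leftInverse_invFun αi m]
        exact h _ _ (lt2 m n hlt)
      · exact (N (fun _ y => a (φ (ψ y))) (fun x _ => b (φ (ψ x)))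
          (Or.inr ⟨_, fun _ _ => rfl⟩) (Or.inl ⟨_, fun _ _ => rfl⟩) h).elim
    · rcases H1 with ⟨W, h⟩ | ⟨W, h⟩ | h
      · left
        refine ⟨fun y => W (ψ (2 * Function.invFun α y)), ?_⟩
        rintro _ ⟨m, rfl⟩ _ ⟨n, rfl⟩ hlt
        beta_reduce
        rw [Function.leftInverse_invFun αi m]
        exact h _ _ (hψ (lt1 m n hlt))
      · right
        refine ⟨fun y => W (ψ (2 * Function.invFun β y + 1)), ?_⟩
        rintro _ ⟨m, rfl⟩ _ ⟨n, rfl⟩ hlt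
        beta_reduce
        rw [Function.leftInverse_invFun βi n]
        exact h _ _ (hψ (lt1 m n hlt))
      · exact (N (fun x _ => a (φ x)) (fun _ y => b (φ y))
          (Or.inl ⟨_, fun _ _ => rfl⟩) (Or.inr ⟨_, fun _ _ => rfl⟩) h).elim
end

section
/- Let the base set be ℕ (with its usual order, used to define T1 and T2). Then: (1) the set T2 of binary never 1-1 operations is closed under composition, i.e., whenever f, g, h ∈ T2, the operation (x,y) ↦ f(g(x,y), h(x,y)) is in T2; (2) the set of all never 1-1 operations (of all arities) is a clone and equals Pol(T2); (3) Pol(T2) is a precomplete clone; (4) every precomplete clone on ℕ containing all unary operations equals Pol(T1) or Pol(T2). -/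
universe u v

open Cardinal

/-- The set `T2` of binary never 1-1 operations on `ℕ`. -/
def T2bin : Set (ℕ → ℕ → ℕ) :=
  {f | ∀ u v : ℕ → ℕ → ℕ, EssUnary2 u → EssUnary2 v →
    ¬ Set.InjOn (fun p : ℕ × ℕ => f (u p.1 p.2) (v p.1 p.2)) Nabla}

/-- An operation of any arity is never 1-1 iff all its substitutions by essentially unary
binary operations are non-injective on `∇`. -/
def NeverOneOneOp (f : Ops ℕ) : Prop :=
  ∀ u : Fin (f.1 + 1) → (ℕ → ℕ → ℕ), (∀ i, EssUnary2 (u i)) →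
    ¬ Set.InjOn (fun p : ℕ × ℕ => f.2 fun i => u i p.1 p.2) Nabla

/-- The binary almost unary operations on `ℕ`. -/
def T1bin : Set (ℕ → ℕ → ℕ) :=
  {f | (∃ F : ℕ → ℕ, ∀ x y, f x y ≤ F x) ∨ (∃ F : ℕ → ℕ, ∀ x y, f x y ≤ F y)}

open Filter in
theorem seq_exists (Inv : Finset ℕ → Prop) (h0 : Inv ∅)
    (hs : ∀ s, Inv s → ∀ᶠ x in (hyperfilter ℕ : Filter ℕ), (∀ y ∈ s, y < x) → Inv (insert x s)) :
    ∃ e : ℕ → ℕ, StrictMono e ∧ ∀ n, ∃ s, Inv s ∧ ∀ i < n, e i ∈ s := by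
  have key : ∀ s : {s : Finset ℕ // Inv s}, ∃ x, (∀ y ∈ s.1, y < x) ∧ Inv (insert x s.1) := by
    intro s
    have h1 : ∀ᶠ x in (hyperfilter ℕ : Filter ℕ), ∀ y ∈ s.1, y < x := by
      refine (eventually_all_finset _).2 fun y _ => ?_
      apply hyperfilter_le_cofinite
      rw [Nat.cofinite_eq_atTop]
      exact eventually_gt_atTop y
    obtain ⟨x, hx1, hx2⟩ := (h1.and (hs s.1 s.2)).exists
    exact ⟨x, hx1, hx2 hx1⟩
  choose nx hnx1 hnx2 using key
  let S : ℕ → {s : Finset ℕ // Inv s} := fun n =>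
    Nat.rec ⟨∅, h0⟩ (fun _ s => ⟨insert (nx s) s.1, hnx2 s⟩) n
  have hS : ∀ n, (S (n+1)).1 = insert (nx (S n)) (S n).1 := fun n => rfl
  have hmem : ∀ n, ∀ i < n, nx (S i) ∈ (S n).1 := by
    intro n
    induction n with
    | zero => intro i hi; omega
    | succ n ih =>
      intro i hi
      rw [hS, Finset.mem_insert]
      rcases Nat.lt_succ_iff_lt_or_eq.1 hi with h | h
      · exact Or.inr (ih i h)
      · exact Or.inl (by rw [h])
  refine ⟨fun n => nx (S n), strictMono_nat_of_lt_succ fun n => ?_, fun n => ⟨(S n).1, (S n).2, hmem n⟩⟩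
  exact hnx1 _ _ (hmem (n+1) n (Nat.lt_succ_self n))

open Filter in
theorem ev_not_of_unique (P : ℕ → Prop) (h : ∀ a b, P a → P b → a = b) :
    ∀ᶠ a in (hyperfilter ℕ : Filter ℕ), ¬ P a := by
  apply hyperfilter_le_cofinite
  change ∀ᶠ a in cofinite, ¬ P a
  rw [eventually_cofinite]
  apply Set.Subsingleton.finite
  intro a ha b hb
  simp only [not_not, Set.mem_ofPred_eq] at ha hb
  exact h a b ha hb

open Filter in
theorem ev_gt (a : ℕ) : ∀ᶠ x in (hyperfilter ℕ : Filter ℕ), a < x := by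
  apply hyperfilter_le_cofinite
  rw [Nat.cofinite_eq_atTop]
  exact eventually_gt_atTop a

/-- Canonical Ramsey for pairs. -/
def EU (c : ℕ → ℕ → ℕ) (e : ℕ → ℕ) : Prop :=
  (∃ U : ℕ → ℕ, ∀ x y, x < y → c (e x) (e y) = U x) ∨
  (∃ U : ℕ → ℕ, ∀ x y, x < y → c (e x) (e y) = U y)

open Filter in
theorem canonical (c : ℕ → ℕ → ℕ) : ∃ e : ℕ → ℕ, StrictMono e ∧
    (EU c e ∨ Set.InjOn (fun p : ℕ × ℕ => c (e p.1) (e p.2)) Nabla) := by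
  by_cases hA : ∀ᶠ x in (hyperfilter ℕ : Filter ℕ), ∃ v, ∀ᶠ y in (hyperfilter ℕ : Filter ℕ), c x y = v
  · let W : ℕ → ℕ → Prop := fun x v => ∀ᶠ y in (hyperfilter ℕ : Filter ℕ), c x y = v
    have hex : ∃ V : ℕ → ℕ, ∀ x, (∃ v, W x v) → W x (V x) := by
      classical
      refine ⟨fun x => if h : ∃ v, W x v then h.choose else 0, fun x h => ?_⟩
      simp only [dif_pos h]
      exact h.choose_spec
    obtain ⟨V, hV⟩ := hex
    obtain ⟨e, he, h⟩ := seq_exists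
      (fun s => (∀ x ∈ s, W x (V x)) ∧ ∀ x ∈ s, ∀ y ∈ s, x < y → c x y = V x) (by simp) (by
        rintro s ⟨h1, h2⟩
        have h3 : ∀ᶠ w in (hyperfilter ℕ : Filter ℕ), ∀ x ∈ s, c x w = V x :=
          (eventually_all_finset _).2 h1
        filter_upwards [hA, h3] with w hw h3 hgt
        refine ⟨?_, ?_⟩
        · intro x hx
          rcases Finset.mem_insert.1 hx with rfl | hx
          · exact hV _ hw
          · exact h1 x hx
        · intro x hx y hy hxy
          rcases Finset.mem_insert.1 hx with hxw | hx <;>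
          rcases Finset.mem_insert.1 hy with hyw | hy
          · omega
          · have := hgt y hy; omega
          · rw [hyw]; exact h3 x hx
          · exact h2 x hx y hy hxy)
    refine ⟨e, he, Or.inl (Or.inl ⟨fun x => V (e x), fun x y hxy => ?_⟩)⟩
    obtain ⟨s, hs, hm⟩ := h (y+1)
    exact hs.2 _ (hm x (by omega)) _ (hm y (by omega)) (he hxy)
  have hA' : ∀ᶠ x in (hyperfilter ℕ : Filter ℕ), ∀ v, ∀ᶠ y in (hyperfilter ℕ : Filter ℕ), c x y ≠ v := by
    rw [← Ultrafilter.eventually_not] at hA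
    filter_upwards [hA] with x hx v
    exact Ultrafilter.eventually_not.2 fun h => hx ⟨v, h⟩
  by_cases hB : ∀ᶠ x in (hyperfilter ℕ : Filter ℕ), ∀ᶠ x' in (hyperfilter ℕ : Filter ℕ),
      ∀ᶠ y in (hyperfilter ℕ : Filter ℕ), c x y = c x' y
  · obtain ⟨x0, hx0⟩ := hB.exists
    obtain ⟨e, he, h⟩ := seq_exists
      (fun s => (∀ x ∈ s, ∀ᶠ y in (hyperfilter ℕ : Filter ℕ), c x0 y = c x y) ∧
        ∀ x ∈ s, ∀ y ∈ s, x < y → c x y = c x0 y) (by simp) (by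
        rintro s ⟨h1, h2⟩
        have h3 : ∀ᶠ w in (hyperfilter ℕ : Filter ℕ), ∀ x ∈ s, c x0 w = c x w :=
          (eventually_all_finset _).2 h1
        filter_upwards [hx0, h3] with w hw h3 hgt
        refine ⟨?_, ?_⟩
        · intro x hx
          rcases Finset.mem_insert.1 hx with rfl | hx
          · exact hw
          · exact h1 x hx
        · intro x hx y hy hxy
          rcases Finset.mem_insert.1 hx with hxw | hx <;>
          rcases Finset.mem_insert.1 hy with hyw | hy
          · omega
          · have := hgt y hy; omega
          · rw [hyw]; exact (h3 x hx).symm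
          · exact h2 x hx y hy hxy)
    refine ⟨e, he, Or.inl (Or.inr ⟨fun y => c x0 (e y), fun x y hxy => ?_⟩)⟩
    obtain ⟨s, hs, hm⟩ := h (y+1)
    exact hs.2 _ (hm x (by omega)) _ (hm y (by omega)) (he hxy)
  have hB' : ∀ᶠ x in (hyperfilter ℕ : Filter ℕ), ∀ᶠ x' in (hyperfilter ℕ : Filter ℕ),
      ∀ᶠ y in (hyperfilter ℕ : Filter ℕ), c x y ≠ c x' y := by
    rw [← Ultrafilter.eventually_not] at hB
    filter_upwards [hB] with x hx
    rw [← Ultrafilter.eventually_not] at hx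
    filter_upwards [hx] with x' hx'
    exact Ultrafilter.eventually_not.2 hx'
  obtain ⟨e, he, h⟩ := seq_exists
      (fun s => (∀ x ∈ s, ∀ v, ∀ᶠ y in (hyperfilter ℕ : Filter ℕ), c x y ≠ v) ∧
        (∀ x ∈ s, ∀ᶠ x' in (hyperfilter ℕ : Filter ℕ),
          ∀ᶠ y in (hyperfilter ℕ : Filter ℕ), c x y ≠ c x' y) ∧
        (∀ x ∈ s, ∀ x' ∈ s, x < x' → ∀ᶠ y in (hyperfilter ℕ : Filter ℕ), c x y ≠ c x' y) ∧
        ∀ a ∈ s, ∀ b ∈ s, ∀ a' ∈ s, ∀ b' ∈ s, a < b → a' < b' → c a b = c a' b' →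
          a = a' ∧ b = b') (by simp) (by
        rintro s ⟨h1, h2, h3, h4⟩
        have g1 : ∀ᶠ w in (hyperfilter ℕ : Filter ℕ), ∀ x ∈ s, ∀ a ∈ s, ∀ b ∈ s, c x w ≠ c a b :=
          (eventually_all_finset _).2 fun x hx => (eventually_all_finset _).2 fun a _ =>
            (eventually_all_finset _).2 fun b _ => h1 x hx _
        have g2 : ∀ᶠ w in (hyperfilter ℕ : Filter ℕ), ∀ x ∈ s,
          ∀ᶠ y in (hyperfilter ℕ : Filter ℕ), c x y ≠ c w y :=
          (eventually_all_finset _).2 h2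
        have g3 : ∀ᶠ w in (hyperfilter ℕ : Filter ℕ), ∀ x ∈ s, ∀ x' ∈ s, x < x' → c x w ≠ c x' w :=
          (eventually_all_finset _).2 fun x hx => (eventually_all_finset _).2 fun a ha => by
            by_cases hxa : x < a
            · filter_upwards [h3 x hx a ha hxa] with w hw _ using hw
            · exact Eventually.of_forall fun w hw => absurd hw hxa
        filter_upwards [hA', hB', g1, g2, g3] with w k1 k2 g1 g2 g3 hgt
        refine ⟨?_, ?_, ?_, ?_⟩
        · intro x hx
          rcases Finset.mem_insert.1 hx with rfl | hx
          · exact k1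
          · exact h1 x hx
        · intro x hx
          rcases Finset.mem_insert.1 hx with rfl | hx
          · exact k2
          · exact h2 x hx
        · intro x hx y hy hxy
          rcases Finset.mem_insert.1 hx with hxw | hx <;>
          rcases Finset.mem_insert.1 hy with hyw | hy
          · omega
          · have := hgt y hy; omega
          · rw [hyw]; exact g2 x hx
          · exact h3 x hx y hy hxy
        · intro a ha b hb a' ha' b' hb' hab hab' heq
          have ha2 : a ∈ s := by
            rcases Finset.mem_insert.1 ha with rfl | ha
            · rcases Finset.mem_insert.1 hb with rfl | hb
              · omega
              · have := hgt b hb; omega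
            · exact ha
          have ha2' : a' ∈ s := by
            rcases Finset.mem_insert.1 ha' with rfl | ha
            · rcases Finset.mem_insert.1 hb' with rfl | hb
              · omega
              · have := hgt b' hb; omega
            · exact ha
          rcases Finset.mem_insert.1 hb with hbw | hb <;>
          rcases Finset.mem_insert.1 hb' with hbw' | hb'
          · rw [hbw, hbw'] at heq
            refine ⟨?_, by omega⟩
            rcases lt_trichotomy a a' with h | h | h
            · exact absurd heq (g3 a ha2 a' ha2' h)
            · exact h
            · exact absurd heq.symm (g3 a' ha2' a ha2 h)
          · rw [hbw] at heq; exact absurd heq (g1 a ha2 a' ha2' b' hb')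
          · rw [hbw'] at heq; exact absurd heq.symm (g1 a' ha2' a ha2 b hb)
          · exact h4 a ha2 b hb a' ha2' b' hb' hab hab' heq)
  refine ⟨e, he, Or.inr ?_⟩
  rintro ⟨a, b⟩ hab ⟨a', b'⟩ hab' heq
  obtain ⟨s, hs, hm⟩ := h (a+b+a'+b'+1)
  obtain ⟨h1, h2⟩ := hs.2.2.2 _ (hm a (by omega)) _ (hm b (by omega)) _ (hm a' (by omega)) _ (hm b' (by omega))
    (he hab) (he hab') heq
  rw [he.injective h1, he.injective h2]

theorem canonical_many {ι : Type} (G : ι → ℕ → ℕ → ℕ)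
    (hG : ∀ i, ∀ e : ℕ → ℕ, StrictMono e →
      ¬ Set.InjOn (fun p : ℕ × ℕ => G i (e p.1) (e p.2)) Nabla) (S : Finset ι) :
    ∃ e : ℕ → ℕ, StrictMono e ∧ ∀ i ∈ S, EU (G i) e := by
  classical
  induction S using Finset.induction_on with
  | empty => exact ⟨id, strictMono_id, by simp⟩
  | insert i S _ ih =>
    obtain ⟨e, he, h⟩ := ih
    obtain ⟨e', he', h'⟩ := canonical (fun x y => G i (e x) (e y))
    refine ⟨e ∘ e', he.comp he', ?_⟩
    intro j hj
    rcases Finset.mem_insert.1 hj with rfl | hj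
    · rcases h' with h' | h'
      · exact h'
      · exact absurd h' (hG j _ (he.comp he'))
    · rcases h j hj with ⟨U, hU⟩ | ⟨U, hU⟩
      · exact Or.inl ⟨U ∘ e', fun x y hxy => hU _ _ (he' hxy)⟩
      · exact Or.inr ⟨U ∘ e', fun x y hxy => hU _ _ (he' hxy)⟩

theorem EssUnary2.comp_mono {u : ℕ → ℕ → ℕ} (h : EssUnary2 u) (e : ℕ → ℕ) :
    EssUnary2 (fun x y => u (e x) (e y)) := by
  rcases h with ⟨U, hU⟩ | ⟨U, hU⟩
  · exact Or.inl ⟨U ∘ e, fun x y => hU _ _⟩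
  · exact Or.inr ⟨U ∘ e, fun x y => hU _ _⟩

theorem EssUnary2.not_inj {u : ℕ → ℕ → ℕ} (h : EssUnary2 u) :
    ¬ Set.InjOn (fun p : ℕ × ℕ => u p.1 p.2) Nabla := by
  intro hi
  rcases h with ⟨U, hU⟩ | ⟨U, hU⟩
  · have := @hi (0, 1) (by simp [Nabla]) (0, 2) (by simp [Nabla]) (by simp [hU])
    simp at this
  · have := @hi (0, 2) (by simp [Nabla]) (1, 2) (by simp [Nabla]) (by simp [hU])
    simp at this

theorem never_clone : IsClone {f : Ops ℕ | NeverOneOneOp f} := by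
  refine ⟨fun n k u hu => (hu k).not_inj, ?_⟩
  intro n m f hf g hg u hu hinj
  obtain ⟨e, he, h⟩ := canonical_many (fun i x y => g i (fun j => u j x y)) (by
    intro i e he
    exact hg i (fun j x y => u j (e x) (e y)) (fun j => (hu j).comp_mono e)) Finset.univ
  have h2 : ∀ i, ∃ w : ℕ → ℕ → ℕ, EssUnary2 w ∧ ∀ x y, x < y →
      g i (fun j => u j (e x) (e y)) = w x y := by
    intro i
    rcases h i (Finset.mem_univ i) with ⟨U, hU⟩ | ⟨U, hU⟩
    · exact ⟨fun x y => U x, Or.inl ⟨U, fun _ _ => rfl⟩, hU⟩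
    · exact ⟨fun x y => U y, Or.inr ⟨U, fun _ _ => rfl⟩, hU⟩
  choose w hw1 hw2 using h2
  apply hf w hw1
  rintro ⟨a, b⟩ hab ⟨a', b'⟩ hab' heq
  have hab1 : a < b := hab
  have hab2 : a' < b' := hab'
  have := @hinj (e a, e b) (he hab1) (e a', e b') (he hab2) (by
    simp only at heq ⊢
    simp only [hw2 _ _ _ hab1, hw2 _ _ _ hab2]
    exact heq)
  simp only [Prod.mk.injEq] at this
  rw [he.injective this.1, he.injective this.2]

/-- Binary function as an op. -/
def bin (f : ℕ → ℕ → ℕ) : Ops ℕ := ⟨1, fun x => f (x 0) (x 1)⟩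

theorem never_bin (f : ℕ → ℕ → ℕ) : NeverOneOneOp (bin f) ↔ f ∈ T2bin := by
  constructor
  · intro h u v hu hv
    exact h ![u, v] (by intro i; change Fin 2 at i; fin_cases i <;> assumption)
  · intro h u hu
    exact h (u 0) (u 1) (hu 0) (hu 1)

theorem cl_comp1 {C : Set (Ops ℕ)} (hC : IsClone C) {F : ℕ → ℕ} (hF : unaryOp F ∈ C)
    {m : ℕ} {g : (Fin (m+1) → ℕ) → ℕ} (hg : (⟨m, g⟩ : Ops ℕ) ∈ C) :
    (⟨m, fun x => F (g x)⟩ : Ops ℕ) ∈ C :=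
  hC.2 0 m _ hF (fun _ => g) (fun _ => hg)

theorem cl_comp2 {C : Set (Ops ℕ)} (hC : IsClone C) {f : ℕ → ℕ → ℕ} (hf : bin f ∈ C)
    {m : ℕ} {g h : (Fin (m+1) → ℕ) → ℕ} (hg : (⟨m, g⟩ : Ops ℕ) ∈ C) (hh : (⟨m, h⟩ : Ops ℕ) ∈ C) :
    (⟨m, fun x => f (g x) (h x)⟩ : Ops ℕ) ∈ C :=
  hC.2 1 m _ hf ![g, h] (by intro i; fin_cases i <;> assumption)

theorem bin_comp1 {C : Set (Ops ℕ)} (hC : IsClone C) {F : ℕ → ℕ} (hF : unaryOp F ∈ C)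
    {g : ℕ → ℕ → ℕ} (hg : bin g ∈ C) : bin (fun x y => F (g x y)) ∈ C :=
  cl_comp1 hC hF hg

theorem bin_comp2 {C : Set (Ops ℕ)} (hC : IsClone C) {f : ℕ → ℕ → ℕ} (hf : bin f ∈ C)
    {g h : ℕ → ℕ → ℕ} (hg : bin g ∈ C) (hh : bin h ∈ C) :
    bin (fun x y => f (g x y) (h x y)) ∈ C :=
  cl_comp2 hC hf hg hh

theorem bin_fst {C : Set (Ops ℕ)} (hC : IsClone C) : bin (fun x _ => x) ∈ C := hC.1 1 0
theorem bin_snd {C : Set (Ops ℕ)} (hC : IsClone C) : bin (fun _ y => y) ∈ C := hC.1 1 1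

theorem bin_comp_n {C : Set (Ops ℕ)} (hC : IsClone C) (f : Ops ℕ) (hf : f ∈ C)
    (g : Fin (f.1+1) → ℕ → ℕ → ℕ) (hg : ∀ i, bin (g i) ∈ C) :
    bin (fun x y => f.2 fun i => g i x y) ∈ C :=
  hC.2 f.1 1 f.2 hf (fun i x => g i (x 0) (x 1)) hg

theorem clone_univ {C : Set (Ops ℕ)} (hC : IsClone C) (hU : ∀ F, unaryOp F ∈ C)
    (p : ℕ → ℕ → ℕ) (hp : bin p ∈ C)
    (hinj : ∀ x y x' y', p x y = p x' y' → x = x' ∧ y = y') : C = Set.univ := by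
  rw [Set.eq_univ_iff_forall]
  rintro ⟨m, f⟩
  have key : ∀ k : ℕ, ∃ q : (Fin (m+1) → ℕ) → ℕ, (⟨m, q⟩ : Ops ℕ) ∈ C ∧
      ∀ x x', q x = q x' → ∀ i : Fin (m+1), i.1 < k → x i = x' i := by
    intro k
    induction k with
    | zero => exact ⟨fun x => x 0, hC.1 m 0, fun _ _ _ i hi => by omega⟩
    | succ k ih =>
      obtain ⟨q, hq, h⟩ := ih
      by_cases hk : k < m + 1
      · refine ⟨fun x => p (q x) (x ⟨k, hk⟩), cl_comp2 hC hp hq (hC.1 m _), ?_⟩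
        intro x x' heq i hi
        obtain ⟨h1, h2⟩ := hinj _ _ _ _ heq
        rcases Nat.lt_succ_iff_lt_or_eq.1 hi with h3 | h3
        · exact h _ _ h1 i h3
        · have : i = ⟨k, hk⟩ := Fin.ext h3
          rw [this]; exact h2
      · exact ⟨q, hq, fun x x' heq i hi => h x x' heq i (by omega)⟩
  obtain ⟨q, hq, h⟩ := key (m+1)
  have hqi : Function.Injective q := fun x x' heq => funext fun i => h x x' heq i i.2
  have := cl_comp1 hC (hU (fun v => f (Function.invFun q v))) hq
  simpa only [Function.leftInverse_invFun hqi _] using this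

theorem ess_T2 {u : ℕ → ℕ → ℕ} (hu : EssUnary2 u) : u ∈ T2bin := by
  intro a b ha hb
  rcases hu with ⟨U, hU⟩ | ⟨U, hU⟩
  · have : EssUnary2 (fun x y => u (a x y) (b x y)) := by
      rcases ha with ⟨A, hA⟩ | ⟨A, hA⟩
      · exact Or.inl ⟨U ∘ A, fun x y => by simp [hU, hA]⟩
      · exact Or.inr ⟨U ∘ A, fun x y => by simp [hU, hA]⟩
    exact this.not_inj
  · have : EssUnary2 (fun x y => u (a x y) (b x y)) := by
      rcases hb with ⟨A, hA⟩ | ⟨A, hA⟩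
      · exact Or.inl ⟨U ∘ A, fun x y => by simp [hU, hA]⟩
      · exact Or.inr ⟨U ∘ A, fun x y => by simp [hU, hA]⟩
    exact this.not_inj

theorem never_eq_pol : {f : Ops ℕ | NeverOneOneOp f} = Pol2 T2bin := by
  ext f
  constructor
  · intro hf g hg
    rw [← never_bin]
    exact bin_comp_n never_clone f hf g (fun i => (never_bin _).2 (hg i))
  · intro hf u hu
    have := hf u (fun i => ess_T2 (hu i))
    exact this (fun x _ => x) (fun _ y => y) (Or.inl ⟨id, fun _ _ => rfl⟩) (Or.inr ⟨id, fun _ _ => rfl⟩)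

theorem cloneGen_clone {X : Type*} (F : Set (Ops X)) : IsClone (cloneGen F) := by
  constructor
  · intro n k C hC
    exact hC.1.1 n k
  · intro n m f hf g hg C hC
    exact hC.1.2 n m f (hf C hC) g (fun i => hg i C hC)

theorem subset_cloneGen {X : Type*} (F : Set (Ops X)) : F ⊆ cloneGen F :=
  fun _ hf _ hC => hC.2 hf

theorem pol2_clone {X : Type*} (H : Set (X → X → X)) : IsClone (Pol2 H) := by
  constructor
  · intro n k g hg
    exact hg k
  · intro n m f hf g hg h hh
    exact hf (fun i x y => g i (fun j => h j x y)) (fun i => hg i h hh)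

theorem no_inj_bdd (f : ℕ → ℕ → ℕ) (B : ℕ) (h : ∀ y, f 0 (y+1) ≤ B) :
    ¬ Set.InjOn (fun p : ℕ × ℕ => f p.1 p.2) Nabla := by
  intro hi
  have h1 : Function.Injective (fun y => f 0 (y+1)) := by
    intro y y' heq
    have := @hi (0, y+1) (by simp [Nabla]) (0, y'+1) (by simp [Nabla]) heq
    simpa using this
  obtain ⟨_, ⟨y, rfl⟩, hy⟩ := (Set.infinite_range_of_injective h1).exists_gt B
  exact absurd (h y) (by simpa using hy)

theorem max_no (U V : ℕ → ℕ) :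
    ¬ Set.InjOn (fun p : ℕ × ℕ => max (U p.1) (V p.2)) Nabla := by
  intro hi
  have h1 : Function.Injective (fun y => max (U 0) (V (y+2))) := by
    intro y y' heq
    have := @hi (0, y+2) (by simp [Nabla]) (0, y'+2) (by simp [Nabla]) heq
    simpa using this
  obtain ⟨_, ⟨y, rfl⟩, hy⟩ := (Set.infinite_range_of_injective h1).exists_gt (max (U 0) (U 1))
  have := @hi (0, y+2) (by simp [Nabla]) (1, y+2) (by simp [Nabla]) (by simp only at hy ⊢; omega)
  simp at this

theorem T2_max : (fun x y => max x y) ∈ T2bin := by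
  rintro u v (⟨U, hU⟩ | ⟨U, hU⟩) (⟨V, hV⟩ | ⟨V, hV⟩)
  · exact EssUnary2.not_inj (u := fun x y => max (u x y) (v x y))
      (Or.inl ⟨fun x => max (U x) (V x), fun x y => by simp only [hU, hV]⟩)
  · simp only [hU, hV]; exact max_no U V
  · simp only [hU, hV, max_comm (U _)]; exact max_no V U
  · exact EssUnary2.not_inj (u := fun x y => max (u x y) (v x y))
      (Or.inr ⟨fun x => max (U x) (V x), fun x y => by simp only [hU, hV]⟩)

theorem T2_min : (fun x y => min x y) ∈ T2bin := by
  rintro u v (⟨U, hU⟩ | ⟨U, hU⟩) (⟨V, hV⟩ | ⟨V, hV⟩)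
  · exact EssUnary2.not_inj (u := fun x y => min (u x y) (v x y))
      (Or.inl ⟨fun x => min (U x) (V x), fun x y => by simp only [hU, hV]⟩)
  · exact no_inj_bdd (fun x y => min (u x y) (v x y)) (U 0) (fun y => by simp [hU])
  · exact no_inj_bdd (fun x y => min (u x y) (v x y)) (V 0) (fun y => by simp [hV])
  · exact EssUnary2.not_inj (u := fun x y => min (u x y) (v x y))
      (Or.inr ⟨fun x => min (U x) (V x), fun x y => by simp only [hU, hV]⟩)

theorem T2_lt : (fun x y => if x < y then 1 else 0) ∈ T2bin := by
  intro u v _ _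
  exact no_inj_bdd (fun x y => if u x y < v x y then 1 else 0) 1 (fun y => by split_ifs <;> simp)

theorem T2_unary (F : ℕ → ℕ) : unaryOp F ∈ Pol2 T2bin := by
  rw [← never_eq_pol]
  intro u hu
  refine EssUnary2.not_inj (u := fun x y => F (u 0 x y)) ?_
  rcases hu 0 with ⟨A, hA⟩ | ⟨A, hA⟩
  · exact Or.inl ⟨F ∘ A, fun x y => by simp [hA]⟩
  · exact Or.inr ⟨F ∘ A, fun x y => by simp [hA]⟩

theorem bin_ess {C : Set (Ops ℕ)} (hC : IsClone C) (hU : ∀ F, unaryOp F ∈ C)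
    {u : ℕ → ℕ → ℕ} (hu : EssUnary2 u) : bin u ∈ C := by
  rcases hu with ⟨A, hA⟩ | ⟨A, hA⟩
  · have : u = fun x y => A x := by funext x y; exact hA x y
    rw [this]; exact bin_comp1 hC (hU A) (bin_fst hC)
  · have : u = fun x y => A y := by funext x y; exact hA x y
    rw [this]; exact bin_comp1 hC (hU A) (bin_snd hC)

theorem exists_inj {C : Set (Ops ℕ)} (hC : IsClone C) (hU : ∀ F, unaryOp F ∈ C)
    (f : Ops ℕ) (hf : f ∈ C) (hf2 : f ∉ Pol2 T2bin) :
    ∃ g : ℕ → ℕ → ℕ, bin g ∈ C ∧ ∀ x y x' y', x < y → x' < y' → g x y = g x' y' →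
      x = x' ∧ y = y' := by
  rw [← never_eq_pol] at hf2
  simp only [Set.mem_ofPred_eq, NeverOneOneOp] at hf2
  push Not at hf2
  obtain ⟨u, hu, hi⟩ := hf2
  refine ⟨_, bin_comp_n hC f hf u (fun i => bin_ess hC hU (hu i)), ?_⟩
  intro x y x' y' h h' heq
  have := @hi (x, y) h (x', y') h' heq
  simpa using this

theorem pol_T2_ne : Pol2 T2bin ≠ Set.univ := by
  intro h
  have : bin Nat.pair ∈ Pol2 T2bin := by rw [h]; trivial
  rw [← never_eq_pol] at this
  have := (never_bin _).1 this
  refine this (fun x _ => x) (fun _ y => y) (Or.inl ⟨id, fun _ _ => rfl⟩) (Or.inr ⟨id, fun _ _ => rfl⟩) ?_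
  rintro ⟨a, b⟩ _ ⟨a', b'⟩ _ heq
  simpa using Nat.pair_eq_pair.1 heq

theorem pol_T2_precomplete : IsPrecompleteClone (Pol2 T2bin) := by
  refine ⟨pol2_clone _, pol_T2_ne, ?_⟩
  intro f hf
  set C := cloneGen (insert f (Pol2 T2bin)) with hCdef
  have hC : IsClone C := cloneGen_clone _
  have hsub : Pol2 T2bin ⊆ C := fun t ht => subset_cloneGen _ (Set.mem_insert_of_mem _ ht)
  have hU : ∀ F, unaryOp F ∈ C := fun F => hsub (T2_unary F)
  have hT : ∀ t, t ∈ T2bin → bin t ∈ C := fun t ht => hsub (by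
    rw [← never_eq_pol]; exact (never_bin t).2 ht)
  obtain ⟨g, hg, hi⟩ := exists_inj hC hU f (subset_cloneGen _ (Set.mem_insert _ _)) hf
  have h1 : bin (fun x y => g (min x y) (max x y + 1)) ∈ C :=
    bin_comp2 hC hg (hT _ T2_min) (bin_comp1 hC (hU (fun v => v + 1)) (hT _ T2_max))
  have h2 : bin (fun x y => g (if x < y then 1 else 0) (g (min x y) (max x y + 1) + 2)) ∈ C :=
    bin_comp2 hC hg (hT _ T2_lt) (bin_comp1 hC (hU (fun v => v + 2)) h1)
  refine clone_univ hC hU _ h2 ?_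
  intro x y x' y' heq
  obtain ⟨k1, k2⟩ := hi _ _ _ _ (by split_ifs <;> omega) (by split_ifs <;> omega) heq
  obtain ⟨k3, k4⟩ := hi _ _ _ _ (by omega) (by omega) (Nat.add_right_cancel k2)
  split_ifs at k1 <;> omega

open Filter in
/-- Dichotomy. -/
theorem dichotomy (g : ℕ → ℕ → ℕ) (hi : ∀ x y x' y', x < y → x' < y' → g x y = g x' y' →
      x = x' ∧ y = y') : ∃ e : ℕ → ℕ, StrictMono e ∧
    ((∀ x y, x < y → g (e y) (e x) = g (e x) (e y)) ∨
     (∀ x y a b, y < x → a < b → g (e x) (e y) ≠ g (e a) (e b))) := by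
  by_cases hS : ∀ᶠ y in (hyperfilter ℕ : Filter ℕ), ∀ᶠ x in (hyperfilter ℕ : Filter ℕ), g x y = g y x
  · obtain ⟨e, he, h⟩ := seq_exists
      (fun s => (∀ y ∈ s, ∀ᶠ x in (hyperfilter ℕ : Filter ℕ), g x y = g y x) ∧
        ∀ x ∈ s, ∀ y ∈ s, x < y → g y x = g x y) (by simp) (by
        rintro s ⟨h1, h2⟩
        have h3 : ∀ᶠ w in (hyperfilter ℕ : Filter ℕ), ∀ x ∈ s, g w x = g x w :=
          (eventually_all_finset _).2 h1
        filter_upwards [hS, h3] with w hw h3 hgt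
        refine ⟨?_, ?_⟩
        · intro x hx
          rcases Finset.mem_insert.1 hx with rfl | hx
          · exact hw
          · exact h1 x hx
        · intro x hx y hy hxy
          rcases Finset.mem_insert.1 hx with hxw | hx <;>
          rcases Finset.mem_insert.1 hy with hyw | hy
          · omega
          · have := hgt y hy; omega
          · rw [hyw]; exact h3 x hx
          · exact h2 x hx y hy hxy)
    refine ⟨e, he, Or.inl fun x y hxy => ?_⟩
    obtain ⟨s, hs, hm⟩ := h (y+1)
    exact hs.2 _ (hm x (by omega)) _ (hm y (by omega)) (he hxy)
  have hS' : ∀ᶠ y in (hyperfilter ℕ : Filter ℕ), ∀ᶠ x in (hyperfilter ℕ : Filter ℕ), g x y ≠ g y x := by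
    rw [← Ultrafilter.eventually_not] at hS
    filter_upwards [hS] with y hy
    exact Ultrafilter.eventually_not.2 hy
  -- two-step negation
  have neg2 : ∀ Q : ℕ → ℕ → Prop, (¬ ∀ᶠ y in (hyperfilter ℕ : Filter ℕ),
      ∀ᶠ x in (hyperfilter ℕ : Filter ℕ), Q y x) → ∀ᶠ y in (hyperfilter ℕ : Filter ℕ),
      ∀ᶠ x in (hyperfilter ℕ : Filter ℕ), ¬ Q y x := by
    intro Q hQ
    rw [← Ultrafilter.eventually_not] at hQ
    filter_upwards [hQ] with y hy
    exact Ultrafilter.eventually_not.2 hy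
  have A1 : ∀ᶠ a in (hyperfilter ℕ : Filter ℕ), ∀ b, a < b → ∀ᶠ y in (hyperfilter ℕ : Filter ℕ),
      ∀ᶠ x in (hyperfilter ℕ : Filter ℕ), g x y ≠ g a b := by
    have := ev_not_of_unique (fun a => ∃ b, a < b ∧ ∀ᶠ y in (hyperfilter ℕ : Filter ℕ),
      ∀ᶠ x in (hyperfilter ℕ : Filter ℕ), g x y = g a b) (by
        rintro a a' ⟨b, hab, h⟩ ⟨b', hab', h'⟩
        obtain ⟨y, h1, h2⟩ := (h.and h').exists
        obtain ⟨x, h1, h2⟩ := (h1.and h2).exists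
        exact (hi _ _ _ _ hab hab' (h1.symm.trans h2)).1)
    filter_upwards [this] with a ha b hab
    exact neg2 (fun y x => g x y = g a b) fun h => ha ⟨b, hab, h⟩
  have A2 : ∀ᶠ a in (hyperfilter ℕ : Filter ℕ), ∀ᶠ y in (hyperfilter ℕ : Filter ℕ),
      ∀ᶠ x in (hyperfilter ℕ : Filter ℕ), g x y ≠ g a y := by
    have := ev_not_of_unique (fun a => ∀ᶠ y in (hyperfilter ℕ : Filter ℕ),
      ∀ᶠ x in (hyperfilter ℕ : Filter ℕ), g x y = g a y) (by
        intro a a' h h'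
        obtain ⟨y, ⟨h1, h2⟩, h3, h4⟩ := ((h.and h').and ((ev_gt a).and (ev_gt a'))).exists
        obtain ⟨x, h1, h2⟩ := (h1.and h2).exists
        exact (hi _ _ _ _ h3 h4 (h1.symm.trans h2)).1)
    filter_upwards [this] with a ha
    exact neg2 (fun y x => g x y = g a y) ha
  have A3 : ∀ᶠ a in (hyperfilter ℕ : Filter ℕ), ∀ᶠ y in (hyperfilter ℕ : Filter ℕ),
      ∀ᶠ x in (hyperfilter ℕ : Filter ℕ), g x y ≠ g a x := by
    have := ev_not_of_unique (fun a => ∀ᶠ y in (hyperfilter ℕ : Filter ℕ),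
      ∀ᶠ x in (hyperfilter ℕ : Filter ℕ), g x y = g a x) (by
        intro a a' h h'
        obtain ⟨y, h1, h2⟩ := (h.and h').exists
        obtain ⟨x, ⟨h1, h2⟩, h3, h4⟩ := ((h1.and h2).and ((ev_gt a).and (ev_gt a'))).exists
        exact (hi _ _ _ _ h3 h4 (h1.symm.trans h2)).1)
    filter_upwards [this] with a ha
    exact neg2 (fun y x => g x y = g a x) ha
  have A4 : ∀ y, ∀ᶠ a in (hyperfilter ℕ : Filter ℕ),
      ∀ᶠ x in (hyperfilter ℕ : Filter ℕ), g x y ≠ g a x := by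
    intro y
    have := ev_not_of_unique (fun a =>
      ∀ᶠ x in (hyperfilter ℕ : Filter ℕ), g x y = g a x) (by
        intro a a' h h'
        obtain ⟨x, ⟨h1, h2⟩, h3, h4⟩ := ((h.and h').and ((ev_gt a).and (ev_gt a'))).exists
        exact (hi _ _ _ _ h3 h4 (h1.symm.trans h2)).1)
    filter_upwards [this] with a ha
    exact Ultrafilter.eventually_not.2 ha
  have A5 : ∀ y a, ∀ᶠ b in (hyperfilter ℕ : Filter ℕ),
      ∀ᶠ x in (hyperfilter ℕ : Filter ℕ), g x y ≠ g a b := by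
    intro y a
    have := ev_not_of_unique (fun b => a < b ∧
      ∀ᶠ x in (hyperfilter ℕ : Filter ℕ), g x y = g a b) (by
        rintro b b' ⟨hb, h⟩ ⟨hb', h'⟩
        obtain ⟨x, h1, h2⟩ := (h.and h').exists
        exact (hi _ _ _ _ hb hb' (h1.symm.trans h2)).2)
    filter_upwards [this, ev_gt a] with b hb hab
    exact Ultrafilter.eventually_not.2 fun h => hb ⟨hab, h⟩
  have A6 : ∀ v a, ∀ᶠ b in (hyperfilter ℕ : Filter ℕ), v ≠ g a b := by
    intro v a
    have := ev_not_of_unique (fun b => a < b ∧ v = g a b) (by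
        rintro b b' ⟨hb, h⟩ ⟨hb', h'⟩
        exact (hi _ _ _ _ hb hb' (h.symm.trans h')).2)
    filter_upwards [this, ev_gt a] with b hb hab h
    exact hb ⟨hab, h⟩
  obtain ⟨e, he, h⟩ := seq_exists
      (fun s => (∀ y ∈ s, ∀ x ∈ s, ∀ a ∈ s, ∀ b ∈ s, y < x → a < b → g x y ≠ g a b) ∧
        (∀ y ∈ s, ∀ a ∈ s, ∀ᶠ x in (hyperfilter ℕ : Filter ℕ), g x y ≠ g a x) ∧
        (∀ y ∈ s, ∀ a ∈ s, ∀ b ∈ s, a < b → ∀ᶠ x in (hyperfilter ℕ : Filter ℕ), g x y ≠ g a b) ∧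
        (∀ a ∈ s, ∀ b, a < b → ∀ᶠ y in (hyperfilter ℕ : Filter ℕ),
          ∀ᶠ x in (hyperfilter ℕ : Filter ℕ), g x y ≠ g a b) ∧
        (∀ a ∈ s, ∀ᶠ y in (hyperfilter ℕ : Filter ℕ),
          ∀ᶠ x in (hyperfilter ℕ : Filter ℕ), g x y ≠ g a y) ∧
        (∀ a ∈ s, ∀ᶠ y in (hyperfilter ℕ : Filter ℕ),
          ∀ᶠ x in (hyperfilter ℕ : Filter ℕ), g x y ≠ g a x)) (by simp) (by
        rintro s ⟨h1, h2, h3, h4, h5, h6⟩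
        have B2 : ∀ᶠ w in (hyperfilter ℕ : Filter ℕ), ∀ y ∈ s, ∀ a ∈ s, g w y ≠ g a w :=
          (eventually_all_finset _).2 fun y hy => (eventually_all_finset _).2 fun a ha => h2 y hy a ha
        have B3 : ∀ᶠ w in (hyperfilter ℕ : Filter ℕ), ∀ y ∈ s, ∀ a ∈ s, ∀ b ∈ s, a < b →
            g w y ≠ g a b :=
          (eventually_all_finset _).2 fun y hy => (eventually_all_finset _).2 fun a ha =>
            (eventually_all_finset _).2 fun b hb => by
            by_cases hab : a < b
            · filter_upwards [h3 y hy a ha b hb hab] with w hw _ using hw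
            · exact Eventually.of_forall fun w hw => absurd hw hab
        have B4 : ∀ᶠ w in (hyperfilter ℕ : Filter ℕ), ∀ a ∈ s, ∀ b ∈ s, a < b →
            ∀ᶠ x in (hyperfilter ℕ : Filter ℕ), g x w ≠ g a b :=
          (eventually_all_finset _).2 fun a ha =>
            (eventually_all_finset _).2 fun b hb => by
            by_cases hab : a < b
            · filter_upwards [h4 a ha b hab] with w hw _ using hw
            · exact Eventually.of_forall fun w hw => absurd hw hab
        have B5 := (eventually_all_finset s).2 h5
        have B6 := (eventually_all_finset s).2 h6
        have C4 : ∀ᶠ w in (hyperfilter ℕ : Filter ℕ), ∀ y ∈ s,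
            ∀ᶠ x in (hyperfilter ℕ : Filter ℕ), g x y ≠ g w x :=
          (eventually_all_finset _).2 fun y _ => A4 y
        have C5 : ∀ᶠ w in (hyperfilter ℕ : Filter ℕ), ∀ y ∈ s, ∀ a ∈ s,
            ∀ᶠ x in (hyperfilter ℕ : Filter ℕ), g x y ≠ g a w :=
          (eventually_all_finset _).2 fun y _ => (eventually_all_finset _).2 fun a _ => A5 y a
        have C6 : ∀ᶠ w in (hyperfilter ℕ : Filter ℕ), ∀ x ∈ s, ∀ y ∈ s, ∀ a ∈ s, g x y ≠ g a w :=
          (eventually_all_finset _).2 fun x _ => (eventually_all_finset _).2 fun y _ =>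
            (eventually_all_finset _).2 fun a _ => A6 _ a
        filter_upwards [hS', A1, A2, A3, B2, B3, B4, B5, B6, C4, C5, C6] with w hS' A1 A2 A3 B2 B3 B4 B5 B6 C4 C5 C6 hgt
        have small : ∀ a ∈ insert w s, ∀ b ∈ insert w s, a < b → a ∈ s := by
          intro a ha b hb hab
          rcases Finset.mem_insert.1 ha with haw | ha
          · rcases Finset.mem_insert.1 hb with hbw | hb
            · omega
            · have := hgt b hb; omega
          · exact ha
        refine ⟨?_, ?_, ?_, ?_, ?_, ?_⟩
        · intro y hy x hx a ha b hb hyx hab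
          have hy' := small y hy x hx hyx
          have ha' := small a ha b hb hab
          rcases Finset.mem_insert.1 hx with hxw | hx <;>
          rcases Finset.mem_insert.1 hb with hbw | hb
          · rw [hxw, hbw]; exact B2 y hy' a ha'
          · rw [hxw]; exact B3 y hy' a ha' b hb hab
          · rw [hbw]; exact C6 x hx y hy' a ha'
          · exact h1 y hy' x hx a ha' b hb hyx hab
        · intro y hy a ha
          rcases Finset.mem_insert.1 hy with hyw | hy <;>
          rcases Finset.mem_insert.1 ha with haw | ha
          · rw [hyw, haw]; exact hS'
          · rw [hyw]; exact B6 a ha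
          · rw [haw]; exact C4 y hy
          · exact h2 y hy a ha
        · intro y hy a ha b hb hab
          have ha' := small a ha b hb hab
          rcases Finset.mem_insert.1 hy with hyw | hy <;>
          rcases Finset.mem_insert.1 hb with hbw | hb
          · rw [hyw, hbw]; exact B5 a ha'
          · rw [hyw]; exact B4 a ha' b hb hab
          · rw [hbw]; exact C5 y hy a ha'
          · exact h3 y hy a ha' b hb hab
        · intro a ha
          rcases Finset.mem_insert.1 ha with rfl | ha
          · exact A1
          · exact h4 a ha
        · intro a ha
          rcases Finset.mem_insert.1 ha with rfl | ha
          · exact A2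
          · exact h5 a ha
        · intro a ha
          rcases Finset.mem_insert.1 ha with rfl | ha
          · exact A3
          · exact h6 a ha)
  refine ⟨e, he, Or.inr fun x y a b hyx hab => ?_⟩
  obtain ⟨s, hs, hm⟩ := h (x+y+a+b+1)
  exact hs.1 _ (hm y (by omega)) _ (hm x (by omega)) _ (hm a (by omega)) _ (hm b (by omega)) (he hyx) (he hab)

/-- The truncated pairing function. -/
def dd (x y : ℕ) : ℕ := if x ≤ y then Nat.pair x y + 1 else 0

theorem dd_mem {C : Set (Ops ℕ)} (hC : IsClone C) (hU : ∀ F, unaryOp F ∈ C)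
    (g : ℕ → ℕ → ℕ) (hg : bin g ∈ C)
    (hi : ∀ x y x' y', x < y → x' < y' → g x y = g x' y' → x = x' ∧ y = y') :
    C = Set.univ ∨ bin dd ∈ C := by
  obtain ⟨e, he, h⟩ := dichotomy g hi
  have hG : bin (fun x y => g (e (2*x)) (e (2*y+1))) ∈ C :=
    bin_comp2 hC hg (bin_comp1 hC (hU (fun x => e (2*x))) (bin_fst hC))
      (bin_comp1 hC (hU (fun y => e (2*y+1))) (bin_snd hC))
  rcases h with h | h
  · left
    refine clone_univ hC hU _ hG ?_
    intro x y x' y' heq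
    have key : ∀ x y, ∃ a b, a < b ∧ g (e (2*x)) (e (2*y+1)) = g (e a) (e b) ∧
        ((a = 2*x ∧ b = 2*y+1) ∨ (b = 2*x ∧ a = 2*y+1)) := by
      intro x y
      rcases Nat.lt_or_ge (2*x) (2*y+1) with h1 | h1
      · exact ⟨_, _, h1, rfl, Or.inl ⟨rfl, rfl⟩⟩
      · have h1 : 2*y+1 < 2*x := by omega
        exact ⟨_, _, h1, h _ _ h1, Or.inr ⟨rfl, rfl⟩⟩
    obtain ⟨a, b, hab, h1, h2⟩ := key x y
    obtain ⟨a', b', hab', h1', h2'⟩ := key x' y'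
    obtain ⟨h3, h4⟩ := hi _ _ _ _ (he hab) (he hab') (h1.symm.trans (heq.trans h1'))
    have h3 := he.injective h3
    have h4 := he.injective h4
    omega
  · right
    classical
    let W : ℕ → ℕ := fun v => if hv : ∃ p : ℕ × ℕ, p.1 ≤ p.2 ∧ v = g (e (2*p.1)) (e (2*p.2+1)) then
      Nat.pair hv.choose.1 hv.choose.2 + 1 else 0
    have : dd = fun x y => W (g (e (2*x)) (e (2*y+1))) := by
      funext x y
      by_cases hxy : x ≤ y
      · have hv : ∃ p : ℕ × ℕ, p.1 ≤ p.2 ∧ g (e (2*x)) (e (2*y+1)) = g (e (2*p.1)) (e (2*p.2+1)) :=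
          ⟨(x, y), hxy, rfl⟩
        simp only [W, dif_pos hv, dd, if_pos hxy]
        obtain ⟨h1, h2⟩ := hv.choose_spec
        obtain ⟨h3, h4⟩ := hi _ _ _ _ (he (by omega)) (he (by omega)) h2
        have h3 := he.injective h3
        have h4 := he.injective h4
        have h5 : x = hv.choose.1 := by omega
        have h6 : y = hv.choose.2 := by omega
        exact congrArg (· + 1) (congrArg₂ Nat.pair h5 h6)
      · have hv : ¬ ∃ p : ℕ × ℕ, p.1 ≤ p.2 ∧ g (e (2*x)) (e (2*y+1)) = g (e (2*p.1)) (e (2*p.2+1)) := by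
          rintro ⟨p, hp, heq⟩
          exact h _ _ _ _ (by omega) (by omega) heq
        simp only [W, dif_neg hv, dd, if_neg hxy]
    rw [this]
    exact bin_comp1 hC (hU W) hG

theorem bin_swap {C : Set (Ops ℕ)} (hC : IsClone C) {g : ℕ → ℕ → ℕ} (hg : bin g ∈ C) :
    bin (fun x y => g y x) ∈ C := bin_comp2 hC hg (bin_snd hC) (bin_fst hC)

theorem T1_mem' {C : Set (Ops ℕ)} (hC : IsClone C) (hU : ∀ F, unaryOp F ∈ C)
    (hd : bin dd ∈ C) (t : ℕ → ℕ → ℕ) (F : ℕ → ℕ) (hF : ∀ x y, t x y ≤ F y) : bin t ∈ C := by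
  let W1 : ℕ → ℕ := fun v => if v = 0 then 0 else t (Nat.unpair (v-1)).2 (Nat.unpair (v-1)).1 + 1
  let W2 : ℕ → ℕ := fun v => if v = 0 then 0 else t (Nat.unpair (v-1)).1 (Nat.unpair (v-1)).2 + 1
  let W3 : ℕ → ℕ := fun v =>
    if (Nat.unpair (v-1)).1 = 0 then (Nat.unpair ((Nat.unpair (v-1)).2 - 1)).1 - 1
    else (Nat.unpair (v-1)).1 - 1
  have h1 : bin (fun x y => W1 (dd y x)) ∈ C := bin_comp1 hC (hU W1) (bin_swap hC hd)
  have h2 : bin (fun x y => W2 (dd x y)) ∈ C := bin_comp1 hC (hU W2) hd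
  have h3 : bin (fun x y => dd (W2 (dd x y)) (F y + 1)) ∈ C :=
    bin_comp2 hC hd h2 (bin_comp1 hC (hU (fun y => F y + 1)) (bin_snd hC))
  have h4 := bin_comp1 hC (hU W3) (bin_comp2 hC hd h1 h3)
  have e1 : ∀ x y, W1 (dd y x) = if y ≤ x then t x y + 1 else 0 := by
    intro x y; by_cases h : y ≤ x <;> simp [W1, dd, h]
  have e2 : ∀ x y, W2 (dd x y) = if x ≤ y then t x y + 1 else 0 := by
    intro x y; by_cases h : x ≤ y <;> simp [W2, dd, h]
  convert h4 using 2
  funext x y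
  have b1 : W1 (dd y x) ≤ F y + 1 := by
    rw [e1]; have := hF x y; split_ifs <;> omega
  have b2 : W2 (dd x y) ≤ F y + 1 := by
    rw [e2]; have := hF x y; split_ifs <;> omega
  have r1 : dd (W2 (dd x y)) (F y + 1) = Nat.pair (W2 (dd x y)) (F y + 1) + 1 := if_pos b2
  have b3 : W1 (dd y x) ≤ Nat.pair (W2 (dd x y)) (F y + 1) + 1 := by
    have := Nat.right_le_pair (W2 (dd x y)) (F y + 1); omega
  have r2 : dd (W1 (dd y x)) (dd (W2 (dd x y)) (F y + 1)) =
      Nat.pair (W1 (dd y x)) (Nat.pair (W2 (dd x y)) (F y + 1) + 1) + 1 := by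
    rw [r1]; exact if_pos b3
  rw [r2]
  simp only [W3, Nat.add_sub_cancel, Nat.unpair_pair]
  rw [e1, e2]
  by_cases c1 : y ≤ x
  · simp [c1]
  · have c2 : x ≤ y := by omega
    simp [c1, c2]

theorem T1_mem {C : Set (Ops ℕ)} (hC : IsClone C) (hU : ∀ F, unaryOp F ∈ C)
    (hd : bin dd ∈ C) (t : ℕ → ℕ → ℕ) (ht : t ∈ T1bin) : bin t ∈ C := by
  rcases ht with ⟨F, hF⟩ | ⟨F, hF⟩
  · exact bin_swap hC (T1_mem' hC hU hd (fun x y => t y x) F (fun x y => hF y x))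
  · exact T1_mem' hC hU hd t F hF

theorem final_univ {C : Set (Ops ℕ)} (hC : IsClone C) (hU : ∀ F, unaryOp F ∈ C)
    (hd : bin dd ∈ C) (h : ℕ → ℕ → ℕ) (hh : bin h ∈ C) (hT : h ∉ T1bin) : C = Set.univ := by
  have hT1 := T1_mem hC hU hd
  have hT' : (¬ ∃ F : ℕ → ℕ, ∀ x y, h x y ≤ F x) ∧ (¬ ∃ F : ℕ → ℕ, ∀ x y, h x y ≤ F y) :=
    not_or.1 hT
  have k1 : ∃ x0, ∀ n, ∃ y, n ≤ h x0 y := by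
    by_contra hc
    push Not at hc
    choose F hF using hc
    exact hT'.1 ⟨F, fun x y => (hF x y).le⟩
  have k2 : ∃ y0, ∀ n, ∃ x, n ≤ h x y0 := by
    by_contra hc
    push Not at hc
    choose F hF using hc
    exact hT'.2 ⟨F, fun x y => (hF y x).le⟩
  obtain ⟨x0, k1⟩ := k1
  obtain ⟨y0, k2⟩ := k2
  choose ψ hψ using k1
  choose φ hφ using k2
  have hA : bin (fun x y => if x ≤ y then x0 else φ x) ∈ C :=
    hT1 _ (Or.inl ⟨fun x => max x0 (φ x), fun x y => by dsimp only; split_ifs <;> simp⟩)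
  have hB : bin (fun x y => if x ≤ y then ψ y else y0) ∈ C :=
    hT1 _ (Or.inr ⟨fun y => max (ψ y) y0, fun x y => by dsimp only; split_ifs <;> simp⟩)
  have hm := bin_comp2 hC hh hA hB
  set m : ℕ → ℕ → ℕ := fun x y => h (if x ≤ y then x0 else φ x) (if x ≤ y then ψ y else y0) with hmdef
  have mx : ∀ x y, x ≤ m x y ∧ y ≤ m x y := by
    intro x y
    by_cases hxy : x ≤ y
    · simp only [hmdef, if_pos hxy]
      have := hψ y; omega
    · simp only [hmdef, if_neg hxy]
      have := hφ x; omega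
  have h1 := bin_comp2 hC hd (bin_snd hC) (bin_comp2 hC hd (bin_fst hC) hm)
  refine clone_univ hC hU _ h1 ?_
  have e1 : ∀ x y, dd y (dd x (m x y)) = Nat.pair y (Nat.pair x (m x y) + 1) + 1 := by
    intro x y
    have r1 : dd x (m x y) = Nat.pair x (m x y) + 1 := if_pos (mx x y).1
    rw [r1]
    refine if_pos ?_
    have := Nat.right_le_pair x (m x y)
    have := (mx x y).2
    omega
  intro x y x' y' heq
  simp only [e1, Nat.add_right_cancel_iff, Nat.pair_eq_pair] at heq
  exact ⟨heq.2.1, heq.1⟩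

theorem pol_T1_ne : Pol2 T1bin ≠ Set.univ := by
  intro h
  have h1 : bin Nat.pair ∈ Pol2 T1bin := by rw [h]; trivial
  have h2 := h1 ![fun x _ => x, fun _ y => y] (by
    intro i; change Fin 2 at i
    fin_cases i
    · exact Or.inl ⟨id, fun _ _ => le_rfl⟩
    · exact Or.inr ⟨id, fun _ _ => le_rfl⟩)
  have h3 : (∃ F : ℕ → ℕ, ∀ x y, Nat.pair x y ≤ F x) ∨ (∃ F : ℕ → ℕ, ∀ x y, Nat.pair x y ≤ F y) := h2
  rcases h3 with ⟨F, hF⟩ | ⟨F, hF⟩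
  · have := hF 0 (F 0 + 1)
    have := Nat.right_le_pair 0 (F 0 + 1)
    omega
  · have := hF (F 0 + 1) 0
    have := Nat.left_le_pair (F 0 + 1) 0
    omega

theorem not_sub_of_ne {C D : Set (Ops ℕ)} (hC : IsPrecompleteClone C) (hD : IsClone D)
    (hD2 : D ≠ Set.univ) (hne : C ≠ D) : ∃ f ∈ C, f ∉ D := by
  by_contra hc
  push Not at hc
  apply hne
  refine Set.Subset.antisymm hc fun f hf => ?_
  by_contra hfC
  apply hD2
  rw [Set.eq_univ_iff_forall]
  intro q
  have : q ∈ cloneGen (insert f C) := by rw [hC.2.2 f hfC]; trivial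
  exact this D ⟨hD, Set.insert_subset hf hc⟩

/-- **Gavrilov; Goldstern–Shelah** (case `X = ℕ`): `T2` is closed under composition, the
never 1-1 operations form the clone `Pol(T2)`, `Pol(T2)` is precomplete, and `Pol(T1)`
and `Pol(T2)` are the only precomplete clones containing all unary operations. -/
theorem stmt7 :
    (∀ f g h : ℕ → ℕ → ℕ, f ∈ T2bin → g ∈ T2bin → h ∈ T2bin →
      (fun x y => f (g x y) (h x y)) ∈ T2bin) ∧
    (IsClone {f : Ops ℕ | NeverOneOneOp f} ∧
      {f : Ops ℕ | NeverOneOneOp f} = Pol2 T2bin) ∧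
    IsPrecompleteClone (Pol2 T2bin) ∧
    (∀ C : Set (Ops ℕ), IsPrecompleteClone C → (∀ F : ℕ → ℕ, unaryOp F ∈ C) →
      C = Pol2 T1bin ∨ C = Pol2 T2bin) := by
  refine ⟨?_, ⟨never_clone, never_eq_pol⟩, pol_T2_precomplete, ?_⟩
  · intro f g h hf hg hh
    rw [← never_bin] at hf hg hh ⊢
    exact bin_comp2 never_clone hf hg hh
  · intro C hC hU
    by_contra hne
    obtain ⟨hne1, hne2⟩ := not_or.1 hne
    obtain ⟨f1, hf1, hf1'⟩ := not_sub_of_ne hC (pol2_clone _) pol_T1_ne hne1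
    obtain ⟨f2, hf2, hf2'⟩ := not_sub_of_ne hC (pol2_clone _) pol_T2_ne hne2
    obtain ⟨g, hg, hi⟩ := exists_inj hC.1 hU f2 hf2 hf2'
    rcases dd_mem hC.1 hU g hg hi with h | hd
    · exact hC.2.1 h
    · have h1 : ∃ t : Fin (f1.1 + 1) → (ℕ → ℕ → ℕ), (∀ i, t i ∈ T1bin) ∧
          (fun x y => f1.2 fun i => t i x y) ∉ T1bin := by
        by_contra hc
        push Not at hc
        exact hf1' hc
      obtain ⟨t, ht, hnt⟩ := h1
      exact hC.2.1 (final_univ hC.1 hU hd _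
        (bin_comp_n hC.1 f1 hf1 t (fun i => T1_mem hC.1 hU hd _ (ht i))) hnt)
end

section
/- Let X be a set whose cardinality κ is a strong limit cardinal, and let T2 be the set of rarely 1-1 binary operations on X. Then T2 is closed under composition (for f, g, h ∈ T2 the operation (x,y) ↦ f(g(x,y), h(x,y)) is in T2) and the clone ⟨T2⟩ contains all unary operations. If κ is moreover singular, then Pol(T2) is a precomplete clone. -/
universe u v

open Cardinal

/-- The rarely 1-1 binary operations on `X` (of strong limit cardinality `κ`):
there is `μ < κ` such that the operation is not injective on any `μ × μ` rectangle. -/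
def T2rare (X : Type u) : Set (X → X → X) :=
  {f | ∃ μ : Cardinal.{u}, μ < #X ∧ ∀ A B : Set X, #A = μ → #B = μ →
    ¬ Set.InjOn (fun p : X × X => f p.1 p.2) (A ×ˢ B)}

section aux
variable {X : Type u}

theorem aux_pig {Y : Type u} (f : X → Y) (S : Set X) (α μ : Cardinal.{u})
    (hα : #(f '' S) ≤ α) (hS : 2 ^ (α * μ) ≤ #S) :
    ∃ T ⊆ S, #T = μ ∧ ∀ x ∈ T, ∀ y ∈ T, f x = f y := by
  by_contra hcon
  have key : ∀ y : f '' S, #((fun x : S => (⟨f x, Set.mem_image_of_mem f x.2⟩ : f '' S)) ⁻¹' {y}) ≤ μ := by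
    intro y
    by_contra hlt
    push Not at hlt
    apply hcon
    obtain ⟨T, hT, hTc⟩ := Cardinal.le_mk_iff_exists_subset.1 hlt.le
    refine ⟨Subtype.val '' T, ?_, ?_, ?_⟩
    · rintro _ ⟨x, -, rfl⟩; exact x.2
    · rw [Cardinal.mk_image_eq Subtype.val_injective, hTc]
    · rintro _ ⟨x, hx, rfl⟩ _ ⟨x', hx', rfl⟩
      have h1 := hT hx
      have h2 := hT hx'
      simp only [Set.mem_preimage, Set.mem_singleton_iff] at h1 h2
      exact congrArg Subtype.val (h1.trans h2.symm)
  have h1 := Cardinal.mk_le_mk_mul_of_mk_preimage_le _ key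
  have h2 : #S ≤ α * μ := h1.trans (mul_le_mul_left hα μ)
  exact absurd (hS.trans h2) (not_le.2 (Cardinal.cantor _))

theorem aux_homog {Y : Type u} (f : X → Y) (S : Set X) (μ : Cardinal.{u})
    (hS : 2 ^ (μ * μ) ≤ #S) :
    ∃ T ⊆ S, #T = μ ∧ ((∀ x ∈ T, ∀ y ∈ T, f x = f y) ∨ Set.InjOn f T) := by
  rcases le_total #(f '' S) μ with h | h
  · obtain ⟨T, h1, h2, h3⟩ := aux_pig f S μ μ h hS
    exact ⟨T, h1, h2, Or.inl h3⟩
  · obtain ⟨R, hR, hRc⟩ := Cardinal.le_mk_iff_exists_subset.1 h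
    obtain ⟨T, hTS, hT⟩ := (Set.surjOn_image f S).mono subset_rfl hR |>.exists_bijOn_subset
    refine ⟨T, hTS, ?_, Or.inr hT.injOn⟩
    rw [← hRc, ← hT.image_eq, Cardinal.mk_image_eq_of_injOn _ _ hT.injOn]

theorem aux_row {κ : Cardinal.{u}} (hκ : κ.IsStrongLimit) (μ μ' : Cardinal.{u}) (h : μ < κ)
    (h' : μ' < κ) : ∃ l < κ, ∀ (g : X → X → X) (A B : Set X), l ≤ #A → l ≤ #B →
      ∃ A' ⊆ A, ∃ B' ⊆ B, #A' = μ ∧ #B' = μ' ∧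
        ((∀ b ∈ B', ∀ a ∈ A', ∀ a' ∈ A', g a b = g a' b) ∨
          ∀ b ∈ B', Set.InjOn (fun a => g a b) A') := by
  have hm : ∀ {a b : Cardinal.{u}}, a < κ → b < κ → a * b < κ :=
    fun ha hb => Cardinal.mul_lt_of_lt hκ.aleph0_le ha hb
  have hp : ∀ {a : Cardinal.{u}}, a < κ → 2 ^ a < κ := fun ha => hκ.isStrongPrelimit ha
  set ν : Cardinal.{u} := 2 ^ (μ * μ) with hν
  have hνκ : ν < κ := hp (hm h h)
  refine ⟨ν + 2 ^ (2 ^ (ν * ν) * μ'), Cardinal.add_lt_of_lt hκ.aleph0_le hνκ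
    (hp (hm (hp (hm hνκ hνκ)) h')), ?_⟩
  intro g A B hA hB
  obtain ⟨A0, hA0, hA0c⟩ := Cardinal.le_mk_iff_exists_subset.1 ((self_le_add_right _ _).trans hA)
  let f : X → Set (A0 × A0) := fun b => {p | g p.1 b = g p.2 b}
  have hf : #(f '' B) ≤ 2 ^ (ν * ν) := by
    refine (Cardinal.mk_set_le _).trans ?_
    rw [Cardinal.mk_set, Cardinal.mk_prod, Cardinal.lift_id, hA0c]
  obtain ⟨B', hB', hB'c, hBf⟩ := aux_pig f B _ μ' hf ((self_le_add_left _ _).trans hB)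
  by_cases hne : B'.Nonempty
  · obtain ⟨b0, hb0⟩ := hne
    obtain ⟨A', hA', hA'c, hor⟩ := aux_homog (fun a => g a b0) A0 μ hA0c.ge
    have tr : ∀ b ∈ B', ∀ a ∈ A', ∀ a' ∈ A', (g a b0 = g a' b0 ↔ g a b = g a' b) := by
      intro b hb a ha a' ha'
      have := hBf b0 hb0 b hb
      exact Set.ext_iff.1 this (⟨a, hA' ha⟩, ⟨a', hA' ha'⟩)
    refine ⟨A', hA'.trans hA0, B', hB', hA'c, hB'c, ?_⟩
    rcases hor with hor | hor
    · exact Or.inl fun b hb a ha a' ha' => (tr b hb a ha a' ha').1 (hor a ha a' ha')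
    · exact Or.inr fun b hb a ha a' ha' e => hor ha ha' ((tr b hb a ha a' ha').2 e)
  · rw [Set.not_nonempty_iff_eq_empty] at hne
    have hμν : μ ≤ ν := by
      rw [hν]
      refine le_trans ?_ (Cardinal.cantor _).le
      rcases eq_or_ne μ 0 with h0 | h0
      · simp [h0]
      · exact le_mul_of_one_le_right (zero_le) (Cardinal.one_le_iff_ne_zero.2 h0)
    obtain ⟨A', hA', hA'c⟩ := Cardinal.le_mk_iff_exists_subset.1 (hμν.trans hA0c.ge)
    exact ⟨A', hA'.trans hA0, B', hB', hA'c, hB'c, Or.inl fun b hb => by simp [hne] at hb⟩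

theorem aux_free (g : X → X → X) (A B : Set X) (μ : Cardinal.{u}) (hA : #A = μ)
    (hB : 2 ^ (μ * (μ * μ)) ≤ #B) (h1 : ∀ b ∈ B, Set.InjOn (fun a => g a b) A)
    (h2 : ∀ a ∈ A, Set.InjOn (fun b => g a b) B) :
    ∃ B' ⊆ B, #B' = μ ∧ Set.InjOn (fun p : X × X => g p.1 p.2) (A ×ˢ B') := by
  obtain ⟨S, hS⟩ := zorn_subset {S : Set X | S ⊆ B ∧ ∀ b ∈ S, ∀ b' ∈ S, ∀ a ∈ A, ∀ a' ∈ A,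
      g a b = g a' b' → b = b'} (by
    intro c hc hch
    refine ⟨⋃₀ c, ⟨Set.sUnion_subset fun s hs => (hc hs).1, ?_⟩, fun s hs => Set.subset_sUnion_of_mem hs⟩
    rintro b ⟨s, hs, hb⟩ b' ⟨s', hs', hb'⟩
    rcases hch.total hs hs' with h | h
    · exact (hc hs').2 b (h hb) b' hb'
    · exact (hc hs).2 b hb b' (h hb'))
  rcases le_or_gt μ #S with h | h
  · obtain ⟨B', hB', hc⟩ := Cardinal.le_mk_iff_exists_subset.1 h
    refine ⟨B', hB'.trans hS.prop.1, hc, ?_⟩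
    rintro ⟨a, b⟩ ⟨ha, hb⟩ ⟨a', b'⟩ ⟨ha', hb'⟩ e
    simp only at ha hb ha' hb' e
    have := hS.prop.2 b (hB' hb) b' (hB' hb') a ha a' ha' e
    subst this
    rw [h1 b (hS.prop.1 (hB' hb)) ha ha' e]
  · exfalso
    have hAne : A.Nonempty := by
      rw [Set.nonempty_iff_ne_empty]
      rintro rfl
      rw [Cardinal.mk_eq_zero] at hA
      subst hA
      exact absurd h (not_lt.2 (zero_le))
    obtain ⟨a0, ha0⟩ := hAne
    have key : ∀ b : B, ∃ p : S × A × A, g p.2.1 p.1 = g p.2.2 b := by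
      intro b
      by_contra hcon
      push Not at hcon
      have hbS : b.1 ∉ S := fun hb => hcon (⟨b, hb⟩, ⟨a0, ha0⟩, ⟨a0, ha0⟩) rfl
      apply hbS
      refine hS.le_of_ge (y := insert b.1 S) ⟨Set.insert_subset b.2 hS.prop.1, ?_⟩
        (Set.subset_insert _ _) (Set.mem_insert _ _)
      intro x hx y hy a ha a' ha' e
      rcases hx with rfl | hx <;> rcases hy with rfl | hy
      · rfl
      · exact absurd e.symm (hcon (⟨y, hy⟩, ⟨a', ha'⟩, ⟨a, ha⟩))
      · exact absurd e (hcon (⟨x, hx⟩, ⟨a, ha⟩, ⟨a', ha'⟩))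
      · exact hS.prop.2 x hx y hy a ha a' ha' e
    choose p hp using key
    have inj : Function.Injective p := by
      intro b b' e
      have e1 := hp b
      have e2 := hp b'
      rw [e] at e1
      exact Subtype.ext (h2 _ (p b').2.2.2 b.2 b'.2 (e1.symm.trans e2))
    have hle := Cardinal.mk_le_of_injective inj
    simp only [Cardinal.mk_prod, Cardinal.lift_id, hA] at hle
    have h3 : #B ≤ μ * (μ * μ) := hle.trans (mul_le_mul_left h.le _)
    exact absurd (hB.trans h3) (not_le.2 (Cardinal.cantor _))

theorem aux_self_le (μ : Cardinal.{u}) : μ ≤ 2 ^ (μ * (μ * μ)) := by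
  refine le_trans ?_ (Cardinal.cantor _).le
  rcases eq_or_ne μ 0 with h0 | h0
  · simp [h0]
  · have := Cardinal.one_le_iff_ne_zero.2 h0
    exact le_mul_of_one_le_right (zero_le) (one_le_mul this this)

theorem aux_canon {κ : Cardinal.{u}} (hκ : κ.IsStrongLimit) (μ : Cardinal.{u}) (h : μ < κ) :
    ∃ l < κ, ∀ (g : X → X → X) (A B : Set X), l ≤ #A → l ≤ #B →
      ∃ A' ⊆ A, ∃ B' ⊆ B, #A' = μ ∧ #B' = μ ∧
        ((∀ b ∈ B', ∀ a ∈ A', ∀ a' ∈ A', g a b = g a' b) ∨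
         (∀ a ∈ A', ∀ b ∈ B', ∀ b' ∈ B', g a b = g a b') ∨
         Set.InjOn (fun p : X × X => g p.1 p.2) (A' ×ˢ B')) := by
  have hm : ∀ {a b : Cardinal.{u}}, a < κ → b < κ → a * b < κ :=
    fun ha hb => Cardinal.mul_lt_of_lt hκ.aleph0_le ha hb
  have hp : ∀ {a : Cardinal.{u}}, a < κ → 2 ^ a < κ := fun ha => hκ.isStrongPrelimit ha
  have hβ : 2 ^ (μ * (μ * μ)) < κ := hp (hm h (hm h h))
  obtain ⟨l1, hl1, H1⟩ := aux_row (X := X) hκ _ _ hβ h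
  obtain ⟨l2, hl2, H2⟩ := aux_row (X := X) hκ (l1 + μ) (l1 + μ)
    (Cardinal.add_lt_of_lt hκ.aleph0_le hl1 h) (Cardinal.add_lt_of_lt hκ.aleph0_le hl1 h)
  refine ⟨l2, hl2, fun g A B hA hB => ?_⟩
  obtain ⟨A1, hA1, B1, hB1, cA1, cB1, h1⟩ := H2 g A B hA hB
  rcases h1 with h1 | h1
  · obtain ⟨A', hA', hc⟩ := Cardinal.le_mk_iff_exists_subset.1
      (show μ ≤ #A1 from cA1 ▸ self_le_add_left _ _)
    obtain ⟨B', hB', hc'⟩ := Cardinal.le_mk_iff_exists_subset.1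
      (show μ ≤ #B1 from cB1 ▸ self_le_add_left _ _)
    exact ⟨A', hA'.trans hA1, B', hB'.trans hB1, hc, hc',
      Or.inl fun b hb a ha a' ha' => h1 b (hB' hb) a (hA' ha) a' (hA' ha')⟩
  obtain ⟨B2, hB2, A2, hA2, cB2, cA2, h2⟩ := H1 (fun b a => g a b) B1 A1
    (cB1 ▸ self_le_add_right _ _) (cA1 ▸ self_le_add_right _ _)
  rcases h2 with h2 | h2
  · obtain ⟨B', hB', hc'⟩ := Cardinal.le_mk_iff_exists_subset.1
      (show μ ≤ #B2 from cB2 ▸ aux_self_le μ)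
    exact ⟨A2, hA2.trans hA1, B', hB'.trans (hB2.trans hB1), cA2, hc',
      Or.inr (Or.inl fun a ha b hb b' hb' => h2 a ha b (hB' hb) b' (hB' hb'))⟩
  · obtain ⟨B', hB', hc', hI⟩ := aux_free g A2 B2 μ cA2 cB2.ge
      (fun b hb => (h1 b (hB2 hb)).mono hA2) h2
    exact ⟨A2, hA2.trans hA1, B', hB'.trans (hB2.trans hB1), cA2, hc', Or.inr (Or.inr hI)⟩

theorem aux_up {f : X → X → X} (hf : f ∈ T2rare X) : ∃ μ : Cardinal.{u}, μ < #X ∧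
    ∀ A B : Set X, μ ≤ #A → μ ≤ #B → ¬ Set.InjOn (fun p : X × X => f p.1 p.2) (A ×ˢ B) := by
  obtain ⟨μ, h, H⟩ := hf
  refine ⟨μ, h, fun A B hA hB hI => ?_⟩
  obtain ⟨A', hA', hc⟩ := Cardinal.le_mk_iff_exists_subset.1 hA
  obtain ⟨B', hB', hc'⟩ := Cardinal.le_mk_iff_exists_subset.1 hB
  exact H A' B' hc hc' (hI.mono (Set.prod_mono hA' hB'))

theorem aux_core (f g h : X → X → X) (A B : Set X) (hAn : A.Nonempty) (hBn : B.Nonempty)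
    (hF : ∀ a ∈ A, ∀ b ∈ B, ∀ a' ∈ A, ∀ b' ∈ B,
      f (g a b) (h a b) = f (g a' b') (h a' b') → a = a' ∧ b = b')
    (hg : ∀ a ∈ A, ∀ b ∈ B, ∀ b' ∈ B, g a b = g a b')
    (hh : ∀ b ∈ B, ∀ a ∈ A, ∀ a' ∈ A, h a b = h a' b) :
    ∃ C D : Set X, #C = #A ∧ #D = #B ∧ Set.InjOn (fun p : X × X => f p.1 p.2) (C ×ˢ D) := by
  obtain ⟨a0, ha0⟩ := hAn
  obtain ⟨b0, hb0⟩ := hBn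
  refine ⟨(fun a => g a b0) '' A, (fun b => h a0 b) '' B, ?_, ?_, ?_⟩
  · apply Cardinal.mk_image_eq_of_injOn
    intro a ha a' ha' e
    refine (hF a ha b0 hb0 a' ha' b0 hb0 ?_).1
    simp only at e
    rw [e, hh b0 hb0 a ha a' ha']
  · apply Cardinal.mk_image_eq_of_injOn
    intro b hb b' hb' e
    refine (hF a0 ha0 b hb a0 ha0 b' hb' ?_).2
    simp only at e
    rw [e, hg a0 ha0 b hb b' hb']
  · rintro ⟨_, _⟩ ⟨⟨a, ha, rfl⟩, ⟨b, hb, rfl⟩⟩ ⟨_, _⟩ ⟨⟨a', ha', rfl⟩, ⟨b', hb', rfl⟩⟩ e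
    simp only at e
    rw [hg a ha b0 hb0 b hb, hg a' ha' b0 hb0 b' hb', hh b hb a0 ha0 a ha,
      hh b' hb' a0 ha0 a' ha'] at e
    obtain ⟨rfl, rfl⟩ := hF a ha b hb a' ha' b' hb' e
    rfl

theorem aux_comp (hSL : (#X).IsStrongLimit) (f g h : X → X → X) (hf : f ∈ T2rare X)
    (hg : g ∈ T2rare X) (hh : h ∈ T2rare X) : (fun x y => f (g x y) (h x y)) ∈ T2rare X := by
  obtain ⟨m1, l1, H1⟩ := aux_up hf
  obtain ⟨m2, l2, H2⟩ := aux_up hg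
  obtain ⟨m3, l3, H3⟩ := aux_up hh
  have ha : ∀ {a b : Cardinal.{u}}, a < #X → b < #X → a + b < #X :=
    fun ha hb => Cardinal.add_lt_of_lt hSL.aleph0_le ha hb
  have h2X : (2 : Cardinal.{u}) < #X := lt_of_lt_of_le (Cardinal.ofNat_lt_aleph0 (n := 2)) hSL.aleph0_le
  obtain ⟨μ, hμ, i1, i2, i3, i4⟩ : ∃ μ < #X, m1 ≤ μ ∧ m2 ≤ μ ∧ m3 ≤ μ ∧ 2 ≤ μ :=
    ⟨max (max m1 m2) (max m3 2), max_lt (max_lt l1 l2) (max_lt l3 h2X), by simp, by simp, by simp, by simp⟩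
  obtain ⟨k1, hk1, K1⟩ := aux_canon (X := X) hSL μ hμ
  obtain ⟨k2, hk2, K2⟩ := aux_canon (X := X) hSL k1 hk1
  refine ⟨k2, hk2, fun A B hA hB hI => ?_⟩
  obtain ⟨A1, hA1, B1, hB1, cA1, cB1, c1⟩ := K2 g A B hA.ge hB.ge
  obtain ⟨A2, hA2, B2, hB2, cA2, cB2, c2⟩ := K1 h A1 B1 cA1.ge cB1.ge
  have hF : ∀ a ∈ A2, ∀ b ∈ B2, ∀ a' ∈ A2, ∀ b' ∈ B2,
      f (g a b) (h a b) = f (g a' b') (h a' b') → a = a' ∧ b = b' := by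
    intro a ha b hb a' ha' b' hb' e
    have := @hI (a, b) ⟨hA1 (hA2 ha), hB1 (hB2 hb)⟩ (a', b') ⟨hA1 (hA2 ha'), hB1 (hB2 hb')⟩ e
    exact Prod.mk.inj this
  obtain ⟨a0, a1, hne⟩ := Cardinal.two_le_iff.1 (cA2 ▸ i4 : 2 ≤ #A2)
  obtain ⟨b0, b1, hne'⟩ := Cardinal.two_le_iff.1 (cB2 ▸ i4 : 2 ≤ #B2)
  rcases c1 with c1 | c1 | c1
  · rcases c2 with c2 | c2 | c2
    · apply hne
      refine Subtype.ext (hF a0 a0.2 b0 b0.2 a1 a1.2 b0 b0.2 ?_).1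
      rw [c1 b0 (hB2 b0.2) a0 (hA2 a0.2) a1 (hA2 a1.2), c2 b0 b0.2 a0 a0.2 a1 a1.2]
    · obtain ⟨C, D, hC, hD, hCD⟩ := aux_core f (fun b a => g a b) (fun b a => h a b) B2 A2 ⟨b0, b0.2⟩ ⟨a0, a0.2⟩
        (fun b hb a ha b' hb' a' ha' e => (hF a ha b hb a' ha' b' hb' e).symm)
        (fun b hb a ha a' ha' => c1 b (hB2 hb) a (hA2 ha) a' (hA2 ha')) c2
      exact H1 C D (by rwa [hC, cB2]) (by rwa [hD, cA2]) hCD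
    · exact H3 A2 B2 (by rwa [cA2]) (by rwa [cB2]) c2
  · rcases c2 with c2 | c2 | c2
    · obtain ⟨C, D, hC, hD, hCD⟩ := aux_core f g h A2 B2 ⟨a0, a0.2⟩ ⟨b0, b0.2⟩ hF
        (fun a ha b hb b' hb' => c1 a (hA2 ha) b (hB2 hb) b' (hB2 hb')) c2
      exact H1 C D (by rwa [hC, cA2]) (by rwa [hD, cB2]) hCD
    · apply hne'
      refine Subtype.ext (hF a0 a0.2 b0 b0.2 a0 a0.2 b1 b1.2 ?_).2
      rw [c1 a0 (hA2 a0.2) b0 (hB2 b0.2) b1 (hB2 b1.2), c2 a0 a0.2 b0 b0.2 b1 b1.2]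
    · exact H3 A2 B2 (by rwa [cA2]) (by rwa [cB2]) c2
  · exact H2 A2 B2 (by rwa [cA2]) (by rwa [cB2]) (c1.mono (Set.prod_mono hA2 hB2))

def auxBin (f : X → X → X) : Ops X := ⟨1, fun x => f (x 0) (x 1)⟩

theorem aux_binComp {D : Set (Ops X)} (hD : IsClone D) {p g h : X → X → X} (hp : auxBin p ∈ D)
    (hg : auxBin g ∈ D) (hh : auxBin h ∈ D) : auxBin (fun x y => p (g x y) (h x y)) ∈ D :=
  hD.2 1 1 (fun x => p (x 0) (x 1)) hp
    ![fun x => g (x 0) (x 1), fun x => h (x 0) (x 1)] (by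
      intro i
      fin_cases i
      · exact hg
      · exact hh)

theorem aux_unary_snd (hSL : (#X).IsStrongLimit) {ι : Type u} (c : X → ι) (φ : X → ι → X)
    (hι : #ι < #X) : (fun x y => φ x (c y)) ∈ T2rare X := by
  refine ⟨2 ^ #ι, hSL.isStrongPrelimit hι, fun A B hA hB hI => ?_⟩
  obtain ⟨⟨a, ha⟩⟩ : Nonempty A := by
    rw [← Cardinal.mk_ne_zero_iff, hA]
    exact (pos_of_gt (Cardinal.cantor #ι)).ne'
  have : Function.Injective (fun b : B => c b) := by
    intro b b' e
    have := @hI (a, b) ⟨ha, b.2⟩ (a, b') ⟨ha, b'.2⟩ (congrArg (φ a) e)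
    exact Subtype.ext (Prod.mk.inj this).2
  have := Cardinal.mk_le_of_injective this
  rw [hB] at this
  exact absurd this (not_le.2 (Cardinal.cantor _))

theorem aux_unary_fst (hSL : (#X).IsStrongLimit) {ι : Type u} (c : X → ι) (φ : ι → X → X)
    (hι : #ι < #X) : (fun x y => φ (c x) y) ∈ T2rare X := by
  refine ⟨2 ^ #ι, hSL.isStrongPrelimit hι, fun A B hA hB hI => ?_⟩
  obtain ⟨⟨b, hb⟩⟩ : Nonempty B := by
    rw [← Cardinal.mk_ne_zero_iff, hB]
    exact (pos_of_gt (Cardinal.cantor #ι)).ne'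
  have : Function.Injective (fun b : A => c b) := by
    intro a a' e
    have := @hI (a, b) ⟨a.2, hb⟩ (a', b) ⟨a'.2, hb⟩ (congrArg (fun i => φ i b) e)
    exact Subtype.ext (Prod.mk.inj this).1
  have := Cardinal.mk_le_of_injective this
  rw [hA] at this
  exact absurd this (not_le.2 (Cardinal.cantor _))

theorem aux_one_lt (hSL : (#X).IsStrongLimit) : #PUnit.{u+1} < #X := by
  rw [Cardinal.mk_punit]
  exact lt_of_lt_of_le Cardinal.one_lt_aleph0 hSL.aleph0_le

theorem aux_fst (hSL : (#X).IsStrongLimit) (F : X → X) : (fun x _ => F x) ∈ T2rare X :=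
  aux_unary_snd hSL (fun _ => PUnit.unit) (fun x _ => F x) (aux_one_lt hSL)

theorem aux_snd (hSL : (#X).IsStrongLimit) (F : X → X) : (fun _ y => F y) ∈ T2rare X :=
  aux_unary_fst hSL (fun _ => PUnit.unit) (fun _ x => F x) (aux_one_lt hSL)

theorem aux_full {D : Set (Ops X)} (hD : IsClone D) (hu : ∀ F : X → X, unaryOp F ∈ D)
    (q : X → X → X) (hq : auxBin q ∈ D) (hinj : ∀ a b a' b', q a b = q a' b' → a = a' ∧ b = b')
    [Nonempty X] : D = Set.univ := by
  have key : ∀ n : ℕ, ∃ Q : (Fin (n + 1) → X) → X, (⟨n, Q⟩ : Ops X) ∈ D ∧ Function.Injective Q := by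
    intro n
    induction n with
    | zero =>
      refine ⟨fun x => x 0, hD.1 0 0, fun x y e => ?_⟩
      funext i
      obtain rfl : i = 0 := by ext; simp
      exact e
    | succ n ih =>
      obtain ⟨Q, hQ, hi⟩ := ih
      refine ⟨fun x => q (Q fun i => x i.castSucc) (x (Fin.last _)), ?_, ?_⟩
      · refine hD.2 1 (n+1) (fun x => q (x 0) (x 1)) hq
          ![fun x => Q fun i => x i.castSucc, fun x => x (Fin.last _)] ?_
        intro i
        fin_cases i
        · exact hD.2 n (n+1) Q hQ (fun i x => x i.castSucc) (fun i => hD.1 _ _)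
        · exact hD.1 _ _
      · intro x y e
        obtain ⟨e1, e2⟩ := hinj _ _ _ _ e
        have e3 := hi e1
        funext i
        refine Fin.lastCases e2 (fun j => congrFun e3 j) i
  rw [Set.eq_univ_iff_forall]
  rintro ⟨n, h⟩
  obtain ⟨Q, hQ, hi⟩ := key n
  have := hD.2 0 n _ (hu (h ∘ Function.invFun Q)) (fun _ => Q) (fun _ => hQ)
  have e : (fun x => (h ∘ Function.invFun Q) (Q x)) = h := by
    funext x
    simp [Function.leftInverse_invFun hi x]
  simpa only [e] using this

theorem aux_sing (hSL : (#X).IsStrongLimit) (hs : ¬ (#X).IsRegular) :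
    ∃ (ι : Type u) (c : X → ι), #ι < #X ∧ ∀ i, #(c ⁻¹' {i}) < #X := by
  obtain ⟨_, _, ho⟩ := Cardinal.exists_ord_eq_type_lt X
  have hcof : Order.cof X < #X := by
    by_contra hcon
    push Not at hcon
    refine hs ⟨hSL.aleph0_le, ?_⟩
    rwa [ho, Ordinal.cof_type]
  obtain ⟨S, hS, hSc⟩ := Order.exists_cof_eq X
  choose c hc hle using hS
  refine ⟨S, fun x => ⟨c x, hc x⟩, hSc ▸ hcof, fun i => ?_⟩
  refine lt_of_le_of_lt (Cardinal.mk_le_mk_of_subset ?_) (Cardinal.mk_Iic_lt i.1 ho hSL.aleph0_le)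
  intro x hx
  have : (⟨c x, hc x⟩ : S) = i := hx
  rw [← this]
  exact hle x

theorem aux_T2_Pol (hSL : (#X).IsStrongLimit) {f : X → X → X} (hf : f ∈ T2rare X) :
    auxBin f ∈ Pol2 (T2rare X) :=
  fun g hg => aux_comp hSL f (g 0) (g 1) hf (hg 0) (hg 1)

theorem aux_Pol_clone (H : Set (X → X → X)) : IsClone (Pol2 H) :=
  ⟨fun _ k _ hg => hg k, fun _ _ _ hf g hg k hk => hf (fun i x y => g i fun j => k j x y)
    (fun i => hg i k hk)⟩

theorem aux_unary_Pol (F : X → X) : unaryOp F ∈ Pol2 (T2rare X) := by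
  intro g hg
  obtain ⟨μ, h, H⟩ := hg 0
  refine ⟨μ, h, fun A B hA hB hI => H A B hA hB ?_⟩
  intro p hp q hq e
  exact hI hp hq (congrArg F e)

theorem aux_pair (hSL : (#X).IsStrongLimit) :
    ∃ q : X → X → X, ∀ a b a' b', q a b = q a' b' → a = a' ∧ b = b' := by
  have : #(X × X) = #X := by
    rw [Cardinal.mk_prod, Cardinal.lift_id, Cardinal.mul_eq_self hSL.aleph0_le]
  obtain ⟨e⟩ := Cardinal.eq.1 this
  exact ⟨fun a b => e (a, b), fun a b a' b' h => Prod.mk.inj (e.injective h)⟩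

theorem aux_main (hSL : (#X).IsStrongLimit) (hs : ¬ (#X).IsRegular) {D : Set (Ops X)}
    (hD : IsClone D) (hu : ∀ F : X → X, unaryOp F ∈ D) (hT : ∀ f ∈ T2rare X, auxBin f ∈ D)
    (F : X → X → X) (hF : auxBin F ∈ D) (hFT : F ∉ T2rare X) : D = Set.univ := by
  classical
  haveI : Nonempty X := Cardinal.mk_ne_zero_iff.1 hSL.ne_zero
  obtain ⟨ι, c, hι, hc⟩ := aux_sing hSL hs
  obtain ⟨pr, hpr⟩ := aux_pair hSL
  have hrect : ∀ i j : ι, ∃ φ ψ : X → X, ∀ x y x' y', c x = i → c y = j → c x' = i → c y' = j →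
      F (φ x) (ψ y) = F (φ x') (ψ y') → x = x' ∧ y = y' := by
    intro i j
    have : ∃ A B : Set X, #A = max #(c ⁻¹' {i}) #(c ⁻¹' {j}) ∧ #B = max #(c ⁻¹' {i}) #(c ⁻¹' {j}) ∧
        Set.InjOn (fun p : X × X => F p.1 p.2) (A ×ˢ B) := by
      by_contra hcon
      exact hFT ⟨_, max_lt (hc i) (hc j), fun A B hA hB hI => hcon ⟨A, B, hA, hB, hI⟩⟩
    obtain ⟨A, B, hA, hB, hI⟩ := this
    obtain ⟨φ⟩ : #(c ⁻¹' {i}) ≤ #A := hA ▸ le_max_left _ _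
    obtain ⟨ψ⟩ : #(c ⁻¹' {j}) ≤ #B := hB ▸ le_max_right _ _
    refine ⟨fun x => if h : c x = i then φ ⟨x, h⟩ else x,
      fun x => if h : c x = j then ψ ⟨x, h⟩ else x, ?_⟩
    intro x y x' y' hx hy hx' hy' e
    simp only [dif_pos hx, dif_pos hx', dif_pos hy, dif_pos hy'] at e
    have := @hI (φ ⟨x, hx⟩, ψ ⟨y, hy⟩) ⟨Subtype.prop _, Subtype.prop _⟩
      (φ ⟨x', hx'⟩, ψ ⟨y', hy'⟩) ⟨Subtype.prop _, Subtype.prop _⟩ e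
    obtain ⟨e1, e2⟩ := Prod.mk.inj this
    exact ⟨congrArg Subtype.val (φ.injective (Subtype.ext e1)),
      congrArg Subtype.val (ψ.injective (Subtype.ext e2))⟩
  choose φ ψ hφψ using hrect
  have hιι : #(ι × ι) < #X := by
    rw [Cardinal.mk_prod, Cardinal.lift_id]
    exact Cardinal.mul_lt_of_lt hSL.aleph0_le hι hι
  obtain ⟨e⟩ : #(ι × ι) ≤ #X := hιι.le
  haveI : Nonempty (ι × ι) := ⟨(c (Classical.arbitrary X), c (Classical.arbitrary X))⟩
  have t1 := hT _ (aux_unary_snd hSL c (fun x j => φ (c x) j x) hι)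
  have t2 := hT _ (aux_unary_fst hSL c (fun i y => ψ i (c y) y) hι)
  have t3 := hT _ (aux_unary_snd hSL c (fun x j => e (c x, j)) hι)
  have t4 := hT _ (aux_unary_snd hSL (Function.invFun e) (fun u k => pr u (e k)) hιι)
  have t5 := aux_binComp hD t4 (aux_binComp hD hF t1 t2) t3
  refine aux_full hD hu _ t5 ?_
  intro a b a' b' h
  obtain ⟨h1, h2⟩ := hpr _ _ _ _ h
  have h3 := e.injective h2
  rw [Function.leftInverse_invFun e.injective, Function.leftInverse_invFun e.injective] at h3
  obtain ⟨h4, h5⟩ := Prod.mk.inj h3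
  rw [h4, h5] at h1
  exact hφψ (c a') (c b') a b a' b' h4 h5 rfl rfl h1

theorem aux_precomplete (hSL : (#X).IsStrongLimit) (hs : ¬ (#X).IsRegular) :
    IsPrecompleteClone (Pol2 (T2rare X)) := by
  refine ⟨aux_Pol_clone _, ?_, ?_⟩
  · intro h
    obtain ⟨pr, hpr⟩ := aux_pair hSL
    have h1 : auxBin pr ∈ Pol2 (T2rare X) := h ▸ Set.mem_univ _
    obtain ⟨μ, hμ, H⟩ := h1 ![fun x _ => x, fun _ y => y] (by
      intro i
      fin_cases i
      · exact aux_fst hSL id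
      · exact aux_snd hSL id)
    obtain ⟨A, hA⟩ := Cardinal.le_mk_iff_exists_set.1 hμ.le
    refine H A A hA hA ?_
    rintro ⟨a, b⟩ - ⟨a', b'⟩ - e
    obtain ⟨rfl, rfl⟩ := hpr a b a' b' e
    rfl
  · rintro ⟨n, f⟩ hf
    rw [Set.eq_univ_iff_forall]
    rintro o D ⟨hD, hsub⟩
    have hPD : Pol2 (T2rare X) ⊆ D := (Set.subset_insert _ _).trans hsub
    have hfD : (⟨n, f⟩ : Ops X) ∈ D := hsub (Set.mem_insert _ _)
    simp only [Pol2, Set.mem_setOf_eq, not_forall] at hf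
    obtain ⟨g, hg, hgf⟩ := hf
    have hT : ∀ f ∈ T2rare X, auxBin f ∈ D := fun f hf => hPD (aux_T2_Pol hSL hf)
    rw [aux_main hSL hs hD (fun F => hPD (aux_unary_Pol F)) hT _ ?_ hgf]
    · exact Set.mem_univ _
    · exact hD.2 n 1 f hfD (fun i x => g i (x 0) (x 1)) (fun i => hT _ (hg i))

theorem aux_unary_gen (hSL : (#X).IsStrongLimit) (F : X → X) : unaryOp F ∈
      cloneGen ((fun f : X → X → X => (⟨1, fun x => f (x 0) (x 1)⟩ : Ops X)) '' T2rare X) := by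
  rintro D ⟨hD, hsub⟩
  have h := hsub (Set.mem_image_of_mem _ (aux_fst hSL F))
  exact hD.2 1 0 _ h (fun _ x => x 0) (fun _ => hD.1 0 0)

end aux

/-- **Davies–Rosenberg**: on a set whose cardinality is a strong limit cardinal, the
rarely 1-1 binary operations are closed under composition, their generated clone contains
all unary operations, and if the cardinality is moreover singular then `Pol(T2)` is a
precomplete clone. -/
theorem stmt9 {X : Type u} (hSL : (#X).IsStrongLimit) :
    (∀ f g h : X → X → X, f ∈ T2rare X → g ∈ T2rare X → h ∈ T2rare X →
      (fun x y => f (g x y) (h x y)) ∈ T2rare X) ∧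
    (∀ F : X → X, unaryOp F ∈
      cloneGen ((fun f : X → X → X => (⟨1, fun x => f (x 0) (x 1)⟩ : Ops X)) '' T2rare X)) ∧
    (¬ (#X).IsRegular → IsPrecompleteClone (Pol2 (T2rare X))) := by
  exact ⟨fun f g h hf hg hh => aux_comp hSL f g h hf hg hh, aux_unary_gen hSL, aux_precomplete hSL⟩
end
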